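/- Let I ⊆ [0,∞) be an interval, φ : I → ℝ, and let X : I × (0,1) → ℝ have partial derivatives ∂_t X and ∂_z X satisfying ∂_t X(t,z) = z · ∂_z X(t,z) · (X(t,z) − 1) + z · φ(t) on I × (0,1). Let ψ : I → (0,1) be differentiable with ψ'(t) = ψ(t)(1 − X(t, ψ(t))). Then (d/dt) X(t, ψ(t)) = ψ(t) · φ(t) for all t ∈ I. In particular, if φ ≡ 0 on I, then X(t, ψ(t)) is constant on I, and for any t₀, t ∈ I one has ψ(t) = ψ(t₀) · e^{(t − t₀)(1 − X(t₀, ψ(t₀)))}. -/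

import Mathlib

section Helpers
open Set Filter Topology

/-- transported function with strictly negative derivative -/
def Dn (v : ℝ) (f : ℝ → ℝ → ℝ) (t x : ℝ) : Prop :=
  ∃ a b, HasDerivAt (fun s => f s x) a t ∧ HasDerivAt (fun y => f t y) b x ∧ a + v * b < 0

def pp (f : ℝ → ℝ → ℝ) (t x : ℝ) : ℝ := max (f t x) 0

theorem pp_nonneg (f : ℝ → ℝ → ℝ) (t x : ℝ) : 0 ≤ pp f t x := le_max_right _ _

theorem pp_pos {f : ℝ → ℝ → ℝ} {t x : ℝ} (h : 0 < pp f t x) : 0 < f t x := by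
  unfold pp at h
  rcases lt_max_iff.1 h with h | h
  · exact h
  · exact absurd h (lt_irrefl _)

theorem pp_eq {f : ℝ → ℝ → ℝ} {t x : ℝ} (h : 0 < f t x) : pp f t x = f t x :=
  max_eq_left h.le

theorem pp_zero {f : ℝ → ℝ → ℝ} {t x : ℝ} (h : f t x ≤ 0) : pp f t x = 0 :=
  max_eq_right h

theorem Dn.pp {v : ℝ} {f : ℝ → ℝ → ℝ} {t x : ℝ} (h : Dn v f t x) (hf : 0 < f t x) :
    Dn v (pp f) t x := by
  obtain ⟨a, b, ha, hb, hab⟩ := h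
  refine ⟨a, b, ?_, ?_, hab⟩
  · refine ha.congr_of_eventuallyEq ?_
    filter_upwards [ha.continuousAt.eventually (lt_mem_nhds hf)] with s hs using pp_eq hs
  · refine hb.congr_of_eventuallyEq ?_
    filter_upwards [hb.continuousAt.eventually (lt_mem_nhds hf)] with s hs using pp_eq hs

theorem Dn.mul {v : ℝ} {f h : ℝ → ℝ → ℝ} {t x : ℝ} (Hf : Dn v f t x) (Hh : Dn v h t x)
    (hf : 0 < f t x) (hh : 0 < h t x) : Dn v (fun t x => f t x * h t x) t x := by
  obtain ⟨a, b, ha, hb, hab⟩ := Hf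
  obtain ⟨a', b', ha', hb', hab'⟩ := Hh
  refine ⟨_, _, ha.mul ha', hb.mul hb', ?_⟩
  nlinarith [mul_neg_of_neg_of_pos hab hh, mul_neg_of_neg_of_pos hab' hf]

theorem mp2' {c d e f : ℝ} {P : ℝ → ℝ → ℝ}
    (hc : ContinuousOn (fun q : ℝ × ℝ => P q.1 q.2) (Icc c d ×ˢ Icc e f))
    (h1 : ∀ x ∈ Icc e f, P c x ≤ 0) (h2 : ∀ x ∈ Icc e f, P d x ≤ 0)
    (h3 : ∀ t ∈ Icc c d, P t e ≤ 0) (h4 : ∀ t ∈ Icc c d, P t f ≤ 0)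
    (hD : ∀ t ∈ Ioo c d, ∀ x ∈ Ioo e f, 0 < P t x → ∃ v a b, HasDerivAt (fun s => P s x) a t ∧
      HasDerivAt (fun y => P t y) b x ∧ a + v * b ≠ 0) :
    ∀ t ∈ Icc c d, ∀ x ∈ Icc e f, P t x ≤ 0 := by
  intro t ht x hx
  obtain ⟨⟨t0, x0⟩, hm, hmax⟩ := (isCompact_Icc.prod isCompact_Icc).exists_isMaxOn
    ⟨(t, x), ht, hx⟩ hc
  have hle : P t x ≤ P t0 x0 := hmax (a := (t, x)) ⟨ht, hx⟩
  by_contra hcon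
  push Not at hcon
  have hpos : 0 < P t0 x0 := hcon.trans_le hle
  obtain ⟨ht0, hx0⟩ := hm
  simp only at ht0 hx0
  have a1 : c < t0 := lt_of_le_of_ne ht0.1 (fun h => by subst h; linarith [h1 _ hx0])
  have a2 : t0 < d := lt_of_le_of_ne ht0.2 (fun h => by subst h; linarith [h2 _ hx0])
  have a3 : e < x0 := lt_of_le_of_ne hx0.1 (fun h => by subst h; linarith [h3 _ ht0])
  have a4 : x0 < f := lt_of_le_of_ne hx0.2 (fun h => by subst h; linarith [h4 _ ht0])
  obtain ⟨v, a, b, ha, hb, hab⟩ := hD t0 ⟨a1, a2⟩ x0 ⟨a3, a4⟩ hpos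
  have la : IsLocalMax (fun s => P s x0) t0 := by
    filter_upwards [Icc_mem_nhds a1 a2] with s hs using hmax (a := (s, x0)) ⟨hs, hx0⟩
  have lb : IsLocalMax (fun y => P t0 y) x0 := by
    filter_upwards [Icc_mem_nhds a3 a4] with s hs using hmax (a := (t0, s)) ⟨ht0, hs⟩
  rw [la.hasDerivAt_eq_zero ha, lb.hasDerivAt_eq_zero hb] at hab
  simp at hab

theorem mp2 {c d e f : ℝ} {P : ℝ → ℝ → ℝ}
    (hc : ContinuousOn (fun q : ℝ × ℝ => P q.1 q.2) (Icc c d ×ˢ Icc e f))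
    (h1 : ∀ x ∈ Icc e f, P c x ≤ 0) (h2 : ∀ x ∈ Icc e f, P d x ≤ 0)
    (h3 : ∀ t ∈ Icc c d, P t e ≤ 0) (h4 : ∀ t ∈ Icc c d, P t f ≤ 0)
    (hD : ∀ t ∈ Ioo c d, ∀ x ∈ Ioo e f, 0 < P t x → ∃ v, Dn v P t x) :
    ∀ t ∈ Icc c d, ∀ x ∈ Icc e f, P t x ≤ 0 := by
  refine mp2' hc h1 h2 h3 h4 ?_
  intro t ht x hx hP
  obtain ⟨v, a, b, ha, hb, hab⟩ := hD t ht x hx hP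
  exact ⟨v, a, b, ha, hb, hab.ne⟩

structure Coef (g g' : ℝ → ℝ) (X : Set ℝ) : Prop where
  hd : ∀ x ∈ X, HasDerivAt g (g' x) x
  b0 : ∀ x ∈ X, |g x| ≤ 1
  b1 : ∀ x ∈ X, |g' x| ≤ 1
  l0 : ∀ x ∈ X, ∀ y ∈ X, |g x - g y| ≤ |x - y|
  l1 : ∀ x ∈ X, ∀ y ∈ X, |g' x - g' y| ≤ |x - y|

theorem Coef.mono {g g' : ℝ → ℝ} {X Y : Set ℝ} (h : Coef g g' X) (hY : Y ⊆ X) : Coef g g' Y :=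
  ⟨fun x hx => h.hd x (hY hx), fun x hx => h.b0 x (hY hx), fun x hx => h.b1 x (hY hx),
   fun x hx y hy => h.l0 x (hY hx) y (hY hy), fun x hx y hy => h.l1 x (hY hx) y (hY hy)⟩

theorem Coef.cont {g g' : ℝ → ℝ} {X : Set ℝ} (h : Coef g g' X) : ContinuousOn g X :=
  fun x hx => (h.hd x hx).continuousAt.continuousWithinAt

def ww (g Φ : ℝ → ℝ) (u : ℝ → ℝ → ℝ) (t x : ℝ) : ℝ := u t x + g x * Φ t

def Loc (g Φ : ℝ → ℝ) (u : ℝ → ℝ → ℝ) (t x : ℝ) : Prop :=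
  ∃ ux, HasDerivAt (fun y => u t y) ux x ∧
    HasDerivAt (fun s => ww g Φ u s x) (-(u t x) * ux) t

theorem Loc.w {g g' Φ : ℝ → ℝ} {u : ℝ → ℝ → ℝ} {t x : ℝ} (h : Loc g Φ u t x)
    (hg : HasDerivAt g (g' x) x) :
    ∃ wt wx, HasDerivAt (fun s => ww g Φ u s x) wt t ∧ HasDerivAt (fun y => ww g Φ u t y) wx x ∧
      wt + u t x * wx = u t x * g' x * Φ t := by
  obtain ⟨ux, h1, h2⟩ := h
  refine ⟨_, _, h2, h1.add (hg.mul_const (Φ t)), by ring⟩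

theorem Loc.shift {g Φ : ℝ → ℝ} {u : ℝ → ℝ → ℝ} {t x : ℝ} (h : Loc g Φ u t x) (k : ℝ) :
    Loc g (fun s => Φ s - k) u t x := by
  obtain ⟨ux, h1, h2⟩ := h
  refine ⟨ux, h1, ?_⟩
  have := h2.sub_const (g x * k)
  refine this.congr_of_eventuallyEq (Eventually.of_forall fun s => ?_)
  simp only [ww]; ring

theorem ww_sub {g Φ : ℝ → ℝ} {u : ℝ → ℝ → ℝ} {t x k : ℝ} (hg : |g x| ≤ 1) (hk : |Φ t| ≤ k) :
    |ww g Φ u t x - u t x| ≤ k := by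
  have : ww g Φ u t x - u t x = g x * Φ t := by simp [ww]
  rw [this, abs_mul]
  nlinarith [abs_nonneg (g x), abs_nonneg (Φ t)]

theorem ww_cont {g Φ : ℝ → ℝ} {u : ℝ → ℝ → ℝ} {T X : Set ℝ} {Q : Set (ℝ × ℝ)}
    (hg : ContinuousOn g X) (hΦ : ContinuousOn Φ T) (hQ : Q ⊆ T ×ˢ X)
    (hu : ContinuousOn (fun q : ℝ × ℝ => u q.1 q.2) Q) :
    ContinuousOn (fun q : ℝ × ℝ => ww g Φ u q.1 q.2) Q := by
  have h1 : ContinuousOn (fun q : ℝ × ℝ => g q.2) Q :=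
    hg.comp continuous_snd.continuousOn (fun q hq => (hQ hq).2)
  have h2 : ContinuousOn (fun q : ℝ × ℝ => Φ q.1) Q :=
    hΦ.comp continuous_fst.continuousOn (fun q hq => (hQ hq).1)
  exact hu.add (h1.mul h2)

structure Cor (g g' Φ : ℝ → ℝ) (u : ℝ → ℝ → ℝ) (c d e f : ℝ) : Prop where
  cd : c < d
  ef : e < f
  co : Coef g g' (Icc e f)
  hΦ : ContinuousOn Φ (Icc c d)
  loc : ∀ t ∈ Ioo c d, ∀ x ∈ Ioo e f, Loc g Φ u t x
  cu : ContinuousOn (fun q : ℝ × ℝ => u q.1 q.2) ((Icc c d ×ˢ Icc e f) \ {(c, e)})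
  s1 : ContinuousOn (fun x => u c x) (Icc e f)
  s2 : ContinuousOn (fun t => u t e) (Icc c d)

theorem Cor.side3 {g g' Φ : ℝ → ℝ} {u : ℝ → ℝ → ℝ} {c d e f : ℝ} (h : Cor g g' Φ u c d e f) :
    ContinuousOn (fun t => u t f) (Icc c d) := by
  have := h.cu.comp (f := fun t : ℝ => (t, f)) (s := Icc c d) (by fun_prop) (by
    intro t ht
    refine ⟨⟨ht, right_mem_Icc.2 h.ef.le⟩, fun hh => ?_⟩
    have := congrArg Prod.snd hh
    exact absurd this h.ef.ne')
  exact this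

theorem Cor.side4 {g g' Φ : ℝ → ℝ} {u : ℝ → ℝ → ℝ} {c d e f : ℝ} (h : Cor g g' Φ u c d e f) :
    ContinuousOn (fun x => u d x) (Icc e f) := by
  have := h.cu.comp (f := fun x : ℝ => (d, x)) (s := Icc e f) (by fun_prop) (by
    intro t ht
    refine ⟨⟨right_mem_Icc.2 h.cd.le, ht⟩, fun hh => ?_⟩
    have := congrArg Prod.fst hh
    exact absurd this h.cd.ne')
  exact this

theorem Cor.bdry {g g' Φ : ℝ → ℝ} {u : ℝ → ℝ → ℝ} {c d e f : ℝ} (h : Cor g g' Φ u c d e f) :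
    ∃ B, (∀ x ∈ Icc e f, |u c x| ≤ B) ∧ (∀ x ∈ Icc e f, |u d x| ≤ B) ∧
      (∀ t ∈ Icc c d, |u t e| ≤ B) ∧ (∀ t ∈ Icc c d, |u t f| ≤ B) := by
  obtain ⟨b1, h1⟩ := isCompact_Icc.exists_bound_of_continuousOn h.s1
  obtain ⟨b2, h2⟩ := isCompact_Icc.exists_bound_of_continuousOn h.side4
  obtain ⟨b3, h3⟩ := isCompact_Icc.exists_bound_of_continuousOn h.s2
  obtain ⟨b4, h4⟩ := isCompact_Icc.exists_bound_of_continuousOn h.side3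
  refine ⟨max (max b1 b2) (max b3 b4), fun x hx => ?_, fun x hx => ?_, fun x hx => ?_, fun x hx => ?_⟩
  · exact (h1 x hx).trans (by simp)
  · exact (h2 x hx).trans (by simp)
  · exact (h3 x hx).trans (by simp)
  · exact (h4 x hx).trans (by simp)

theorem Cor.oneside {g g' Φ : ℝ → ℝ} {u : ℝ → ℝ → ℝ} {c d e f : ℝ} (h : Cor g g' Φ u c d e f)
    {σ k : ℝ} (hσ : σ = 1 ∨ σ = -1) (hk : ∀ t ∈ Icc c d, |Φ t| ≤ k) :
    ∃ K, ∀ t ∈ Icc c d, ∀ x ∈ Icc e f, σ * ww g Φ u t x ≤ K := by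
  obtain ⟨B, B1, B2, B3, B4⟩ := h.bdry
  have hk0 : 0 ≤ k := (abs_nonneg _).trans (hk c (left_mem_Icc.2 h.cd.le))
  have hB0 : 0 ≤ B := (abs_nonneg _).trans (B3 c (left_mem_Icc.2 h.cd.le))
  have hσa : |σ| = 1 := by rcases hσ with rfl | rfl <;> simp
  set l := k + k ^ 2 + 1 with hl
  have hl0 : 0 < l := by positivity
  set K := (B + k + 1) * Real.exp (l * (d - c)) with hK
  have hK1 : Real.exp (l * (d - c)) ≤ K := by
    rw [hK]; nlinarith [Real.exp_pos (l * (d - c))]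
  have hK0 : 0 < K := (Real.exp_pos _).trans_le hK1
  let W : ℝ → ℝ → ℝ := fun t x => σ * ww g Φ u t x * Real.exp (l * (t - c))
  let P : ℝ → ℝ → ℝ := fun t x => (t - c) * (1 - K / max (W t x) K)
  have hbd : ∀ t ∈ Icc c d, ∀ x ∈ Icc e f, |u t x| ≤ B → W t x ≤ K := by
    intro t ht x hx hu
    have h1 : |σ * ww g Φ u t x| ≤ B + k := by
      rw [abs_mul, hσa, one_mul]
      have := ww_sub (u := u) (h.co.b0 x hx) (hk t ht)
      have h2 := abs_sub_abs_le_abs_sub (ww g Φ u t x) (u t x)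
      linarith
    have h2 : Real.exp (l * (t - c)) ≤ Real.exp (l * (d - c)) := by
      apply Real.exp_le_exp.2; nlinarith [ht.2]
    have h3 := (abs_le.1 h1).2
    show σ * ww g Φ u t x * Real.exp (l * (t - c)) ≤ K
    have h4 := Real.exp_pos (l * (t - c))
    calc _ ≤ (B + k + 1) * Real.exp (l * (t - c)) := by
          apply mul_le_mul_of_nonneg_right _ h4.le; linarith
      _ ≤ _ := by rw [hK]; apply mul_le_mul_of_nonneg_left h2; positivity
  have hfac : ∀ t x, 0 ≤ 1 - K / max (W t x) K ∧ 1 - K / max (W t x) K ≤ 1 := by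
    intro t x
    have hm : 0 < max (W t x) K := lt_max_of_lt_right hK0
    constructor
    · rw [sub_nonneg, div_le_one hm]; exact le_max_right _ _
    · have : 0 < K / max (W t x) K := by positivity
      linarith
  have hPz : ∀ t ∈ Icc c d, ∀ x ∈ Icc e f, |u t x| ≤ B → P t x ≤ 0 := by
    intro t ht x hx hu
    have : max (W t x) K = K := max_eq_right (hbd t ht x hx hu)
    simp [P, this, hK0.ne']
  have hPc : ContinuousOn (fun q : ℝ × ℝ => P q.1 q.2) (Icc c d ×ˢ Icc e f) := by
    intro q hq
    by_cases hqc : q = (c, e)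
    · subst hqc
      have : P c e = 0 := by simp [P]
      unfold ContinuousWithinAt
      simp only [this]
      have hlim : Tendsto (fun q : ℝ × ℝ => q.1 - c) (𝓝[Icc c d ×ˢ Icc e f] (c, e)) (𝓝 0) := by
        have : Tendsto (fun q : ℝ × ℝ => q.1 - c) (𝓝 (c, e)) (𝓝 (c - c)) := by
          apply Continuous.tendsto' <;> [fun_prop; rfl]
        rw [sub_self] at this
        exact this.mono_left nhdsWithin_le_nhds
      refine squeeze_zero' ?_ ?_ hlim
      · filter_upwards [self_mem_nhdsWithin] with q hq
        exact mul_nonneg (sub_nonneg.2 hq.1.1) (hfac _ _).1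
      · filter_upwards [self_mem_nhdsWithin] with q hq
        exact mul_le_of_le_one_right (sub_nonneg.2 hq.1.1) (hfac _ _).2
    · have hw := ww_cont (g := g) (Φ := Φ) (u := u) h.co.cont h.hΦ sdiff_subset h.cu
      have hP : ContinuousOn (fun q : ℝ × ℝ => P q.1 q.2) ((Icc c d ×ˢ Icc e f) \ {(c, e)}) := by
        refine ContinuousOn.mul (by fun_prop) (continuousOn_const.sub (continuousOn_const.div
          (ContinuousOn.sup ?_ continuousOn_const) ?_))
        · exact (continuousOn_const.mul hw).mul (by fun_prop)
        · intro q _; exact (lt_max_of_lt_right hK0).ne'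
      have := hP q ⟨hq, hqc⟩
      refine this.mono_of_mem_nhdsWithin ?_
      exact inter_mem self_mem_nhdsWithin (mem_nhdsWithin_of_mem_nhds (isOpen_ne.mem_nhds hqc))
  have key := mp2' hPc
    (fun x hx => hPz c (left_mem_Icc.2 h.cd.le) x hx (B1 x hx))
    (fun x hx => hPz d (right_mem_Icc.2 h.cd.le) x hx (B2 x hx))
    (fun t ht => hPz t ht e (left_mem_Icc.2 h.ef.le) (B3 t ht))
    (fun t ht => hPz t ht f (right_mem_Icc.2 h.ef.le) (B4 t ht)) (by
      intro t ht x hx hP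
      have htc : 0 < t - c := sub_pos.2 ht.1
      have ht' := Ioo_subset_Icc_self ht
      have hx' := Ioo_subset_Icc_self hx
      have hW : K < W t x := by
        by_contra hcon
        have : max (W t x) K = K := max_eq_right (not_lt.1 hcon)
        simp [P, this, hK0.ne'] at hP
      obtain ⟨wt, wx, d1, d2, d3⟩ := (h.loc t ht x hx).w (h.co.hd x hx')
      set E := Real.exp (l * (t - c)) with hE
      have hEp : 0 < E := Real.exp_pos _
      have D1 : HasDerivAt (fun s => W s x) (σ * wt * E + σ * ww g Φ u t x * (E * (l * 1))) t :=
        (d1.const_mul σ).mul (((hasDerivAt_id t).sub_const c).const_mul l).exp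
      have D2 : HasDerivAt (fun y => W t y) (σ * wx * E) x := (d2.const_mul σ).mul_const _
      have hW0 : 0 < W t x := hK0.trans hW
      have P1 : HasDerivAt (fun s => P s x) (1 * (1 - K / W t x) + (t - c) *
          (- ((0 * W t x - K * (σ * wt * E + σ * ww g Φ u t x * (E * (l * 1)))) / (W t x) ^ 2))) t := by
        have := ((hasDerivAt_id t).sub_const c).mul
          (((hasDerivAt_const t K).div D1 hW0.ne').const_sub 1)
        refine this.congr_of_eventuallyEq ?_
        filter_upwards [D1.continuousAt.eventually (lt_mem_nhds hW)] with s hs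
        simp only [P, max_eq_left hs.le]; rfl
      have P2 : HasDerivAt (fun y => P t y) ((t - c) *
          (- ((0 * W t x - K * (σ * wx * E)) / (W t x) ^ 2))) x := by
        have := (((hasDerivAt_const x K).div D2 hW0.ne').const_sub 1).const_mul (t - c)
        refine this.congr_of_eventuallyEq ?_
        filter_upwards [D2.continuousAt.eventually (lt_mem_nhds hW)] with s hs
        simp only [P, max_eq_left hs.le]; rfl
      refine ⟨u t x, _, _, P1, P2, ne_of_gt ?_⟩
      have hq : 0 < 1 - K / W t x := by rw [sub_pos, div_lt_one hW0]; exact hW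
      have hsw : 1 < σ * ww g Φ u t x := by
        have h1 : Real.exp (l * (t - c)) ≤ Real.exp (l * (d - c)) := by
          apply Real.exp_le_exp.2; nlinarith [ht.2]
        have h2 : E < σ * ww g Φ u t x * E := (h1.trans hK1).trans_lt hW
        by_contra hcon
        nlinarith [not_lt.1 hcon]
      have hmain : 0 < σ * (wt + u t x * wx) + σ * ww g Φ u t x * l := by
        rw [d3]
        have e1 := ww_sub (u := u) (h.co.b0 x hx') (hk t ht')
        have e2 : |ww g Φ u t x| = σ * ww g Φ u t x := by
          rw [← abs_of_pos (by linarith : 0 < σ * ww g Φ u t x), abs_mul, hσa, one_mul]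
        have e3 : |u t x| ≤ σ * ww g Φ u t x + k := by
          have := abs_sub_abs_le_abs_sub (u t x) (ww g Φ u t x)
          rw [abs_sub_comm] at this; linarith
        have e4 : |σ * (u t x * g' x * Φ t)| ≤ (σ * ww g Φ u t x + k) * k := by
          rw [abs_mul, hσa, one_mul, abs_mul, abs_mul]
          apply mul_le_mul _ (hk t ht') (abs_nonneg _) (by linarith)
          calc _ ≤ |u t x| * 1 := mul_le_mul_of_nonneg_left (h.co.b1 x hx') (abs_nonneg _)
            _ ≤ _ := by linarith
        have e5 := (abs_le.1 e4).1
        rw [hl]; nlinarith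
      have : 1 * (1 - K / W t x) + (t - c) *
          (- ((0 * W t x - K * (σ * wt * E + σ * ww g Φ u t x * (E * (l * 1)))) / (W t x) ^ 2))
          + u t x * ((t - c) * (- ((0 * W t x - K * (σ * wx * E)) / (W t x) ^ 2)))
          = (1 - K / W t x) + (t - c) * K * E * (σ * (wt + u t x * wx) + σ * ww g Φ u t x * l)
            / (W t x) ^ 2 := by ring
      rw [this]
      positivity)
  refine ⟨K, fun t ht x hx => ?_⟩
  have hWK : W t x ≤ K := by
    rcases eq_or_lt_of_le ht.1 with rfl | htc
    · exact hbd c ht x hx (B1 x hx)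
    · by_contra hcon
      push Not at hcon
      have h1 := key t ht x hx
      have : 0 < P t x := by
        simp only [P, max_eq_left hcon.le]
        apply mul_pos (sub_pos.2 htc)
        rw [sub_pos, div_lt_one (hK0.trans hcon)]; exact hcon
      linarith
  by_contra hcon
  push Not at hcon
  have : 1 ≤ Real.exp (l * (t - c)) := Real.one_le_exp (mul_nonneg hl0.le (sub_nonneg.2 ht.1))
  have h2 : σ * ww g Φ u t x ≤ W t x := le_mul_of_one_le_right (hK0.trans hcon).le this
  linarith

theorem Cor.bound {g g' Φ : ℝ → ℝ} {u : ℝ → ℝ → ℝ} {c d e f : ℝ} (h : Cor g g' Φ u c d e f) :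
    ∃ M, 0 ≤ M ∧ ∀ t ∈ Icc c d, ∀ x ∈ Icc e f, |u t x| ≤ M := by
  obtain ⟨k, hk⟩ := isCompact_Icc.exists_bound_of_continuousOn h.hΦ
  obtain ⟨K1, h1⟩ := h.oneside (Or.inl rfl) hk
  obtain ⟨K2, h2⟩ := h.oneside (Or.inr rfl) hk
  have : ∀ t ∈ Icc c d, ∀ x ∈ Icc e f, |u t x| ≤ max K1 K2 + k := by
    intro t ht x hx
    have a := h1 t ht x hx
    have b := h2 t ht x hx
    have e1 := abs_le.1 (ww_sub (u := u) (h.co.b0 x hx) (hk t ht))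
    rw [abs_le]
    constructor <;> linarith [le_max_left K1 K2, le_max_right K1 K2]
  exact ⟨_, (abs_nonneg _).trans (this c (left_mem_Icc.2 h.cd.le) e (left_mem_Icc.2 h.ef.le)), this⟩

theorem prod4 {v : ℝ} {f1 f2 f3 f4 : ℝ → ℝ → ℝ} {t x : ℝ} (h1 : Dn v f1 t x) (h2 : Dn v f2 t x)
    (h3 : Dn v f3 t x) (h4 : Dn v f4 t x)
    (hP : 0 < pp f1 t x * pp f2 t x * pp f3 t x * pp f4 t x) :
    Dn v (fun t x => pp f1 t x * pp f2 t x * pp f3 t x * pp f4 t x) t x := by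
  have a4 := pos_of_mul_pos_right hP
    (mul_nonneg (mul_nonneg (pp_nonneg f1 t x) (pp_nonneg f2 t x)) (pp_nonneg f3 t x))
  have b3 := pos_of_mul_pos_left hP (pp_nonneg f4 t x)
  have a3 := pos_of_mul_pos_right b3 (mul_nonneg (pp_nonneg f1 t x) (pp_nonneg f2 t x))
  have b2 := pos_of_mul_pos_left b3 (pp_nonneg f3 t x)
  have a2 := pos_of_mul_pos_right b2 (pp_nonneg f1 t x)
  have a1 := pos_of_mul_pos_left b2 (pp_nonneg f2 t x)
  exact (((h1.pp (pp_pos a1)).mul (h2.pp (pp_pos a2)) a1 a2).mul (h3.pp (pp_pos a3)) b2 a3).mul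
    (h4.pp (pp_pos a4)) b3 a4

theorem pp_cont {f : ℝ → ℝ → ℝ} {Q : Set (ℝ × ℝ)}
    (h : ContinuousOn (fun q : ℝ × ℝ => f q.1 q.2) Q) :
    ContinuousOn (fun q : ℝ × ℝ => pp f q.1 q.2) Q := h.sup continuousOn_const

theorem pp_le {f : ℝ → ℝ → ℝ} {t x C : ℝ} (h : f t x ≤ C) (hC : 0 ≤ C) : pp f t x ≤ C :=
  max_le h hC

/-- the numerical data near a corner -/
structure Cdat (g g' Φ : ℝ → ℝ) (u : ℝ → ℝ → ℝ) (c d e f u0 ε M τ ρ : ℝ) : Prop extends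
    Cor g g' Φ u c d e f where
  e0 : 0 < ε
  e1 : ε < 1
  m0 : 0 ≤ M
  hM : ∀ t ∈ Icc c d, ∀ x ∈ Icc e f, |u t x| ≤ M
  t0 : 0 < τ
  t1 : τ ≤ 1
  td : c + τ ≤ d
  r0 : 0 < ρ
  rf : e + ρ ≤ f
  p0 : Φ c = 0
  pe : ∀ t ∈ Icc c (c + τ), |Φ t| * (1 + M) ≤ ε
  c1 : ∀ t ∈ Icc c (c + τ), |u t e - u0| ≤ ε
  c2 : ∀ x ∈ Icc e (e + ρ), |u c x - u0| ≤ ε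

theorem Cdat.core {g g' Φ : ℝ → ℝ} {u : ℝ → ℝ → ℝ} {c d e f u0 ε M τ ρ : ℝ}
    (h : Cdat g g' Φ u c d e f u0 ε M τ ρ) {σ s : ℝ} (hσ : σ = 1 ∨ σ = -1) (hs : s = 1 ∨ s = -1)
    {t x : ℝ} (ht : t ∈ Icc c (c + τ)) (hx : x ∈ Icc e (e + ρ))
    (h2 : 0 < σ * (ww g Φ u t x - u0) - 3 * ε - 2 * ε * (t - c))
    (h3 : 0 < ρ - (x - e) - (M + 1) * (t - c)) (h4 : 0 < c + τ - t) :
    s * (x - e - (t - c) * ww g Φ u t x) - 2 * ε * (t - c) ≤ 0 := by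
  have hσa : |σ| = 1 := by rcases hσ with rfl | rfl <;> simp
  have hsa : |s| = 1 := by rcases hs with rfl | rfl <;> simp
  have e0 := h.e0
  have m0 := h.m0
  have t0 := h.t0
  have r0 := h.r0
  have hT : Icc c (c + τ) ⊆ Icc c d := Icc_subset_Icc_right h.td
  have hX : Icc e (e + ρ) ⊆ Icc e f := Icc_subset_Icc_right h.rf
  have hΦ1 : ∀ t ∈ Icc c (c + τ), |Φ t| ≤ ε := by
    intro t ht
    nlinarith [h.pe t ht, abs_nonneg (Φ t)]
  have hΦ2 : ∀ t ∈ Icc c (c + τ), M * |Φ t| ≤ ε - |Φ t| := by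
    intro t ht
    nlinarith [h.pe t ht, abs_nonneg (Φ t)]
  have hwu : ∀ t ∈ Icc c (c + τ), ∀ x ∈ Icc e (e + ρ), |ww g Φ u t x - u t x| ≤ ε :=
    fun t ht x hx => ww_sub (h.co.b0 x (hX hx)) (hΦ1 t ht)
  have hwM : ∀ t ∈ Icc c (c + τ), ∀ x ∈ Icc e (e + ρ), |ww g Φ u t x| ≤ M + 1 := by
    intro t ht x hx
    have a := hwu t ht x hx
    have b := h.hM t (hT ht) x (hX hx)
    have := abs_sub_abs_le_abs_sub (ww g Φ u t x) (u t x)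
    linarith [h.e1]
  let f1 : ℝ → ℝ → ℝ := fun t x => s * (x - e - (t - c) * ww g Φ u t x) - 2 * ε * (t - c)
  let f2 : ℝ → ℝ → ℝ := fun t x => σ * (ww g Φ u t x - u0) - 3 * ε - 2 * ε * (t - c)
  let f3 : ℝ → ℝ → ℝ := fun t x => ρ - (x - e) - (M + 1) * (t - c)
  let f4 : ℝ → ℝ → ℝ := fun t x => c + τ - t
  let P : ℝ → ℝ → ℝ := fun t x => pp f1 t x * pp f2 t x * pp f3 t x * pp f4 t x
  let R := Icc c (c + τ) ×ˢ Icc e (e + ρ)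
  have hw : ContinuousOn (fun q : ℝ × ℝ => ww g Φ u q.1 q.2) (R \ {(c, e)}) := by
    refine ww_cont (h.co.cont.mono hX) (h.hΦ.mono hT) sdiff_subset (h.cu.mono ?_)
    exact sdiff_subset_sdiff_left (prod_mono hT hX)
  have hPc : ContinuousOn (fun q : ℝ × ℝ => P q.1 q.2) R := by
    intro q hq
    by_cases hqc : q = (c, e)
    · subst hqc
      have : P c e = 0 := by simp [P, pp, f1]
      unfold ContinuousWithinAt
      simp only [this]
      have hlim : Tendsto (fun q : ℝ × ℝ => (|q.2 - e| + |q.1 - c| * (M + 1)) *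
          (M + 1 + |u0|) * ρ * τ) (𝓝[R] (c, e)) (𝓝 0) := by
        refine Tendsto.mono_left ?_ nhdsWithin_le_nhds
        apply Continuous.tendsto' (by fun_prop)
        simp
      refine squeeze_zero' ?_ ?_ hlim
      · filter_upwards with q
        exact mul_nonneg (mul_nonneg (mul_nonneg (pp_nonneg _ _ _) (pp_nonneg _ _ _))
          (pp_nonneg _ _ _)) (pp_nonneg _ _ _)
      · filter_upwards [self_mem_nhdsWithin] with q hq
        have q1 : 0 ≤ q.1 - c := sub_nonneg.2 hq.1.1
        have q2 : 0 ≤ q.2 - e := sub_nonneg.2 hq.2.1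
        have W := hwM q.1 hq.1 q.2 hq.2
        rw [abs_of_nonneg q1, abs_of_nonneg q2]
        have B1 : pp f1 q.1 q.2 ≤ q.2 - e + (q.1 - c) * (M + 1) := by
          apply pp_le
          · have : |s * (q.2 - e - (q.1 - c) * ww g Φ u q.1 q.2)| ≤ q.2 - e + (q.1 - c) * (M + 1) := by
              rw [abs_mul, hsa, one_mul]
              refine (abs_sub _ _).trans ?_
              rw [abs_mul, abs_of_nonneg q1, abs_of_nonneg q2]
              nlinarith
            have h5 := (abs_le.1 this).2
            have : 0 ≤ 2 * ε * (q.1 - c) := by positivity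
            simp only [f1]; linarith
          · positivity
        have B2 : pp f2 q.1 q.2 ≤ M + 1 + |u0| := by
          apply pp_le
          · have : |σ * (ww g Φ u q.1 q.2 - u0)| ≤ M + 1 + |u0| := by
              rw [abs_mul, hσa, one_mul]
              exact (abs_sub _ _).trans (by linarith)
            have h5 := (abs_le.1 this).2
            have : 0 ≤ 2 * ε * (q.1 - c) := by positivity
            simp only [f2]; linarith
          · positivity
        have B3 : pp f3 q.1 q.2 ≤ ρ := by
          apply pp_le _ r0.le
          simp only [f3]
          nlinarith
        have B4 : pp f4 q.1 q.2 ≤ τ := by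
          apply pp_le _ t0.le
          simp only [f4]; linarith
        have n1 := pp_nonneg f1 q.1 q.2
        have n2 := pp_nonneg f2 q.1 q.2
        have n3 := pp_nonneg f3 q.1 q.2
        have n4 := pp_nonneg f4 q.1 q.2
        simp only [P]
        gcongr
    · have hP : ContinuousOn (fun q : ℝ × ℝ => P q.1 q.2) (R \ {(c, e)}) := by
        refine ContinuousOn.mul (ContinuousOn.mul (ContinuousOn.mul (pp_cont ?_) (pp_cont ?_))
          (pp_cont ?_)) (pp_cont ?_)
        · simp only [f1]; fun_prop
        · simp only [f2]; fun_prop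
        · simp only [f3]; fun_prop
        · simp only [f4]; fun_prop
      refine (hP q ⟨hq, hqc⟩).mono_of_mem_nhdsWithin ?_
      exact inter_mem self_mem_nhdsWithin (mem_nhdsWithin_of_mem_nhds (isOpen_ne.mem_nhds hqc))
  have key := mp2 hPc
    (fun x hx => by
      have : f2 c x ≤ 0 := by
        have a := h.c2 x hx
        have b : ww g Φ u c x = u c x := by simp [ww, h.p0]
        have : |σ * (u c x - u0)| ≤ ε := by rw [abs_mul, hσa, one_mul]; exact a
        have := (abs_le.1 this).2
        simp only [f2, b]; linarith
      simp [P, pp_zero this])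
    (fun x hx => by
      have : f4 (c + τ) x ≤ 0 := by simp [f4]
      simp [P, pp_zero this])
    (fun t ht => by
      have : f2 t e ≤ 0 := by
        have a := h.c1 t ht
        have b := hwu t ht e (left_mem_Icc.2 (by linarith))
        have : |σ * (ww g Φ u t e - u0)| ≤ 2 * ε := by
          rw [abs_mul, hσa, one_mul]
          exact (abs_sub_le _ (u t e) _).trans (by linarith)
        have := (abs_le.1 this).2
        have : 0 ≤ 2 * ε * (t - c) := mul_nonneg (by linarith) (sub_nonneg.2 ht.1)
        simp only [f2]; linarith
      simp [P, pp_zero this])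
    (fun t ht => by
      have : f3 t (e + ρ) ≤ 0 := by
        have := sub_nonneg.2 ht.1
        simp only [f3]; nlinarith
      simp [P, pp_zero this])
    (by
      intro t ht x hx hP
      have ht' := Ioo_subset_Icc_self ht
      have hx' := Ioo_subset_Icc_self hx
      have htc : 0 < t - c := sub_pos.2 ht.1
      have htc1 : t - c ≤ 1 := by linarith [ht.2, h.t1]
      obtain ⟨wt, wx, d1, d2, d3⟩ := (h.loc t ⟨ht.1, ht.2.trans_le h.td⟩ x
        ⟨hx.1, hx.2.trans_le h.rf⟩).w (h.co.hd x (hX hx'))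
      have hu := h.hM t (hT ht') x (hX hx')
      have hg := h.co.b0 x (hX hx')
      have hg' := h.co.b1 x (hX hx')
      have hug : |u t x * g' x * Φ t| ≤ M * |Φ t| := by
        rw [abs_mul, abs_mul]
        apply mul_le_mul_of_nonneg_right _ (abs_nonneg _)
        calc _ ≤ M * 1 := mul_le_mul hu hg' (abs_nonneg _) m0
          _ = M := mul_one _
      have hgp : |g x * Φ t| ≤ |Φ t| := by
        rw [abs_mul]; exact mul_le_of_le_one_left (abs_nonneg _) hg
      have hE := hΦ2 t ht'
      have hid : HasDerivAt (fun s : ℝ => s - c) 1 t := (hasDerivAt_id t).sub_const c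
      have hidx : HasDerivAt (fun y : ℝ => y - e) 1 x := (hasDerivAt_id x).sub_const e
      refine ⟨u t x, prod4 ?_ ?_ ?_ ?_ hP⟩
      · refine ⟨s * (-(1 * ww g Φ u t x + (t - c) * wt)) - 2 * ε * 1,
          s * (1 - (t - c) * wx), ?_, ?_, ?_⟩
        · exact (((hid.mul d1).const_sub (x - e)).const_mul s).sub (hid.const_mul (2 * ε))
        · exact ((hidx.sub (d2.const_mul (t - c))).const_mul s).sub_const _
        · have : s * (-(1 * ww g Φ u t x + (t - c) * wt)) - 2 * ε * 1 + u t x * (s * (1 - (t - c) * wx))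
              = s * (-(g x * Φ t) - (t - c) * (wt + u t x * wx)) - 2 * ε := by
            simp only [ww]; ring
          rw [this, d3]
          have : |s * (-(g x * Φ t) - (t - c) * (u t x * g' x * Φ t))| ≤ ε := by
            rw [abs_mul, hsa, one_mul]
            refine (abs_sub _ _).trans ?_
            rw [abs_neg, abs_mul (t - c), abs_of_pos htc]
            nlinarith [abs_nonneg (u t x * g' x * Φ t)]
          linarith [(abs_le.1 this).2]
      · refine ⟨σ * wt - 2 * ε * 1, σ * wx, ?_, ?_, ?_⟩
        · exact (((d1.sub_const u0).const_mul σ).sub_const _).sub (hid.const_mul (2 * ε))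
        · exact (((d2.sub_const u0).const_mul σ).sub_const _).sub_const _
        · have : σ * wt - 2 * ε * 1 + u t x * (σ * wx) = σ * (wt + u t x * wx) - 2 * ε := by ring
          rw [this, d3]
          have : |σ * (u t x * g' x * Φ t)| ≤ ε := by
            rw [abs_mul, hσa, one_mul]
            linarith [abs_nonneg (Φ t)]
          linarith [(abs_le.1 this).2]
      · refine ⟨-((M + 1) * 1), -1, (hid.const_mul (M + 1)).const_sub _,
          (hidx.const_sub ρ).sub_const _, ?_⟩
        linarith [(abs_le.1 hu).1]
      · refine ⟨-1, 0, (hasDerivAt_id t).const_sub (c + τ), hasDerivAt_const _ _, ?_⟩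
        norm_num)
  by_contra hcon
  push Not at hcon
  have h1 := key t ht x hx
  have : 0 < P t x := by
    simp only [P]
    rw [pp_eq (f := f1) hcon, pp_eq (f := f2) h2, pp_eq (f := f3) h3, pp_eq (f := f4) h4]
    exact mul_pos (mul_pos (mul_pos hcon h2) h3) h4
  linarith

theorem Cdat.core' {g g' Φ : ℝ → ℝ} {u : ℝ → ℝ → ℝ} {c d e f u0 ε M τ ρ : ℝ}
    (h : Cdat g g' Φ u c d e f u0 ε M τ ρ) {σ : ℝ} (hσ : σ = 1 ∨ σ = -1)
    {t x : ℝ} (ht : t ∈ Ico c (c + τ)) (hx : x ∈ Icc e (e + ρ))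
    (h2 : 6 * ε ≤ σ * (ww g Φ u t x - u0))
    (h3 : 0 < ρ - (x - e) - (M + 1) * (t - c)) :
    (t - c) * (ww g Φ u t x - 2 * ε) ≤ x - e ∧ x - e ≤ (t - c) * (ww g Φ u t x + 2 * ε) := by
  have h2' : 0 < σ * (ww g Φ u t x - u0) - 3 * ε - 2 * ε * (t - c) := by
    have := h.e0
    have : t - c ≤ 1 := by linarith [ht.2, h.t1]
    nlinarith
  have a := h.core hσ (Or.inl rfl) (Ico_subset_Icc_self ht) hx h2' h3 (by linarith [ht.2])
  have b := h.core hσ (Or.inr rfl) (Ico_subset_Icc_self ht) hx h2' h3 (by linarith [ht.2])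
  constructor <;> linarith

theorem Cdat.fin {g g' Φ : ℝ → ℝ} {u : ℝ → ℝ → ℝ} {c d e f u0 ε M τ ρ : ℝ}
    (h : Cdat g g' Φ u c d e f u0 ε M τ ρ) {t x : ℝ} (ht : t ∈ Ico c (c + τ))
    (hx : x ∈ Ico e (e + ρ / 4)) (hh : (M + 4) * (t - c) < ρ / 4) : |u t x - u0| ≤ 11 * ε := by
  have e0 := h.e0
  have m0 := h.m0
  have r0 := h.r0
  rcases eq_or_lt_of_le ht.1 with rfl | htc
  · have := h.c2 x ⟨hx.1, by linarith [hx.2]⟩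
    linarith
  have htc' : 0 < t - c := sub_pos.2 htc
  have htd : t ∈ Icc c d := ⟨ht.1, by linarith [ht.2, h.td]⟩
  have hMh : (M + 1) * (t - c) < ρ / 4 := by nlinarith
  have hΦ1 : |Φ t| ≤ ε := by
    nlinarith [h.pe t (Ico_subset_Icc_self ht), abs_nonneg (Φ t)]
  have hX : Icc e (e + ρ) ⊆ Icc e f := Icc_subset_Icc_right h.rf
  have hwu : ∀ x ∈ Icc e (e + ρ), |ww g Φ u t x - u t x| ≤ ε :=
    fun x hx => ww_sub (h.co.b0 x (hX hx)) hΦ1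
  have hwc : ContinuousOn (fun x => ww g Φ u t x) (Icc e (e + ρ)) := by
    have hw := ww_cont (g := g) (Φ := Φ) (u := u) h.co.cont h.hΦ sdiff_subset h.cu
    refine hw.comp (f := fun x : ℝ => (t, x)) (by fun_prop) ?_
    intro y hy
    exact ⟨⟨htd, hX hy⟩, fun hq => htc.ne' (congrArg Prod.fst hq)⟩
  have hx' : x ∈ Icc e (e + ρ) := ⟨hx.1, by linarith [hx.2]⟩
  have up : ww g Φ u t x - u0 ≤ 10 * ε := by
    by_contra hcon
    push Not at hcon
    have hm : e + ρ / 2 ∈ Icc e (e + ρ) := ⟨by linarith, by linarith⟩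
    have i0 := h.core' (Or.inl rfl) ht hx' (by linarith) (by linarith [hx.2])
    by_cases hc : ww g Φ u t (e + ρ / 2) - u0 < 6 * ε
    · obtain ⟨x1, hx1, hx1w⟩ := intermediate_value_Icc' (by linarith [hx.2] : x ≤ e + ρ / 2)
        (hwc.mono (Icc_subset_Icc hx.1 hm.2)) (show u0 + 6 * ε ∈ Icc (ww g Φ u t (e + ρ / 2)) (ww g Φ u t x) from ⟨by linarith, by linarith⟩)
      simp only at hx1w
      have i1 := h.core' (Or.inl rfl) ht (x := x1) ⟨hx.1.trans hx1.1, hx1.2.trans hm.2⟩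
        (by linarith) (by linarith [hx1.2])
      have := i0.1.trans ((sub_le_sub_right hx1.1 e).trans i1.2)
      have := le_of_mul_le_mul_left this htc'
      linarith
    · push Not at hc
      have i1 := (h.core' (Or.inl rfl) ht (x := e + ρ / 2) hm (by linarith) (by linarith)).2
      have b1 := hwu _ hm
      have b2 := h.hM t htd _ (hX hm)
      have : ww g Φ u t (e + ρ / 2) + 2 * ε ≤ M + 4 := by
        linarith [(abs_le.1 b1).2, (abs_le.1 b2).2, h.e1]
      have := mul_le_mul_of_nonneg_left this htc'.le
      linarith
  have lo : -(10 * ε) ≤ ww g Φ u t x - u0 := by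
    by_contra hcon
    push Not at hcon
    have i0 := h.core' (Or.inr rfl) ht hx' (by linarith) (by linarith [hx.2])
    have he : e ∈ Icc e (e + ρ) := ⟨le_rfl, by linarith⟩
    have b1 := hwu _ he
    have b2 := h.c1 t (Ico_subset_Icc_self ht)
    obtain ⟨x1, hx1, hx1w⟩ := intermediate_value_Icc' hx.1
        (hwc.mono (Icc_subset_Icc_right hx'.2)) (show u0 - 6 * ε ∈ Icc (ww g Φ u t x) (ww g Φ u t e) from ⟨by linarith, by
          linarith [(abs_le.1 b1).1, (abs_le.1 b2).1]⟩)
    simp only at hx1w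
    have i1 := h.core' (Or.inr rfl) ht (x := x1) ⟨hx1.1, hx1.2.trans hx'.2⟩
        (by linarith) (by linarith [hx1.2, hx.2])
    have := i1.1.trans ((sub_le_sub_right hx1.2 e).trans i0.2)
    have := le_of_mul_le_mul_left this htc'
    linarith
  have b1 := abs_le.1 (hwu _ hx')
  rw [abs_le]
  constructor <;> linarith

theorem Cor.shift {g g' Φ : ℝ → ℝ} {u : ℝ → ℝ → ℝ} {c d e f : ℝ} (h : Cor g g' Φ u c d e f)
    (k : ℝ) : Cor g g' (fun s => Φ s - k) u c d e f :=
  { h with hΦ := h.hΦ.sub continuousOn_const, loc := fun t ht x hx => (h.loc t ht x hx).shift k }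

theorem nice_right {p : ℝ → ℝ} {c d η : ℝ} (hcd : c < d) (hp : ContinuousOn p (Icc c d))
    (hη : 0 < η) : ∃ τ, 0 < τ ∧ c + τ ≤ d ∧ ∀ t ∈ Icc c (c + τ), |p t - p c| ≤ η := by
  have := Metric.continuousWithinAt_iff.1 (hp c (left_mem_Icc.2 hcd.le)) η hη
  obtain ⟨δ, hδ, H⟩ := this
  refine ⟨min (δ / 2) (d - c), by simp; exact ⟨hδ, hcd⟩, by linarith [min_le_right (δ / 2) (d - c)], ?_⟩
  intro t ht
  have h1 := min_le_left (δ / 2) (d - c)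
  have h2 := min_le_right (δ / 2) (d - c)
  have := H (x := t) ⟨ht.1, by linarith [ht.2]⟩ (by
    rw [Real.dist_eq, abs_of_nonneg (sub_nonneg.2 ht.1)]; linarith [ht.2])
  rw [Real.dist_eq] at this
  exact this.le

theorem Cor.corner {g g' Φ : ℝ → ℝ} {u : ℝ → ℝ → ℝ} {c d e f : ℝ} (h : Cor g g' Φ u c d e f) :
    ContinuousWithinAt (fun q : ℝ × ℝ => u q.1 q.2) (Icc c d ×ˢ Icc e f) (c, e) := by
  obtain ⟨M, m0, hM⟩ := h.bound
  rw [Metric.continuousWithinAt_iff]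
  intro η hη
  set ε := min (1 / 2) (η / 12) with hε
  have e0 : 0 < ε := by rw [hε]; apply lt_min <;> linarith
  have e1 : ε < 1 := (min_le_left _ _).trans_lt (by norm_num)
  have e2 : 12 * ε ≤ η := by have := min_le_right (1 / 2) (η / 12); linarith
  obtain ⟨τ1, a1, a2, a3⟩ := nice_right h.cd h.hΦ (div_pos e0 (by linarith : 0 < 1 + M))
  obtain ⟨τ2, b1, b2, b3⟩ := nice_right h.cd h.s2 e0
  obtain ⟨ρ, r1, r2, r3⟩ := nice_right h.ef h.s1 e0
  set τ := min 1 (min τ1 τ2) with hτ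
  have t0 : 0 < τ := by rw [hτ]; exact lt_min one_pos (lt_min a1 b1)
  have t1 : τ ≤ 1 := min_le_left _ _
  have t2 : τ ≤ τ1 := (min_le_right _ _).trans (min_le_left _ _)
  have t3 : τ ≤ τ2 := (min_le_right _ _).trans (min_le_right _ _)
  have H : Cdat g g' (fun s => Φ s - Φ c) u c d e f (u c e) ε M τ ρ :=
    { h.shift (Φ c) with
      e0 := e0, e1 := e1, m0 := m0, hM := hM, t0 := t0, t1 := t1, td := by linarith
      r0 := r1, rf := r2, p0 := sub_self _
      pe := fun t ht => by
        have := a3 t ⟨ht.1, by linarith [ht.2]⟩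
        rwa [le_div_iff₀ (by linarith)] at this
      c1 := fun t ht => b3 t ⟨ht.1, by linarith [ht.2]⟩
      c2 := fun x hx => r3 x hx }
  refine ⟨min (min τ (ρ / 4)) (ρ / 4 / (M + 4)), ?_, ?_⟩
  · have : 0 < ρ / 4 / (M + 4) := div_pos (by linarith) (by linarith)
    exact lt_min (lt_min t0 (by linarith)) this
  · rintro ⟨t, x⟩ ⟨ht, hx⟩ hd
    simp only at ht hx
    rw [Prod.dist_eq, max_lt_iff, Real.dist_eq, Real.dist_eq, abs_of_nonneg (sub_nonneg.2 ht.1),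
      abs_of_nonneg (sub_nonneg.2 hx.1)] at hd
    obtain ⟨hd1, hd2⟩ := hd
    have k1 := (lt_min_iff.1 hd1).1
    have k2 := (lt_min_iff.1 hd1).2
    have k3 := (lt_min_iff.1 (lt_min_iff.1 hd2).1).2
    have k4 := (lt_min_iff.1 k1).1
    rw [lt_div_iff₀ (by linarith)] at k2
    have := H.fin (t := t) (x := x) ⟨ht.1, by linarith⟩ ⟨hx.1, by linarith⟩ (by linarith)
    rw [Real.dist_eq]
    simp only
    linarith

def tP (Φ : ℝ → ℝ) (t : ℝ) : ℝ := -Φ (-t)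
def tu (u : ℝ → ℝ → ℝ) (t x : ℝ) : ℝ := -u (-t) x
def xg (g : ℝ → ℝ) (x : ℝ) : ℝ := -g (-x)
def xg' (g' : ℝ → ℝ) (x : ℝ) : ℝ := g' (-x)
def xu (u : ℝ → ℝ → ℝ) (t x : ℝ) : ℝ := -u t (-x)

theorem hda_neg {f : ℝ → ℝ} {a t : ℝ} (h : HasDerivAt f a (-t)) :
    HasDerivAt (fun s => -f (-s)) a t := by
  have := (h.comp t (hasDerivAt_neg t)).neg
  have e : -(a * -1) = a := by ring
  rw [e] at this
  exact this

theorem Loc.tr {g Φ : ℝ → ℝ} {u : ℝ → ℝ → ℝ} {t x : ℝ} (h : Loc g Φ u (-t) x) :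
    Loc g (tP Φ) (tu u) t x := by
  obtain ⟨ux, h1, h2⟩ := h
  refine ⟨-ux, h1.neg, ?_⟩
  have := hda_neg h2
  have e : -(tu u t x) * -ux = -(u (-t) x) * ux := by simp [tu]
  rw [e]
  refine this.congr_of_eventuallyEq (Eventually.of_forall fun s => ?_)
  simp [ww, tP, tu]; ring

theorem Loc.xr {g Φ : ℝ → ℝ} {u : ℝ → ℝ → ℝ} {t x : ℝ} (h : Loc g Φ u t (-x)) :
    Loc (xg g) Φ (xu u) t x := by
  obtain ⟨ux, h1, h2⟩ := h
  refine ⟨ux, hda_neg h1, ?_⟩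
  have := h2.neg
  have e : -(xu u t x) * ux = -(-(u t (-x)) * ux) := by simp [xu]
  rw [e]
  refine this.congr_of_eventuallyEq (Eventually.of_forall fun s => ?_)
  simp [ww, xg, xu]; ring

theorem Coef.xr {g g' : ℝ → ℝ} {X Y : Set ℝ} (h : Coef g g' X) (hY : ∀ y ∈ Y, -y ∈ X) :
    Coef (xg g) (xg' g') Y where
  hd := fun x hx => hda_neg (h.hd _ (hY x hx))
  b0 := fun x hx => by simpa [xg] using h.b0 _ (hY x hx)
  b1 := fun x hx => h.b1 _ (hY x hx)
  l0 := fun x hx y hy => by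
    have := h.l0 _ (hY x hx) _ (hY y hy)
    have e1 : xg g x - xg g y = -(g (-x) - g (-y)) := by simp [xg]; ring
    have e2 : x - y = -(-x - -y) := by ring
    rw [e1, e2, abs_neg, abs_neg]; exact this
  l1 := fun x hx y hy => by
    have := h.l1 _ (hY x hx) _ (hY y hy)
    have e2 : x - y = -(-x - -y) := by ring
    rw [e2, abs_neg]; exact this

structure Rect (g g' Φ : ℝ → ℝ) (u : ℝ → ℝ → ℝ) (a b e f : ℝ) : Prop where
  ab : a < b
  ef : e < f
  co : Coef g g' (Icc e f)
  hΦ : ContinuousOn Φ (Icc a b)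
  loc : ∀ t ∈ Ioo a b, ∀ x ∈ Ioo e f, Loc g Φ u t x
  cu : ContinuousOn (fun q : ℝ × ℝ => u q.1 q.2) ((Icc a b ×ˢ Icc e f) \ ({a, b} ×ˢ {e, f}))
  s1 : ContinuousOn (fun x => u a x) (Icc e f)
  s2 : ContinuousOn (fun x => u b x) (Icc e f)
  s3 : ContinuousOn (fun t => u t e) (Icc a b)
  s4 : ContinuousOn (fun t => u t f) (Icc a b)

theorem neg_mem_Icc' {a b t : ℝ} (h : t ∈ Icc (-b) (-a)) : -t ∈ Icc a b :=
  ⟨by linarith [h.2], by linarith [h.1]⟩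
theorem neg_mem_Ioo' {a b t : ℝ} (h : t ∈ Ioo (-b) (-a)) : -t ∈ Ioo a b :=
  ⟨by linarith [h.2], by linarith [h.1]⟩

theorem Rect.tr {g g' Φ : ℝ → ℝ} {u : ℝ → ℝ → ℝ} {a b e f : ℝ} (h : Rect g g' Φ u a b e f) :
    Rect g g' (tP Φ) (tu u) (-b) (-a) e f where
  ab := neg_lt_neg h.ab
  ef := h.ef
  co := h.co
  hΦ := (h.hΦ.comp (f := fun t : ℝ => -t) (by fun_prop) (fun _ ht => neg_mem_Icc' ht)).neg
  loc := fun t ht x hx => (h.loc (-t) (neg_mem_Ioo' ht) x hx).tr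
  cu := by
    refine (h.cu.comp (f := fun q : ℝ × ℝ => (-q.1, q.2)) (by fun_prop) ?_).neg
    rintro ⟨t, x⟩ ⟨⟨ht, hx⟩, hn⟩
    refine ⟨⟨neg_mem_Icc' ht, hx⟩, fun hh => hn ?_⟩
    obtain ⟨h1, h2⟩ := hh
    refine ⟨?_, h2⟩
    simp only [mem_insert_iff, mem_singleton_iff] at h1 ⊢
    rcases h1 with h1 | h1
    · right; linarith
    · left; linarith
  s1 := by simpa only [tu, neg_neg] using h.s2.fun_neg
  s2 := by simpa only [tu, neg_neg] using h.s1.fun_neg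
  s3 := (h.s3.comp (f := fun t : ℝ => -t) (by fun_prop) (fun _ ht => neg_mem_Icc' ht)).neg
  s4 := (h.s4.comp (f := fun t : ℝ => -t) (by fun_prop) (fun _ ht => neg_mem_Icc' ht)).neg

theorem Rect.xr {g g' Φ : ℝ → ℝ} {u : ℝ → ℝ → ℝ} {a b e f : ℝ} (h : Rect g g' Φ u a b e f) :
    Rect (xg g) (xg' g') Φ (xu u) a b (-f) (-e) where
  ab := h.ab
  ef := neg_lt_neg h.ef
  co := h.co.xr (fun _ hy => neg_mem_Icc' hy)
  hΦ := h.hΦ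
  loc := fun t ht x hx => (h.loc t ht (-x) (neg_mem_Ioo' hx)).xr
  cu := by
    refine (h.cu.comp (f := fun q : ℝ × ℝ => (q.1, -q.2)) (by fun_prop) ?_).neg
    rintro ⟨t, x⟩ ⟨⟨ht, hx⟩, hn⟩
    refine ⟨⟨ht, neg_mem_Icc' hx⟩, fun hh => hn ?_⟩
    obtain ⟨h1, h2⟩ := hh
    refine ⟨h1, ?_⟩
    simp only [mem_insert_iff, mem_singleton_iff] at h2 ⊢
    rcases h2 with h1 | h1
    · right; linarith
    · left; linarith
  s1 := (h.s1.comp (f := fun t : ℝ => -t) (by fun_prop) (fun _ ht => neg_mem_Icc' ht)).neg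
  s2 := (h.s2.comp (f := fun t : ℝ => -t) (by fun_prop) (fun _ ht => neg_mem_Icc' ht)).neg
  s3 := by simpa only [xu, neg_neg] using h.s4.fun_neg
  s4 := by simpa only [xu, neg_neg] using h.s3.fun_neg

theorem Rect.c1 {g g' Φ : ℝ → ℝ} {u : ℝ → ℝ → ℝ} {a b e f : ℝ} (h : Rect g g' Φ u a b e f) :
    ContinuousWithinAt (fun q : ℝ × ℝ => u q.1 q.2) (Icc a b ×ˢ Icc e f) (a, e) := by
  have hab := h.ab
  have hef := h.ef
  have hT : Icc a ((a + b) / 2) ⊆ Icc a b := Icc_subset_Icc_right (by linarith)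
  have hX : Icc e ((e + f) / 2) ⊆ Icc e f := Icc_subset_Icc_right (by linarith)
  have H : Cor g g' Φ u a ((a + b) / 2) e ((e + f) / 2) :=
    { cd := by linarith
      ef := by linarith
      co := h.co.mono hX
      hΦ := h.hΦ.mono hT
      loc := fun t ht x hx => h.loc t ⟨ht.1, by linarith [ht.2]⟩ x ⟨hx.1, by linarith [hx.2]⟩
      cu := by
        refine h.cu.mono ?_
        rintro ⟨t, x⟩ ⟨⟨ht, hx⟩, hn⟩
        refine ⟨⟨hT ht, hX hx⟩, fun hh => hn ?_⟩
        obtain ⟨h1, h2⟩ := hh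
        simp only [mem_insert_iff, mem_singleton_iff, Prod.mk.injEq] at h1 h2 ht hx ⊢
        refine ⟨?_, ?_⟩
        · rcases h1 with h1 | h1
          · exact h1
          · exfalso; linarith [ht.2]
        · rcases h2 with h1 | h1
          · exact h1
          · exfalso; linarith [hx.2]
      s1 := h.s1.mono hX
      s2 := h.s3.mono hT }
  refine H.corner.mono_of_mem_nhdsWithin ?_
  have : Iio ((a + b) / 2) ×ˢ Iio ((e + f) / 2) ∈ 𝓝 (a, e) :=
    prod_mem_nhds (Iio_mem_nhds (by linarith)) (Iio_mem_nhds (by linarith))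
  filter_upwards [self_mem_nhdsWithin, mem_nhdsWithin_of_mem_nhds this] with q hq hq2
  exact ⟨⟨hq.1.1, hq2.1.le⟩, ⟨hq.2.1, hq2.2.le⟩⟩

theorem cwa_tr {u : ℝ → ℝ → ℝ} {a b e f t x : ℝ}
    (h : ContinuousWithinAt (fun q : ℝ × ℝ => tu u q.1 q.2) (Icc (-b) (-a) ×ˢ Icc e f) (-t, x)) :
    ContinuousWithinAt (fun q : ℝ × ℝ => u q.1 q.2) (Icc a b ×ˢ Icc e f) (t, x) := by
  have := (h.comp (f := fun q : ℝ × ℝ => (-q.1, q.2)) (x := (t, x)) (s := Icc a b ×ˢ Icc e f)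
    (by fun_prop) (by
      rintro ⟨t, x⟩ ⟨ht, hx⟩
      exact ⟨⟨neg_le_neg ht.2, neg_le_neg ht.1⟩, hx⟩)).neg
  refine this.congr (fun q _ => ?_) ?_ <;> simp [tu]

theorem cwa_xr {u : ℝ → ℝ → ℝ} {a b e f t x : ℝ}
    (h : ContinuousWithinAt (fun q : ℝ × ℝ => xu u q.1 q.2) (Icc a b ×ˢ Icc (-f) (-e)) (t, -x)) :
    ContinuousWithinAt (fun q : ℝ × ℝ => u q.1 q.2) (Icc a b ×ˢ Icc e f) (t, x) := by
  have := (h.comp (f := fun q : ℝ × ℝ => (q.1, -q.2)) (x := (t, x)) (s := Icc a b ×ˢ Icc e f)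
    (by fun_prop) (by
      rintro ⟨t, x⟩ ⟨ht, hx⟩
      exact ⟨ht, ⟨neg_le_neg hx.2, neg_le_neg hx.1⟩⟩)).neg
  refine this.congr (fun q _ => ?_) ?_ <;> simp [xu]

theorem Rect.cont {g g' Φ : ℝ → ℝ} {u : ℝ → ℝ → ℝ} {a b e f : ℝ} (h : Rect g g' Φ u a b e f) :
    ContinuousOn (fun q : ℝ × ℝ => u q.1 q.2) (Icc a b ×ˢ Icc e f) := by
  rintro ⟨t, x⟩ hq
  by_cases hc : (t, x) ∈ (({a, b} : Set ℝ) ×ˢ ({e, f} : Set ℝ))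
  · obtain ⟨h1, h2⟩ := hc
    simp only [mem_insert_iff, mem_singleton_iff] at h1 h2
    rcases h1 with rfl | rfl <;> rcases h2 with rfl | rfl
    · exact h.c1
    · exact cwa_xr h.xr.c1
    · exact cwa_tr h.tr.c1
    · exact cwa_tr (cwa_xr h.tr.xr.c1)
  · refine (h.cu _ ⟨hq, hc⟩).mono_of_mem_nhdsWithin ?_
    refine inter_mem self_mem_nhdsWithin (mem_nhdsWithin_of_mem_nhds ?_)
    exact (((Set.toFinite ({a, b} : Set ℝ)).prod (Set.toFinite ({e, f} : Set ℝ))).isClosed.isOpen_compl).mem_nhds hc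

theorem Rect.bound {g g' Φ : ℝ → ℝ} {u : ℝ → ℝ → ℝ} {a b e f : ℝ} (h : Rect g g' Φ u a b e f)
    (hba : b - a ≤ 1) {u0 β κ : ℝ} (hκ : κ ≤ 1 / 2) (hΦ : ∀ t ∈ Icc a b, |Φ t - Φ a| ≤ κ)
    (h1 : ∀ x ∈ Icc e f, |u a x - u0| ≤ β) (h2 : ∀ x ∈ Icc e f, |u b x - u0| ≤ β)
    (h3 : ∀ t ∈ Icc a b, |u t e - u0| ≤ β) (h4 : ∀ t ∈ Icc a b, |u t f - u0| ≤ β) :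
    ∀ t ∈ Icc a b, ∀ x ∈ Icc e f, |u t x - u0| ≤ 3 * (β + κ + 2 * κ * (|u0| + 1)) + κ := by
  have ha : a ∈ Icc a b := left_mem_Icc.2 h.ab.le
  have hb : b ∈ Icc a b := right_mem_Icc.2 h.ab.le
  have he : e ∈ Icc e f := left_mem_Icc.2 h.ef.le
  have hf : f ∈ Icc e f := right_mem_Icc.2 h.ef.le
  have k0 : 0 ≤ κ := (abs_nonneg _).trans (hΦ a ha)
  have β0 : 0 ≤ β := (abs_nonneg _).trans (h1 e he)
  set K := β + κ + 2 * κ * (|u0| + 1) with hK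
  have hK0 : 0 ≤ K := by positivity
  set Ψ : ℝ → ℝ := fun s => Φ s - Φ a with hΨ
  have hwu : ∀ t ∈ Icc a b, ∀ x ∈ Icc e f, |ww g Ψ u t x - u t x| ≤ κ :=
    fun t ht x hx => ww_sub (h.co.b0 x hx) (hΦ t ht)
  have main : ∀ σ : ℝ, (σ = 1 ∨ σ = -1) → ∀ t ∈ Icc a b, ∀ x ∈ Icc e f,
      σ * (ww g Ψ u t x - u0) ≤ 3 * K := by
    intro σ hσ
    have hσa : |σ| = 1 := by rcases hσ with rfl | rfl <;> simp
    let P : ℝ → ℝ → ℝ := fun t x => σ * (ww g Ψ u t x - u0) * Real.exp (-(t - a)) - K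
    have hPb : ∀ t ∈ Icc a b, ∀ x ∈ Icc e f, |u t x - u0| ≤ β → P t x ≤ 0 := by
      intro t ht x hx hu
      have i1 : |σ * (ww g Ψ u t x - u0)| ≤ β + κ := by
        rw [abs_mul, hσa, one_mul]
        exact (abs_sub_le _ (u t x) _).trans (by linarith [hwu t ht x hx])
      have i2 : Real.exp (-(t - a)) ≤ 1 := Real.exp_le_one_iff.2 (by linarith [ht.1])
      have i3 := Real.exp_pos (-(t - a))
      have i4 : σ * (ww g Ψ u t x - u0) * Real.exp (-(t - a)) ≤ (β + κ) * 1 :=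
        mul_le_mul ((abs_le.1 i1).2) i2 i3.le (by linarith)
      have : 0 ≤ 2 * κ * (|u0| + 1) := by positivity
      simp only [P]; linarith
    have hw : ContinuousOn (fun q : ℝ × ℝ => ww g Ψ u q.1 q.2) (Icc a b ×ˢ Icc e f) :=
      ww_cont h.co.cont (h.hΦ.sub continuousOn_const) Subset.rfl h.cont
    have hPc : ContinuousOn (fun q : ℝ × ℝ => P q.1 q.2) (Icc a b ×ˢ Icc e f) := by
      simp only [P]; fun_prop
    have key := mp2 hPc (fun x hx => hPb a ha x hx (h1 x hx)) (fun x hx => hPb b hb x hx (h2 x hx))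
      (fun t ht => hPb t ht e he (h3 t ht)) (fun t ht => hPb t ht f hf (h4 t ht)) (by
        intro t ht x hx hP
        have ht' := Ioo_subset_Icc_self ht
        have hx' := Ioo_subset_Icc_self hx
        obtain ⟨wt, wx, d1, d2, d3⟩ := ((h.loc t ht x hx).shift (Φ a)).w (h.co.hd x hx')
        set E := Real.exp (-(t - a)) with hE
        have hEp : 0 < E := Real.exp_pos _
        have D1 : HasDerivAt (fun s => P s x)
            (σ * wt * E + σ * (ww g Ψ u t x - u0) * (E * (-1))) t :=
          (((d1.sub_const u0).const_mul σ).mul ((hasDerivAt_id t).sub_const a).neg.exp).sub_const K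
        have D2 : HasDerivAt (fun y => P t y) (σ * wx * E) x :=
          (((d2.sub_const u0).const_mul σ).mul_const _).sub_const K
        refine ⟨u t x, _, _, D1, D2, ?_⟩
        have : σ * wt * E + σ * (ww g Ψ u t x - u0) * (E * (-1)) + u t x * (σ * wx * E)
          = E * (σ * (wt + u t x * wx) - σ * (ww g Ψ u t x - u0)) := by ring
        rw [this]
        apply mul_neg_of_pos_of_neg hEp
        rw [d3]
        have hE1 : E ≤ 1 := Real.exp_le_one_iff.2 (by linarith [ht.1])
        have hs : K < σ * (ww g Ψ u t x - u0) := by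
          have : K < σ * (ww g Ψ u t x - u0) * E := by simp only [P] at hP; linarith
          by_contra hcon
          push Not at hcon
          nlinarith
        set W := σ * (ww g Ψ u t x - u0) with hW
        have hWa : |ww g Ψ u t x - u0| = W := by
          rw [← abs_of_nonneg (hK0.trans hs.le), hW, abs_mul, hσa, one_mul]
        have hu : |u t x| ≤ W + κ + |u0| := by
          have i1 := hwu t ht' x hx'
          have : |u t x| ≤ |u t x - ww g Ψ u t x| + |ww g Ψ u t x - u0| + |u0| := by
            calc |u t x| = |(u t x - ww g Ψ u t x) + (ww g Ψ u t x - u0) + u0| := by congr 1; ring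
              _ ≤ _ := abs_add_three _ _ _
          rw [abs_sub_comm] at this
          linarith
        have i4 : |σ * (u t x * g' x * (Φ t - Φ a))| ≤ (W + κ + |u0|) * κ := by
          rw [abs_mul, hσa, one_mul, abs_mul, abs_mul]
          apply mul_le_mul _ (hΦ t ht') (abs_nonneg _) (by linarith [abs_nonneg u0])
          calc _ ≤ |u t x| * 1 := mul_le_mul_of_nonneg_left (h.co.b1 x hx') (abs_nonneg _)
            _ ≤ _ := by linarith
        have i5 := (abs_le.1 i4).2
        nlinarith [abs_nonneg u0])
    intro t ht x hx
    have i1 := key t ht x hx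
    simp only [P] at i1
    have i2 : Real.exp (t - a) ≤ 3 := by
      calc Real.exp (t - a) ≤ Real.exp 1 := Real.exp_le_exp.2 (by linarith [ht.2])
        _ ≤ 3 := by linarith [Real.exp_one_lt_d9]
    have i3 : Real.exp (-(t - a)) * Real.exp (t - a) = 1 := by rw [← Real.exp_add]; simp
    have i4 := Real.exp_pos (t - a)
    calc σ * (ww g Ψ u t x - u0)
        = (σ * (ww g Ψ u t x - u0) * Real.exp (-(t - a))) * Real.exp (t - a) := by
          rw [mul_assoc, i3, mul_one]
      _ ≤ K * Real.exp (t - a) := mul_le_mul_of_nonneg_right (by linarith) i4.le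
      _ ≤ 3 * K := by nlinarith
  intro t ht x hx
  have i1 := main 1 (Or.inl rfl) t ht x hx
  have i2 := main (-1) (Or.inr rfl) t ht x hx
  have i3 := abs_le.1 (hwu t ht x hx)
  rw [abs_le]
  constructor <;> linarith

theorem bracket {S : Set ℝ} {c r : ℝ} (hS : IsClosed S) (hr : 0 < r) :
    (∃ b, c < b ∧ b < c + r ∧ ∀ t ∈ Ioo c b, t ∉ S) ∨
    (∀ η, 0 < η → ∃ δ, 0 < δ ∧ ∀ t ∈ Ioo c (c + δ), c ∈ S → t ∉ S → ∃ a b, a ∈ S ∧ b ∈ S ∧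
      c ≤ a ∧ a < t ∧ t < b ∧ b < c + η ∧ ∀ s ∈ Ioo a b, s ∉ S) := by
  by_cases h : ∃ b, c < b ∧ b < c + r ∧ ∀ t ∈ Ioo c b, t ∉ S
  · exact Or.inl h
  right
  push Not at h
  intro η hη
  obtain ⟨s, hs, hsS⟩ := h (c + min η r / 2) (by have := lt_min hη hr; linarith)
    (by have := min_le_right η r; linarith)
  have := lt_min hη hr
  have := min_le_left η r
  refine ⟨s - c, by linarith [hs.1], ?_⟩
  intro t ht hc htS
  obtain ⟨a, ha, hau⟩ := (isCompact_Icc.inter_left hS : IsCompact (S ∩ Icc c t)).exists_isGreatest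
    ⟨c, hc, le_rfl, ht.1.le⟩
  obtain ⟨b, hb, hbl⟩ := (isCompact_Icc.inter_left hS : IsCompact (S ∩ Icc t s)).exists_isLeast
    ⟨s, hsS, by linarith [ht.2], le_rfl⟩
  refine ⟨a, b, ha.1, hb.1, ha.2.1, ?_, ?_, by linarith [hb.2.2, hs.2], ?_⟩
  · exact lt_of_le_of_ne ha.2.2 (fun hh => htS (hh ▸ ha.1))
  · exact lt_of_le_of_ne hb.2.1 (fun hh => htS (hh ▸ hb.1))
  · intro s' hs' hs'S
    rcases le_total s' t with hh | hh
    · have := hau ⟨hs'S, ha.2.1.trans hs'.1.le, hh⟩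
      linarith [hs'.1]
    · have := hbl ⟨hs'S, hh, hs'.2.le.trans hb.2.2⟩
      linarith [hs'.2]

structure Amb (g g' Φ : ℝ → ℝ) (u : ℝ → ℝ → ℝ) (a b e f : ℝ) (A : Set (ℝ × ℝ)) (tp xp : ℝ) :
    Prop where
  ab : a < b
  ef : e < f
  co : Coef g g' (Icc e f)
  hΦ : ContinuousOn Φ (Icc a b)
  loc : ∀ t ∈ Ioo a b, ∀ x ∈ Ioo e f, Loc g Φ u t x
  s1 : ∀ t ∈ Icc a b, ContinuousOn (fun x => u t x) (Icc e f)
  s2 : ∀ x ∈ Icc e f, ContinuousOn (fun t => u t x) (Icc a b)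
  hA : IsClosed A
  hAc : ∀ q ∈ Icc a b ×ˢ Icc e f, q ∉ A →
    ContinuousWithinAt (fun q : ℝ × ℝ => u q.1 q.2) (Icc a b ×ˢ Icc e f) q
  ht : tp ∈ Icc a b
  hx : xp ∈ Icc e f
  hp : (tp, xp) ∈ A
  hβ : ∀ ε, 0 < ε → ∃ r, 0 < r ∧ ∀ t ∈ Icc a b, ∀ x ∈ Icc e f, (t, x) ∈ A → |t - tp| < r →
    |x - xp| < r → (∀ y ∈ Icc e f, |y - xp| < r → |u t y - u tp xp| ≤ ε) ∧
      (∀ s ∈ Icc a b, |s - tp| < r → |u s x - u tp xp| ≤ ε)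

theorem Amb.tr {g g' Φ : ℝ → ℝ} {u : ℝ → ℝ → ℝ} {a b e f : ℝ} {A : Set (ℝ × ℝ)} {tp xp : ℝ}
    (h : Amb g g' Φ u a b e f A tp xp) :
    Amb g g' (tP Φ) (tu u) (-b) (-a) e f ((fun q : ℝ × ℝ => (-q.1, q.2)) ⁻¹' A) (-tp) xp where
  ab := neg_lt_neg h.ab
  ef := h.ef
  co := h.co
  hΦ := (h.hΦ.comp (f := fun t : ℝ => -t) (by fun_prop) (fun _ ht => neg_mem_Icc' ht)).neg
  loc := fun t ht x hx => (h.loc (-t) (neg_mem_Ioo' ht) x hx).tr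
  s1 := fun t ht => (h.s1 _ (neg_mem_Icc' ht)).neg
  s2 := fun x hx =>
    ((h.s2 x hx).comp (f := fun t : ℝ => -t) (by fun_prop) (fun _ ht => neg_mem_Icc' ht)).neg
  hA := h.hA.preimage (by fun_prop)
  hAc := by
    rintro ⟨t, x⟩ ⟨ht, hx⟩ hn
    exact ((h.hAc (-t, x) ⟨neg_mem_Icc' ht, hx⟩ hn).comp (f := fun q : ℝ × ℝ => (-q.1, q.2))
      (x := (t, x)) (s := Icc (-b) (-a) ×ˢ Icc e f) (by fun_prop)
      (fun q hq => ⟨neg_mem_Icc' hq.1, hq.2⟩)).neg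
  ht := ⟨neg_le_neg h.ht.2, neg_le_neg h.ht.1⟩
  hx := h.hx
  hp := by simpa using h.hp
  hβ := by
    intro ε hε
    obtain ⟨r, hr, H⟩ := h.hβ ε hε
    refine ⟨r, hr, fun t ht x hx hA h1 h2 => ?_⟩
    have e1 : ∀ s : ℝ, |-s - tp| = |s - -tp| := fun s => by
      rw [← abs_neg]; congr 1; ring
    have e2 : ∀ p q : ℝ, |-p - -q| = |p - q| := fun p q => by
      rw [← abs_neg]; congr 1; ring
    obtain ⟨k1, k2⟩ := H (-t) (neg_mem_Icc' ht) x hx hA (by rwa [e1]) h2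
    refine ⟨fun y hy hyr => ?_, fun s hs hsr => ?_⟩
    · have := k1 y hy hyr
      simp only [tu, neg_neg, e2]; exact this
    · have := k2 (-s) (neg_mem_Icc' hs) (by rwa [e1])
      simp only [tu, neg_neg, e2]; exact this

theorem Amb.xr {g g' Φ : ℝ → ℝ} {u : ℝ → ℝ → ℝ} {a b e f : ℝ} {A : Set (ℝ × ℝ)} {tp xp : ℝ}
    (h : Amb g g' Φ u a b e f A tp xp) :
    Amb (xg g) (xg' g') Φ (xu u) a b (-f) (-e) ((fun q : ℝ × ℝ => (q.1, -q.2)) ⁻¹' A) tp (-xp) where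
  ab := h.ab
  ef := neg_lt_neg h.ef
  co := h.co.xr (fun _ hy => neg_mem_Icc' hy)
  hΦ := h.hΦ
  loc := fun t ht x hx => (h.loc t ht (-x) (neg_mem_Ioo' hx)).xr
  s2 := fun t ht => (h.s2 _ (neg_mem_Icc' ht)).neg
  s1 := fun x hx =>
    ((h.s1 x hx).comp (f := fun t : ℝ => -t) (by fun_prop) (fun _ ht => neg_mem_Icc' ht)).neg
  hA := h.hA.preimage (by fun_prop)
  hAc := by
    rintro ⟨t, x⟩ ⟨ht, hx⟩ hn
    exact ((h.hAc (t, -x) ⟨ht, neg_mem_Icc' hx⟩ hn).comp (f := fun q : ℝ × ℝ => (q.1, -q.2))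
      (x := (t, x)) (s := Icc a b ×ˢ Icc (-f) (-e)) (by fun_prop)
      (fun q hq => ⟨hq.1, neg_mem_Icc' hq.2⟩)).neg
  hx := ⟨neg_le_neg h.hx.2, neg_le_neg h.hx.1⟩
  ht := h.ht
  hp := by simpa using h.hp
  hβ := by
    intro ε hε
    obtain ⟨r, hr, H⟩ := h.hβ ε hε
    refine ⟨r, hr, fun t ht x hx hA h1 h2 => ?_⟩
    have e1 : ∀ s : ℝ, |-s - xp| = |s - -xp| := fun s => by
      rw [← abs_neg]; congr 1; ring
    have e2 : ∀ p q : ℝ, |-p - -q| = |p - q| := fun p q => by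
      rw [← abs_neg]; congr 1; ring
    obtain ⟨k1, k2⟩ := H t ht (-x) (neg_mem_Icc' hx) hA h1 (by rwa [e1])
    refine ⟨fun y hy hyr => ?_, fun s hs hsr => ?_⟩
    · have := k1 (-y) (neg_mem_Icc' hy) (by rwa [e1])
      simp only [xu, neg_neg, e2]; exact this
    · have := k2 s hs hsr
      simp only [xu, neg_neg, e2]; exact this

/-- right upper quadrant -/
theorem Amb.q1 {g g' Φ : ℝ → ℝ} {u : ℝ → ℝ → ℝ} {a b e f : ℝ} {A : Set (ℝ × ℝ)} {tp xp : ℝ}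
    (h : Amb g g' Φ u a b e f A tp xp) (htb : tp < b) (hxf : xp < f) :
    ContinuousWithinAt (fun q : ℝ × ℝ => u q.1 q.2) (Icc tp b ×ˢ Icc xp f) (tp, xp) := by
  set u0 := u tp xp with hu0
  have hTT : Icc tp b ⊆ Icc a b := Icc_subset_Icc_left h.ht.1
  have hXX : Icc xp f ⊆ Icc e f := Icc_subset_Icc_left h.hx.1
  rw [Metric.continuousWithinAt_iff]
  intro ω hω
  -- the small parameter
  set ε := min (1 / 2) (ω / (20 + 10 * |u0|)) with hε
  have hden : 0 < 20 + 10 * |u0| := by positivity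
  have e0 : 0 < ε := lt_min (by norm_num) (div_pos hω hden)
  have e1h : ε ≤ 1 / 2 := min_le_left _ _
  have e2 : ε * (20 + 10 * |u0|) ≤ ω := by
    have := min_le_right (1 / 2) (ω / (20 + 10 * |u0|))
    rwa [← hε, le_div_iff₀ hden] at this
  obtain ⟨r0, hr0, Hβ⟩ := h.hβ ε e0
  obtain ⟨τ, hτ, hτb, HΦ⟩ := nice_right htb (h.hΦ.mono hTT) (by linarith : 0 < ε / 2)
  -- radius
  set r := min (min (r0 / 2) 1) (min τ (f - xp)) with hr
  have rp : 0 < r := lt_min (lt_min (by linarith) one_pos) (lt_min hτ (by linarith))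
  have r1 : r ≤ r0 / 2 := (min_le_left _ _).trans (min_le_left _ _)
  have r2 : r ≤ 1 := (min_le_left _ _).trans (min_le_right _ _)
  have r3 : r ≤ τ := (min_le_right _ _).trans (min_le_left _ _)
  have r4 : r ≤ f - xp := (min_le_right _ _).trans (min_le_right _ _)
  have hT : Icc tp (tp + r) ⊆ Icc a b := fun t ht => ⟨h.ht.1.trans ht.1, by linarith [ht.2]⟩
  have hX : Icc xp (xp + r) ⊆ Icc e f := fun t ht => ⟨h.hx.1.trans ht.1, by linarith [ht.2]⟩
  have hab1 : ∀ t ∈ Icc tp (tp + r), |t - tp| < r0 := fun t ht => by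
    rw [abs_of_nonneg (sub_nonneg.2 ht.1)]; linarith [ht.2]
  have hab2 : ∀ x ∈ Icc xp (xp + r), |x - xp| < r0 := fun t ht => by
    rw [abs_of_nonneg (sub_nonneg.2 ht.1)]; linarith [ht.2]
  have hKc : IsCompact (A ∩ Icc tp (tp + r) ×ˢ Icc xp (xp + r)) :=
    (isCompact_Icc.prod isCompact_Icc).inter_left h.hA
  set S : Set ℝ := Prod.fst '' (A ∩ Icc tp (tp + r) ×ˢ Icc xp (xp + r)) with hS
  set Y : Set ℝ := Prod.snd '' (A ∩ Icc tp (tp + r) ×ˢ Icc xp (xp + r)) with hY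
  have hSc : IsClosed S := (hKc.image continuous_fst).isClosed
  have hYc : IsClosed Y := (hKc.image continuous_snd).isClosed
  have htpm : tp ∈ Icc tp (tp + r) := left_mem_Icc.2 (by linarith)
  have hxpm : xp ∈ Icc xp (xp + r) := left_mem_Icc.2 (by linarith)
  have htS : tp ∈ S := ⟨(tp, xp), ⟨h.hp, htpm, hxpm⟩, rfl⟩
  have hxY : xp ∈ Y := ⟨(tp, xp), ⟨h.hp, htpm, hxpm⟩, rfl⟩
  have goodS : ∀ t ∈ S, ∀ x ∈ Icc xp (xp + r), |u t x - u0| ≤ ε := by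
    rintro _ ⟨⟨t, x'⟩, ⟨hA, ht, hx'⟩, rfl⟩ x hx
    exact (Hβ t (hT ht) x' (hX hx') hA (hab1 t ht) (hab2 x' hx')).1 x (hX hx) (hab2 x hx)
  have goodY : ∀ x ∈ Y, ∀ t ∈ Icc tp (tp + r), |u t x - u0| ≤ ε := by
    rintro _ ⟨⟨t', x⟩, ⟨hA, ht', hx⟩, rfl⟩ t ht
    exact (Hβ t' (hT ht') x (hX hx) hA (hab1 t' ht') (hab2 x hx)).2 t (hT ht) (hab1 t ht)
  have mkR : ∀ a1 b1 e1 f1, tp ≤ a1 → a1 < b1 → b1 ≤ tp + r → xp ≤ e1 → e1 < f1 → f1 ≤ xp + r →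
      (∀ s ∈ Ioo a1 b1, s ∉ S) → (∀ y ∈ Ioo e1 f1, y ∉ Y) → Rect g g' Φ u a1 b1 e1 f1 := by
    intro a1 b1 e1 f1 k1 k2 k3 k4 k5 k6 k7 k8
    have hT1 : Icc a1 b1 ⊆ Icc tp (tp + r) := Icc_subset_Icc k1 k3
    have hX1 : Icc e1 f1 ⊆ Icc xp (xp + r) := Icc_subset_Icc k4 k6
    have ha1 := hT (hT1 (left_mem_Icc.2 k2.le))
    have hb1 := hT (hT1 (right_mem_Icc.2 k2.le))
    have he1 := hX (hX1 (left_mem_Icc.2 k5.le))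
    have hf1 := hX (hX1 (right_mem_Icc.2 k5.le))
    refine
      { ab := k2, ef := k5, co := h.co.mono (hX1.trans hX), hΦ := h.hΦ.mono (hT1.trans hT)
        loc := fun t ht x hx => h.loc t ⟨ha1.1.trans_lt ht.1, ht.2.trans_le hb1.2⟩ x
          ⟨he1.1.trans_lt hx.1, hx.2.trans_le hf1.2⟩
        cu := ?_
        s1 := (h.s1 _ ha1).mono (hX1.trans hX)
        s2 := (h.s1 _ hb1).mono (hX1.trans hX)
        s3 := (h.s2 _ he1).mono (hT1.trans hT)
        s4 := (h.s2 _ hf1).mono (hT1.trans hT) }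
    rintro ⟨t, x⟩ ⟨⟨ht, hx⟩, hn⟩
    refine (h.hAc (t, x) ⟨hT (hT1 ht), hX (hX1 hx)⟩ ?_).mono ?_
    · intro hA
      have i1 : t ∈ S := ⟨(t, x), ⟨hA, hT1 ht, hX1 hx⟩, rfl⟩
      have i2 : x ∈ Y := ⟨(t, x), ⟨hA, hT1 ht, hX1 hx⟩, rfl⟩
      apply hn
      refine ⟨?_, ?_⟩
      · by_contra hcon
        simp only [mem_insert_iff, mem_singleton_iff, not_or] at hcon
        exact k7 t ⟨lt_of_le_of_ne ht.1 (Ne.symm hcon.1), lt_of_le_of_ne ht.2 hcon.2⟩ i1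
      · by_contra hcon
        simp only [mem_insert_iff, mem_singleton_iff, not_or] at hcon
        exact k8 x ⟨lt_of_le_of_ne hx.1 (Ne.symm hcon.1), lt_of_le_of_ne hx.2 hcon.2⟩ i2
    · rintro q ⟨⟨q1, q2⟩, -⟩
      exact ⟨hT (hT1 q1), hX (hX1 q2)⟩
  have fin : ∀ a1 b1 e1 f1, tp ≤ a1 → a1 < b1 → b1 ≤ tp + r → xp ≤ e1 → e1 < f1 → f1 ≤ xp + r →
      (∀ s ∈ Ioo a1 b1, s ∉ S) → (∀ y ∈ Ioo e1 f1, y ∉ Y) →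
      (∀ x ∈ Icc e1 f1, |u a1 x - u0| ≤ 2 * ε) → (∀ x ∈ Icc e1 f1, |u b1 x - u0| ≤ 2 * ε) →
      (∀ t ∈ Icc a1 b1, |u t e1 - u0| ≤ 2 * ε) → (∀ t ∈ Icc a1 b1, |u t f1 - u0| ≤ 2 * ε) →
      ∀ t ∈ Icc a1 b1, ∀ x ∈ Icc e1 f1, |u t x - u0| < ω := by
    intro a1 b1 e1 f1 k1 k2 k3 k4 k5 k6 k7 k8 b1' b2' b3' b4' t ht x hx
    have R := mkR a1 b1 e1 f1 k1 k2 k3 k4 k5 k6 k7 k8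
    have := R.bound (by linarith) e1h (κ := ε) (fun t ht => by
      have i1 := HΦ t ⟨k1.trans ht.1, by linarith [ht.2]⟩
      have i2 := HΦ a1 ⟨k1, by linarith⟩
      have := abs_sub_le (Φ t) (Φ tp) (Φ a1)
      rw [abs_sub_comm (Φ tp)] at this
      linarith) b1' b2' b3' b4' t ht x hx
    nlinarith [abs_nonneg u0]
  have dirS : ∀ t ∈ S, ∀ x ∈ Icc xp (xp + r), |u t x - u0| < ω := fun t ht x hx => by
    have := goodS t ht x hx
    nlinarith [abs_nonneg u0]
  have dirY : ∀ x ∈ Y, ∀ t ∈ Icc tp (tp + r), |u t x - u0| < ω := fun t ht x hx => by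
    have := goodY t ht x hx
    nlinarith [abs_nonneg u0]
  -- it suffices to find a small box
  suffices hbox : ∃ δ, 0 < δ ∧ ∀ t ∈ Ico tp (tp + δ), ∀ x ∈ Ico xp (xp + δ), |u t x - u0| < ω by
    obtain ⟨δ, hδ, H⟩ := hbox
    refine ⟨δ, hδ, ?_⟩
    rintro ⟨t, x⟩ ⟨ht, hx⟩ hd
    simp only at ht hx
    rw [Prod.dist_eq, max_lt_iff, Real.dist_eq, Real.dist_eq, abs_of_nonneg (sub_nonneg.2 ht.1),
      abs_of_nonneg (sub_nonneg.2 hx.1)] at hd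
    obtain ⟨hd1, hd2⟩ := hd
    rw [Real.dist_eq]
    exact H t ⟨ht.1, by linarith⟩ x ⟨hx.1, by linarith⟩
  rcases bracket (c := tp) hSc rp with ⟨b0, o1, o2, o3⟩ | inT
  · rcases bracket (c := xp) hYc rp with ⟨f0, o4, o5, o6⟩ | inX
    · have R := mkR tp b0 xp f0 le_rfl o1 o2.le le_rfl o4 o5.le o3 o6
      have C := R.c1
      rw [Metric.continuousWithinAt_iff] at C
      obtain ⟨δ, hδ, H⟩ := C ω hω
      refine ⟨min δ (min (b0 - tp) (f0 - xp)), lt_min hδ (lt_min (by linarith) (by linarith)), ?_⟩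
      intro t ht x hx
      have m1 := min_le_left δ (min (b0 - tp) (f0 - xp))
      have m2 := (min_le_right δ (min (b0 - tp) (f0 - xp))).trans (min_le_left _ _)
      have m3 := (min_le_right δ (min (b0 - tp) (f0 - xp))).trans (min_le_right _ _)
      have := H (x := (t, x)) ⟨⟨ht.1, by linarith [ht.2]⟩, ⟨hx.1, by linarith [hx.2]⟩⟩ (by
        rw [Prod.dist_eq, max_lt_iff, Real.dist_eq, Real.dist_eq]
        simp only
        rw [abs_of_nonneg (sub_nonneg.2 ht.1), abs_of_nonneg (sub_nonneg.2 hx.1)]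
        exact ⟨by linarith [ht.2], by linarith [hx.2]⟩)
      rwa [Real.dist_eq] at this
    · -- outer time, inner space
      have hb0 : b0 ∈ Icc tp (tp + r) := ⟨o1.le, o2.le⟩
      obtain ⟨η, η0, η1, η2⟩ := nice_right hxf ((h.s1 b0 (hT hb0)).mono hXX) e0
      obtain ⟨δ, hδ, H⟩ := inX (min η r) (lt_min η0 rp)
      refine ⟨min (min δ r) (b0 - tp), lt_min (lt_min hδ rp) (by linarith), ?_⟩
      intro t ht x hx
      have m1 := (min_le_left (min δ r) (b0 - tp)).trans (min_le_left _ _)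
      have m2 := (min_le_left (min δ r) (b0 - tp)).trans (min_le_right _ _)
      have m3 := (min_le_right (min δ r) (b0 - tp))
      have m4 := min_le_left η r
      have m5 := min_le_right η r
      have htm : t ∈ Icc tp (tp + r) := ⟨ht.1, by linarith [ht.2]⟩
      have hxm : x ∈ Icc xp (xp + r) := ⟨hx.1, by linarith [hx.2]⟩
      by_cases hxY' : x ∈ Y
      · exact dirY x hxY' t htm
      have hx1 : xp < x := lt_of_le_of_ne hx.1 (fun hh => hxY' (hh ▸ hxY))
      obtain ⟨e1, f1, j1, j2, j3, j4, j5, j6, j7⟩ := H x ⟨hx1, by linarith [hx.2]⟩ hxY hxY'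
      refine fin tp b0 e1 f1 le_rfl o1 o2.le j3 (j4.trans j5) (by linarith) o3 j7 ?_ ?_ ?_ ?_ t
        ⟨ht.1, by linarith [ht.2]⟩ x ⟨j4.le, j5.le⟩
      · intro y hy
        linarith [goodS tp htS y ⟨j3.trans hy.1, by linarith [hy.2]⟩]
      · intro y hy
        have i1 := η2 y ⟨j3.trans hy.1, by linarith [hy.2]⟩
        have i2 := goodY xp hxY b0 hb0
        have := abs_sub_le (u b0 y) (u b0 xp) u0
        linarith
      · intro s hs
        linarith [goodY e1 j1 s ⟨hs.1, by linarith [hs.2]⟩]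
      · intro s hs
        linarith [goodY f1 j2 s ⟨hs.1, by linarith [hs.2]⟩]
  · rcases bracket (c := xp) hYc rp with ⟨f0, o4, o5, o6⟩ | inX
    · have hf0 : f0 ∈ Icc xp (xp + r) := ⟨o4.le, o5.le⟩
      obtain ⟨η, η0, η1, η2⟩ := nice_right htb ((h.s2 f0 (hX hf0)).mono hTT) e0
      obtain ⟨δ, hδ, H⟩ := inT (min η r) (lt_min η0 rp)
      refine ⟨min (min δ r) (f0 - xp), lt_min (lt_min hδ rp) (by linarith), ?_⟩
      intro t ht x hx
      have m1 := (min_le_left (min δ r) (f0 - xp)).trans (min_le_left _ _)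
      have m2 := (min_le_left (min δ r) (f0 - xp)).trans (min_le_right _ _)
      have m3 := (min_le_right (min δ r) (f0 - xp))
      have m4 := min_le_left η r
      have m5 := min_le_right η r
      have htm : t ∈ Icc tp (tp + r) := ⟨ht.1, by linarith [ht.2]⟩
      have hxm : x ∈ Icc xp (xp + r) := ⟨hx.1, by linarith [hx.2]⟩
      by_cases htS' : t ∈ S
      · exact dirS t htS' x hxm
      have ht1 : tp < t := lt_of_le_of_ne ht.1 (fun hh => htS' (hh ▸ htS))
      obtain ⟨a1, b1, j1, j2, j3, j4, j5, j6, j7⟩ := H t ⟨ht1, by linarith [ht.2]⟩ htS htS'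
      refine fin a1 b1 xp f0 j3 (j4.trans j5) (by linarith) le_rfl o4 o5.le j7 o6 ?_ ?_ ?_ ?_ t
        ⟨j4.le, j5.le⟩ x ⟨hx.1, by linarith [hx.2]⟩
      · intro y hy
        linarith [goodS a1 j1 y ⟨hy.1, by linarith [hy.2]⟩]
      · intro y hy
        linarith [goodS b1 j2 y ⟨hy.1, by linarith [hy.2]⟩]
      · intro s hs
        linarith [goodY xp hxY s ⟨j3.trans hs.1, by linarith [hs.2]⟩]
      · intro s hs
        have i1 := η2 s ⟨j3.trans hs.1, by linarith [hs.2]⟩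
        have i2 := goodS tp htS f0 hf0
        have := abs_sub_le (u s f0) (u tp f0) u0
        linarith
    · obtain ⟨δ, hδ, H⟩ := inT r rp
      obtain ⟨δ', hδ', H'⟩ := inX r rp
      refine ⟨min (min δ δ') r, lt_min (lt_min hδ hδ') rp, ?_⟩
      intro t ht x hx
      have m1 := (min_le_left (min δ δ') r).trans (min_le_left _ _)
      have m2 := (min_le_left (min δ δ') r).trans (min_le_right _ _)
      have m3 := (min_le_right (min δ δ') r)
      have htm : t ∈ Icc tp (tp + r) := ⟨ht.1, by linarith [ht.2]⟩
      have hxm : x ∈ Icc xp (xp + r) := ⟨hx.1, by linarith [hx.2]⟩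
      by_cases htS' : t ∈ S
      · exact dirS t htS' x hxm
      by_cases hxY' : x ∈ Y
      · exact dirY x hxY' t htm
      have ht1 : tp < t := lt_of_le_of_ne ht.1 (fun hh => htS' (hh ▸ htS))
      have hx1 : xp < x := lt_of_le_of_ne hx.1 (fun hh => hxY' (hh ▸ hxY))
      obtain ⟨a1, b1, j1, j2, j3, j4, j5, j6, j7⟩ := H t ⟨ht1, by linarith [ht.2]⟩ htS htS'
      obtain ⟨e1, f1, l1, l2, l3, l4, l5, l6, l7⟩ := H' x ⟨hx1, by linarith [hx.2]⟩ hxY hxY'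
      refine fin a1 b1 e1 f1 j3 (j4.trans j5) j6.le l3 (l4.trans l5) l6.le j7 l7 ?_ ?_ ?_ ?_ t
        ⟨j4.le, j5.le⟩ x ⟨l4.le, l5.le⟩
      · intro y hy
        linarith [goodS a1 j1 y ⟨l3.trans hy.1, by linarith [hy.2]⟩]
      · intro y hy
        linarith [goodS b1 j2 y ⟨l3.trans hy.1, by linarith [hy.2]⟩]
      · intro s hs
        linarith [goodY e1 l1 s ⟨j3.trans hs.1, by linarith [hs.2]⟩]
      · intro s hs
        linarith [goodY f1 l2 s ⟨j3.trans hs.1, by linarith [hs.2]⟩]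

theorem Amb.up {g g' Φ : ℝ → ℝ} {u : ℝ → ℝ → ℝ} {a b e f : ℝ} {A : Set (ℝ × ℝ)} {tp xp : ℝ}
    (h : Amb g g' Φ u a b e f A tp xp) (hxf : xp < f) :
    ContinuousWithinAt (fun q : ℝ × ℝ => u q.1 q.2) (Icc a b ×ˢ Icc xp f) (tp, xp) := by
  have R : tp < b → ContinuousWithinAt (fun q : ℝ × ℝ => u q.1 q.2) (Icc tp b ×ˢ Icc xp f) (tp, xp) :=
    fun hb => h.q1 hb hxf
  have L : a < tp → ContinuousWithinAt (fun q : ℝ × ℝ => u q.1 q.2) (Icc a tp ×ˢ Icc xp f) (tp, xp) :=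
    fun ha => cwa_tr (h.tr.q1 (neg_lt_neg ha) hxf)
  rcases eq_or_lt_of_le h.ht.1 with rfl | ha
  · exact R h.ab
  rcases eq_or_lt_of_le h.ht.2 with rfl | hb
  · exact L h.ab
  refine ((L ha).union (R hb)).mono ?_
  rintro ⟨t, x⟩ ⟨ht, hx⟩
  rcases le_total t tp with hh | hh
  · exact Or.inl ⟨⟨ht.1, hh⟩, hx⟩
  · exact Or.inr ⟨⟨hh, ht.2⟩, hx⟩

theorem Amb.cont {g g' Φ : ℝ → ℝ} {u : ℝ → ℝ → ℝ} {a b e f : ℝ} {A : Set (ℝ × ℝ)} {tp xp : ℝ}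
    (h : Amb g g' Φ u a b e f A tp xp) (hxe : e < xp) (hxf : xp < f) :
    ContinuousWithinAt (fun q : ℝ × ℝ => u q.1 q.2) (Icc a b ×ˢ Icc e f) (tp, xp) := by
  have U := h.up hxf
  have D := cwa_xr (h.xr.up (neg_lt_neg hxe))
  refine (D.union U).mono ?_
  rintro ⟨t, x⟩ ⟨ht, hx⟩
  rcases le_total x xp with hh | hh
  · exact Or.inl ⟨ht, hx.1, hh⟩
  · exact Or.inr ⟨ht, hh, hx.2⟩

/-- two point Lipschitz sets, closed under separate continuity -/
theorem baire_lip {U W : ℝ → ℝ → ℝ} (hU1 : ∀ t, Continuous (U t)) (hU2 : ∀ x, Continuous fun t => U t x)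
    (hW1 : ∀ t, Continuous (W t)) (hW2 : ∀ x, Continuous fun t => W t x)
    {K : Set (ℝ × ℝ)} (hK : IsCompact K) (hne : K.Nonempty)
    (h1 : ∀ p ∈ K, ∃ L δ : ℝ, 0 < δ ∧ ∀ y, |y - p.2| < δ → |U p.1 y - U p.1 p.2| ≤ L * |y - p.2|)
    (h2 : ∀ p ∈ K, ∃ L δ : ℝ, 0 < δ ∧ ∀ s, |s - p.1| < δ → |W s p.2 - W p.1 p.2| ≤ L * |s - p.1|) :
    ∃ (L δ : ℝ) (V : Set (ℝ × ℝ)), 0 ≤ L ∧ 0 < δ ∧ IsOpen V ∧ (V ∩ K).Nonempty ∧ ∀ p ∈ V ∩ K,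
      (∀ y, |y - p.2| < δ → |U p.1 y - U p.1 p.2| ≤ L * |y - p.2|) ∧
      (∀ s, |s - p.1| < δ → |W s p.2 - W p.1 p.2| ≤ L * |s - p.1|) := by
  let E : ℕ → Set (ℝ × ℝ) := fun n => (⋂ y : ℝ, ⋂ y' : ℝ,
    ({p : ℝ × ℝ | p.2 - 1 / ((n : ℝ) + 1) < y ∧ y < p.2 ∧ p.2 < y' ∧ y' < p.2 + 1 / ((n : ℝ) + 1)}ᶜ ∪
      {p : ℝ × ℝ | |U p.1 y - U p.1 y'| ≤ n * (y' - y)})) ∩ (⋂ y : ℝ, ⋂ y' : ℝ,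
    ({p : ℝ × ℝ | p.1 - 1 / ((n : ℝ) + 1) < y ∧ y < p.1 ∧ p.1 < y' ∧ y' < p.1 + 1 / ((n : ℝ) + 1)}ᶜ ∪
      {p : ℝ × ℝ | |W y p.2 - W y' p.2| ≤ n * (y' - y)}))
  have hEc : ∀ n, IsClosed (E n) := by
    intro n
    refine IsClosed.inter (isClosed_iInter fun y => isClosed_iInter fun y' => IsClosed.union ?_ ?_)
      (isClosed_iInter fun y => isClosed_iInter fun y' => IsClosed.union ?_ ?_)
    · refine IsOpen.isClosed_compl ?_
      simp only [setOf_and]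
      refine IsOpen.inter (isOpen_lt (by fun_prop) (by fun_prop)) (IsOpen.inter
        (isOpen_lt (by fun_prop) (by fun_prop)) (IsOpen.inter
        (isOpen_lt (by fun_prop) (by fun_prop)) (isOpen_lt (by fun_prop) (by fun_prop))))
    · have k1 := (hU2 y).comp (continuous_fst (X := ℝ) (Y := ℝ))
      have k2 := (hU2 y').comp (continuous_fst (X := ℝ) (Y := ℝ))
      exact isClosed_le (k1.sub k2).abs continuous_const
    · refine IsOpen.isClosed_compl ?_
      simp only [setOf_and]
      refine IsOpen.inter (isOpen_lt (by fun_prop) (by fun_prop)) (IsOpen.inter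
        (isOpen_lt (by fun_prop) (by fun_prop)) (IsOpen.inter
        (isOpen_lt (by fun_prop) (by fun_prop)) (isOpen_lt (by fun_prop) (by fun_prop))))
    · have k1 := (hW1 y).comp (continuous_snd (X := ℝ) (Y := ℝ))
      have k2 := (hW1 y').comp (continuous_snd (X := ℝ) (Y := ℝ))
      exact isClosed_le (k1.sub k2).abs continuous_const
  -- one variable two point estimate
  have two : ∀ (f : ℝ → ℝ) (x L δ n : ℝ), (∀ y, |y - x| < δ → |f y - f x| ≤ L * |y - x|) → L ≤ n →
      1 / (n + 1) < δ → ∀ y y', x - 1 / (n + 1) < y → y < x → x < y' → y' < x + 1 / (n + 1) →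
      |f y - f y'| ≤ n * (y' - y) := by
    intro f x L δ n H hL hδ y y' a1 a2 a3 a4
    have b1 := H y (by rw [abs_of_neg (by linarith)]; linarith)
    have b2 := H y' (by rw [abs_of_pos (by linarith)]; linarith)
    rw [abs_of_neg (by linarith : y - x < 0)] at b1
    rw [abs_of_pos (by linarith : 0 < y' - x)] at b2
    have := abs_sub_le (f y) (f x) (f y')
    rw [abs_sub_comm (f x)] at this
    nlinarith
  have one : ∀ (f : ℝ → ℝ) (x n : ℝ), Continuous f → 0 ≤ n → (∀ y y', x - 1 / (n + 1) < y → y < x → x < y' →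
      y' < x + 1 / (n + 1) → |f y - f y'| ≤ n * (y' - y)) →
      ∀ y, |y - x| < 1 / (n + 1) → |f y - f x| ≤ n * |y - x| := by
    intro f x n hf hn H y hy
    have hp : 0 < 1 / (n + 1) := by positivity
    rw [abs_lt] at hy
    rcases lt_trichotomy y x with hh | hh | hh
    · rw [abs_of_neg (by linarith : y - x < 0)]
      have l1 : Tendsto (fun y' => |f y - f y'|) (𝓝[>] x) (𝓝 |f y - f x|) :=
        ((continuous_const.sub hf).abs.tendsto x).mono_left nhdsWithin_le_nhds
      have l2 : Tendsto (fun y' => n * (y' - y)) (𝓝[>] x) (𝓝 (n * -(y - x))) := by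
        have : Continuous (fun y' : ℝ => n * (y' - y)) := by fun_prop
        rw [show n * -(y - x) = n * (x - y) by ring]
        exact (this.tendsto x).mono_left nhdsWithin_le_nhds
      refine le_of_tendsto_of_tendsto l1 l2 ?_
      filter_upwards [Ioo_mem_nhdsGT (by linarith : x < x + 1 / (n + 1))] with y' hy'
      exact H y y' (by linarith) hh hy'.1 hy'.2
    · simp [hh]
    · rw [abs_of_pos (by linarith : 0 < y - x), abs_sub_comm]
      have l1 : Tendsto (fun y' => |f y' - f y|) (𝓝[<] x) (𝓝 |f x - f y|) :=
        ((hf.sub continuous_const).abs.tendsto x).mono_left nhdsWithin_le_nhds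
      have l2 : Tendsto (fun y' => n * (y - y')) (𝓝[<] x) (𝓝 (n * (y - x))) := by
        have : Continuous (fun y' : ℝ => n * (y - y')) := by fun_prop
        exact (this.tendsto x).mono_left nhdsWithin_le_nhds
      refine le_of_tendsto_of_tendsto l1 l2 ?_
      filter_upwards [Ioo_mem_nhdsLT (by linarith : x - 1 / (n + 1) < x)] with y' hy'
      exact H y' y hy'.1 hy'.2 hh (by linarith)
  have hcov : ∀ p ∈ K, ∃ n, p ∈ E n := by
    intro p hp
    obtain ⟨L, δ, hδ, H⟩ := h1 p hp
    obtain ⟨L', δ', hδ', H'⟩ := h2 p hp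
    obtain ⟨n1, hn1⟩ := exists_nat_ge (max L L')
    obtain ⟨n2, hn2⟩ := exists_nat_one_div_lt (lt_min hδ hδ')
    refine ⟨max n1 n2, ?_⟩
    have hn : max L L' ≤ ((max n1 n2 : ℕ) : ℝ) :=
      hn1.trans (by exact_mod_cast le_max_left _ _)
    have hn' : 1 / (((max n1 n2 : ℕ) : ℝ) + 1) < min δ δ' := by
      refine lt_of_le_of_lt ?_ hn2
      apply one_div_le_one_div_of_le (by positivity)
      have : (n2 : ℝ) ≤ ((max n1 n2 : ℕ) : ℝ) := by exact_mod_cast le_max_right _ _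
      linarith
    refine ⟨?_, ?_⟩
    · simp only [mem_iInter]
      intro y y'
      by_cases hc : p.2 - 1 / (((max n1 n2 : ℕ) : ℝ) + 1) < y ∧ y < p.2 ∧ p.2 < y' ∧
        y' < p.2 + 1 / (((max n1 n2 : ℕ) : ℝ) + 1)
      · right
        exact two (U p.1) p.2 L δ _ H ((le_max_left _ _).trans hn) (hn'.trans_le (min_le_left _ _))
          y y' hc.1 hc.2.1 hc.2.2.1 hc.2.2.2
      · left; exact hc
    · simp only [mem_iInter]
      intro y y'
      by_cases hc : p.1 - 1 / (((max n1 n2 : ℕ) : ℝ) + 1) < y ∧ y < p.1 ∧ p.1 < y' ∧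
        y' < p.1 + 1 / (((max n1 n2 : ℕ) : ℝ) + 1)
      · right
        exact two (fun s => W s p.2) p.1 L' δ' _ H' ((le_max_right _ _).trans hn)
          (hn'.trans_le (min_le_right _ _)) y y' hc.1 hc.2.1 hc.2.2.1 hc.2.2.2
      · left; exact hc
  have : CompactSpace K := isCompact_iff_compactSpace.1 hK
  have : Nonempty K := hne.to_subtype
  obtain ⟨n, p, hp⟩ := nonempty_interior_of_iUnion_of_closed (X := K)
    (f := fun n => (Subtype.val : K → ℝ × ℝ) ⁻¹' E n)
    (fun n => (hEc n).preimage continuous_subtype_val) (by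
      ext q
      simp only [mem_iUnion, mem_preimage, mem_univ, iff_true]
      exact hcov q q.2)
  obtain ⟨O, hO1, hO2, hO3⟩ := mem_interior.1 hp
  obtain ⟨V, hV, rfl⟩ := isOpen_induced_iff.1 hO2
  refine ⟨n, 1 / ((n : ℝ) + 1), V, by positivity, by positivity, hV, ⟨p, hO3, p.2⟩, ?_⟩
  rintro q ⟨hqV, hqK⟩
  have hq : q ∈ E n := hO1 (show (⟨q, hqK⟩ : K) ∈ Subtype.val ⁻¹' V from hqV)
  obtain ⟨q1, q2⟩ := hq
  simp only [mem_iInter] at q1 q2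
  refine ⟨one (U q.1) q.2 n (hU1 _) (by positivity) ?_,
    one (fun s => W s q.2) q.1 n (hW2 _) (by positivity) ?_⟩
  · intro y y' a1 a2 a3 a4
    rcases q1 y y' with hh | hh
    · exact absurd ⟨a1, a2, a3, a4⟩ hh
    · exact hh
  · intro y y' a1 a2 a3 a4
    rcases q2 y y' with hh | hh
    · exact absurd ⟨a1, a2, a3, a4⟩ hh
    · exact hh

def cl (a b t : ℝ) : ℝ := max a (min b t)

theorem cl_mem {a b : ℝ} (h : a ≤ b) (t : ℝ) : cl a b t ∈ Icc a b :=
  ⟨le_max_left _ _, max_le h (min_le_left _ _)⟩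

theorem cl_eq {a b t : ℝ} (h : t ∈ Icc a b) : cl a b t = t := by
  unfold cl; rw [min_eq_right h.2, max_eq_right h.1]

theorem cl_cont (a b : ℝ) : Continuous (cl a b) := by unfold cl; fun_prop

theorem cl_lip (a b s t : ℝ) : |cl a b s - cl a b t| ≤ |s - t| := by
  unfold cl
  refine (abs_max_sub_max_le_max _ _ _ _).trans ?_
  rw [sub_self, abs_zero]
  refine max_le (abs_nonneg _) ((abs_min_sub_min_le_max _ _ _ _).trans ?_)
  rw [sub_self, abs_zero]
  exact max_le (abs_nonneg _) le_rfl

theorem cl_lipat {f : ℝ → ℝ} {f' a b t : ℝ} (hab : a ≤ b) (ht : t ∈ Icc a b)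
    (h : HasDerivWithinAt f f' (Icc a b) t) :
    ∃ L δ : ℝ, 0 < δ ∧ ∀ s, |s - t| < δ → |f (cl a b s) - f (cl a b t)| ≤ L * |s - t| := by
  have h1 := h.hasFDerivWithinAt.isBigO_sub
  obtain ⟨C, hC⟩ := h1.bound
  have h2 : Tendsto (cl a b) (𝓝 t) (𝓝[Icc a b] t) := by
    refine tendsto_nhdsWithin_iff.2 ⟨?_, Eventually.of_forall fun s => cl_mem hab s⟩
    have := (cl_cont a b).tendsto t
    rwa [cl_eq ht] at this
  obtain ⟨δ, hδ, H⟩ := Metric.eventually_nhds_iff.1 (h2.eventually hC)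
  refine ⟨|C|, δ, hδ, fun s hs => ?_⟩
  have h3 := H (y := s) (by rwa [Real.dist_eq])
  have h4 := cl_lip a b s t
  rw [cl_eq ht] at h4 ⊢
  rw [Real.norm_eq_abs, Real.norm_eq_abs] at h3
  calc _ ≤ C * |cl a b s - t| := h3
    _ ≤ |C| * |cl a b s - t| := mul_le_mul_of_nonneg_right (le_abs_self C) (abs_nonneg _)
    _ ≤ _ := mul_le_mul_of_nonneg_left h4 (abs_nonneg _)

structure PDE (g g' Φ : ℝ → ℝ) (u : ℝ → ℝ → ℝ) (c d : ℝ) (X : Set ℝ) : Prop where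
  cd : c < d
  Xo : IsOpen X
  co : Coef g g' X
  hΦ : ContinuousOn Φ (Icc c d)
  dx : ∀ t ∈ Icc c d, ∀ x ∈ X, ∃ ux, HasDerivAt (fun y => u t y) ux x ∧
    HasDerivWithinAt (fun s => ww g Φ u s x) (-(u t x) * ux) (Icc c d) t

theorem PDE.loc {g g' Φ : ℝ → ℝ} {u : ℝ → ℝ → ℝ} {c d : ℝ} {X : Set ℝ} (h : PDE g g' Φ u c d X)
    {t x : ℝ} (ht : t ∈ Ioo c d) (hx : x ∈ X) : Loc g Φ u t x := by
  obtain ⟨ux, h1, h2⟩ := h.dx t (Ioo_subset_Icc_self ht) x hx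
  exact ⟨ux, h1, h2.hasDerivAt (Icc_mem_nhds ht.1 ht.2)⟩

theorem PDE.contx {g g' Φ : ℝ → ℝ} {u : ℝ → ℝ → ℝ} {c d : ℝ} {X : Set ℝ} (h : PDE g g' Φ u c d X)
    {t : ℝ} (ht : t ∈ Icc c d) : ContinuousOn (fun x => u t x) X := by
  intro x hx
  obtain ⟨ux, h1, h2⟩ := h.dx t ht x hx
  exact h1.continuousAt.continuousWithinAt

theorem PDE.contw {g g' Φ : ℝ → ℝ} {u : ℝ → ℝ → ℝ} {c d : ℝ} {X : Set ℝ} (h : PDE g g' Φ u c d X)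
    {x : ℝ} (hx : x ∈ X) : ContinuousOn (fun t => ww g Φ u t x) (Icc c d) := by
  intro t ht
  obtain ⟨ux, h1, h2⟩ := h.dx t ht x hx
  exact h2.continuousWithinAt

theorem PDE.contt {g g' Φ : ℝ → ℝ} {u : ℝ → ℝ → ℝ} {c d : ℝ} {X : Set ℝ} (h : PDE g g' Φ u c d X)
    {x : ℝ} (hx : x ∈ X) : ContinuousOn (fun t => u t x) (Icc c d) := by
  have := (h.contw hx).sub (continuousOn_const.mul h.hΦ : ContinuousOn (fun t => g x * Φ t) _)
  refine this.congr fun t _ => ?_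
  simp [ww]

set_option maxHeartbeats 3000000 in
theorem PDE.cont {g g' Φ : ℝ → ℝ} {u : ℝ → ℝ → ℝ} {c d : ℝ} {X : Set ℝ} (h : PDE g g' Φ u c d X) :
    ContinuousOn (fun q : ℝ × ℝ => u q.1 q.2) (Icc c d ×ˢ X) := by
  by_contra hcon
  unfold ContinuousOn at hcon
  push Not at hcon
  obtain ⟨⟨t0, x0⟩, ⟨ht0, hx0⟩, hp0⟩ := hcon
  simp only at ht0 hx0
  obtain ⟨ρ, hρ, hball⟩ := Metric.isOpen_iff.1 h.Xo x0 hx0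
  set s := ρ / 4 with hs
  have s0 : 0 < s := by linarith
  set xl := x0 - 2 * s with hxl
  set xr := x0 + 2 * s with hxr
  have hY : Icc xl xr ⊆ X := fun x hx => hball (by
    rw [Metric.mem_ball, Real.dist_eq, abs_lt]
    constructor <;> linarith [hx.1, hx.2])
  have hlr : xl ≤ xr := by linarith
  have hcd := h.cd.le
  let D : Set (ℝ × ℝ) := {q | q ∈ Icc c d ×ˢ X ∧
    ¬ ContinuousWithinAt (fun q : ℝ × ℝ => u q.1 q.2) (Icc c d ×ˢ X) q}
  let B : Set (ℝ × ℝ) := univ ×ˢ Ioo (x0 - s) (x0 + s)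
  have hBo : IsOpen B := isOpen_univ.prod isOpen_Ioo
  let K := closure (D ∩ B)
  have hKsub : K ⊆ Icc c d ×ˢ Icc (x0 - s) (x0 + s) := by
    refine closure_minimal ?_ (isClosed_Icc.prod isClosed_Icc)
    rintro q ⟨hq, hq2⟩
    exact ⟨hq.1.1, Ioo_subset_Icc_self hq2.2⟩
  have hKc : IsCompact K :=
    (isCompact_Icc.prod isCompact_Icc).of_isClosed_subset isClosed_closure hKsub
  have hKne : K.Nonempty := ⟨(t0, x0), subset_closure
    ⟨⟨⟨ht0, hx0⟩, hp0⟩, mem_univ _, by constructor <;> simp [s0]⟩⟩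
  let U : ℝ → ℝ → ℝ := fun t x => u (cl c d t) (cl xl xr x)
  let W : ℝ → ℝ → ℝ := fun t x => ww g Φ u (cl c d t) (cl xl xr x)
  have hU1 : ∀ t, Continuous (U t) := fun t =>
    (h.contx (cl_mem hcd t)).comp_continuous (cl_cont xl xr) (fun x => hY (cl_mem hlr x))
  have hU2 : ∀ x, Continuous fun t => U t x := fun x =>
    (h.contt (hY (cl_mem hlr x))).comp_continuous (cl_cont c d) (fun t => cl_mem hcd t)
  have hW2 : ∀ x, Continuous fun t => W t x := fun x =>
    (h.contw (hY (cl_mem hlr x))).comp_continuous (cl_cont c d) (fun t => cl_mem hcd t)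
  have hW1 : ∀ t, Continuous (W t) := fun t =>
    (((h.contx (cl_mem hcd t)).add (h.co.cont.mul (continuousOn_const (c := Φ (cl c d t)))) :
      ContinuousOn (fun x => ww g Φ u (cl c d t) x) X)).comp_continuous (cl_cont xl xr)
        (fun x => hY (cl_mem hlr x))
  have hKY : ∀ p ∈ K, p.1 ∈ Icc c d ∧ p.2 ∈ Icc xl xr := fun p hp =>
    ⟨(hKsub hp).1, by linarith [(hKsub hp).2.1], by linarith [(hKsub hp).2.2]⟩
  obtain ⟨L, δ, V, hL, hδ, hV, ⟨q0, hq0V, hq0K⟩, HV⟩ := baire_lip hU1 hU2 hW1 hW2 hKc hKne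
    (fun p hp => by
      obtain ⟨ux, h1, h2⟩ := h.dx p.1 (hKY p hp).1 p.2 (hY (hKY p hp).2)
      obtain ⟨L, δ, hδ, H⟩ := cl_lipat hlr (hKY p hp).2 (h1.hasDerivWithinAt (s := Icc xl xr))
      refine ⟨L, δ, hδ, fun y hy => ?_⟩
      have := H y hy
      simp only [U, cl_eq (hKY p hp).1]
      exact this)
    (fun p hp => by
      obtain ⟨ux, h1, h2⟩ := h.dx p.1 (hKY p hp).1 p.2 (hY (hKY p hp).2)
      obtain ⟨L, δ, hδ, H⟩ := cl_lipat hcd (hKY p hp).1 h2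
      refine ⟨L, δ, hδ, fun y hy => ?_⟩
      have := H y hy
      simp only [W, cl_eq (hKY p hp).2]
      exact this)
  obtain ⟨⟨tp, xp⟩, hpV, ⟨hpD, hpB⟩⟩ := mem_closure_iff.1 hq0K V hV hq0V
  have hpK : (tp, xp) ∈ K := subset_closure ⟨hpD, hpB⟩
  apply hpD.2
  obtain ⟨⟨htp, hxp⟩, -⟩ := hpD
  simp only at htp hxp
  obtain ⟨r, hr, hrV⟩ := Metric.isOpen_iff.1 (hV.inter hBo) (tp, xp) ⟨hpV, hpB⟩
  set r' := min (r / 2) (δ / 3) with hr'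
  have r0 : 0 < r' := lt_min (by linarith) (by linarith)
  have r1 : r' < r := by have := min_le_left (r / 2) (δ / 3); linarith
  have r2 : 3 * r' ≤ δ := by have := min_le_right (r / 2) (δ / 3); linarith
  set a := max c (tp - r') with ha
  set b := min d (tp + r') with hb
  have hTs : Icc a b ⊆ Icc c d := Icc_subset_Icc (le_max_left _ _) (min_le_left _ _)
  have hT1 : ∀ t ∈ Icc a b, |t - tp| ≤ r' := fun t ht => by
    have k1 := (le_max_right c (tp - r')).trans ht.1
    have k2 := ht.2.trans (min_le_right d (tp + r'))
    rw [abs_le]; constructor <;> linarith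
  have hX1 : ∀ x ∈ Icc (xp - r') (xp + r'), |x - xp| ≤ r' := fun t ht => by
    rw [abs_le]; constructor <;> linarith [ht.1, ht.2]
  have hbox : ∀ t ∈ Icc a b, ∀ x ∈ Icc (xp - r') (xp + r'), (t, x) ∈ V ∩ B := by
    intro t ht x hx
    apply hrV
    rw [Metric.mem_ball, Prod.dist_eq, max_lt_iff, Real.dist_eq, Real.dist_eq]
    exact ⟨(hT1 t ht).trans_lt r1, (hX1 x hx).trans_lt r1⟩
  have htab : tp ∈ Icc a b := ⟨max_le htp.1 (by linarith), le_min htp.2 (by linarith)⟩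
  have hxab : xp ∈ Icc (xp - r') (xp + r') := ⟨by linarith, by linarith⟩
  have hab : a < b := by
    rw [ha, hb]
    apply max_lt
    · exact lt_min h.cd (by linarith [htp.1])
    · exact lt_min (by linarith [htp.2]) (by linarith)
  have hXs : Icc (xp - r') (xp + r') ⊆ Icc xl xr := fun x hx => by
    have := (hbox tp htab x hx).2.2
    exact ⟨by linarith [this.1], by linarith [this.2]⟩
  have hUu : ∀ t ∈ Icc a b, ∀ x ∈ Icc (xp - r') (xp + r'), U t x = u t x := fun t ht x hx => by
    simp only [U, cl_eq (hTs ht), cl_eq (hXs hx)]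
  have hWw : ∀ t ∈ Icc a b, ∀ x ∈ Icc (xp - r') (xp + r'), W t x = ww g Φ u t x := fun t ht x hx => by
    simp only [W, cl_eq (hTs ht), cl_eq (hXs hx)]
  have hAmb : Amb g g' Φ u a b (xp - r') (xp + r') K tp xp :=
    { ab := hab
      ef := by linarith
      co := h.co.mono (hXs.trans hY)
      hΦ := h.hΦ.mono hTs
      loc := fun t ht x hx => h.loc ⟨(hTs (left_mem_Icc.2 hab.le)).1.trans_lt ht.1,
        ht.2.trans_le (hTs (right_mem_Icc.2 hab.le)).2⟩ (hY (hXs (Ioo_subset_Icc_self hx)))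
      s1 := fun t ht => (h.contx (hTs ht)).mono (hXs.trans hY)
      s2 := fun x hx => (h.contt (hY (hXs hx))).mono hTs
      hA := isClosed_closure
      hAc := by
        rintro ⟨t, x⟩ ⟨ht, hx⟩ hn
        by_contra hc
        refine hn (subset_closure ⟨⟨⟨hTs ht, hY (hXs hx)⟩, fun hc' => hc ?_⟩, (hbox t ht x hx).2⟩)
        exact hc'.mono (prod_mono hTs (hXs.trans hY))
      ht := htab
      hx := hxab
      hp := hpK
      hβ := by
        intro ε hε
        obtain ⟨δ1, hδ1, HΦ⟩ := Metric.continuousWithinAt_iff.1 (h.hΦ tp htp) (ε / 4) (by linarith)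
        refine ⟨min δ1 (ε / (8 * (L + 1))), lt_min hδ1 (by positivity), ?_⟩
        intro t ht x hx hK' h1 h2
        have k1 := (lt_min_iff.1 h1).1
        have k2 := (lt_min_iff.1 h1).2
        have k3 := (lt_min_iff.1 h2).2
        have hΦd : ∀ s ∈ Icc a b, |s - tp| < δ1 → |Φ s - Φ tp| ≤ ε / 4 := fun s hs hs' => by
          have := HΦ (x := s) (hTs hs) (by rwa [Real.dist_eq])
          rw [Real.dist_eq] at this; exact this.le
        have hLl : ∀ z, z < ε / (8 * (L + 1)) → L * z ≤ ε / 8 := fun z hz => by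
          have hz' : z * (8 * (L + 1)) < ε := by rwa [lt_div_iff₀ (by positivity)] at hz
          by_cases hz0 : 0 ≤ z
          · nlinarith
          · nlinarith
        have hVp := HV (tp, xp) ⟨hpV, hpK⟩
        have hVq := HV (t, x) ⟨(hbox t ht x hx).1, hK'⟩
        simp only at hVp hVq
        have hg1 := h.co.b0 x (hY (hXs hx))
        -- from p to (tp, x)
        have j1 : |u tp x - u tp xp| ≤ ε / 8 := by
          have := hVp.1 x (by linarith [hX1 x hx])
          rw [hUu tp htab x hx, hUu tp htab xp hxab] at this
          exact this.trans (hLl _ k3)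
        -- along the vertical line through (t, x)
        have j2 : ∀ s ∈ Icc a b, |s - tp| < min δ1 (ε / (8 * (L + 1))) →
            |u s x - u t x| ≤ 2 * (ε / 8) + ε / 2 := by
          intro s hs hs'
          have m1 := abs_sub_le s tp t
          have m2 := hT1 s hs
          have m3 := hT1 t ht
          rw [abs_sub_comm tp t] at m1
          have := hVq.2 s (by linarith)
          rw [hWw s hs x hx, hWw t ht x hx] at this
          have m4 := hLl _ (lt_min_iff.1 hs').2
          have m5 := hLl _ k2
          have m6 : |ww g Φ u s x - ww g Φ u t x| ≤ 2 * (ε / 8) := by nlinarith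
          have m7 := hΦd s hs (lt_min_iff.1 hs').1
          have m8 := hΦd t ht k1
          have m9 : |g x * (Φ s - Φ t)| ≤ ε / 2 := by
            rw [abs_mul]
            have := abs_sub_le (Φ s) (Φ tp) (Φ t)
            rw [abs_sub_comm (Φ tp)] at this
            nlinarith [abs_nonneg (g x), abs_nonneg (Φ s - Φ t)]
          have : u s x - u t x = (ww g Φ u s x - ww g Φ u t x) - g x * (Φ s - Φ t) := by
            simp only [ww]; ring
          rw [this]
          exact (abs_sub _ _).trans (by linarith)
        have hm0 : 0 < min δ1 (ε / (8 * (L + 1))) := lt_min hδ1 (by positivity)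
        -- sharper estimate from (tp, x) to (t, x)
        have j3 : |u tp x - u t x| ≤ ε / 8 + ε / 4 := by
          have m3 := hT1 t ht
          have := hVq.2 tp (by rw [abs_sub_comm]; linarith)
          rw [hWw tp htab x hx, hWw t ht x hx, abs_sub_comm tp t] at this
          have m5 := hLl _ k2
          have m8 := hΦd t ht k1
          have m9 : |g x * (Φ tp - Φ t)| ≤ ε / 4 := by
            rw [abs_mul, abs_sub_comm (Φ tp)]
            nlinarith [abs_nonneg (g x), abs_nonneg (Φ t - Φ tp)]
          have : u tp x - u t x = (ww g Φ u tp x - ww g Φ u t x) - g x * (Φ tp - Φ t) := by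
            simp only [ww]; ring
          rw [this]
          exact (abs_sub _ _).trans (by linarith)
        refine ⟨fun y hy hyr => ?_, fun s hs hsr => ?_⟩
        · have m1 := abs_sub_le y xp x
          rw [abs_sub_comm xp x] at m1
          have := hVq.1 y (by linarith [hX1 x hx, hX1 y hy])
          rw [hUu t ht y hy, hUu t ht x hx] at this
          have m2 := hLl _ (lt_min_iff.1 hyr).2
          have m3 := hLl _ k3
          have m4 : |u t y - u t x| ≤ 2 * (ε / 8) := by nlinarith
          have : u t y - u tp xp = (u t y - u t x) - (u tp x - u t x) + (u tp x - u tp xp) := by ring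
          rw [this]
          refine (abs_add_le _ _).trans ?_
          have := abs_sub (u t y - u t x) (u tp x - u t x)
          linarith
        · -- use the point (tp, x) as an intermediate
          have m1 := hΦd s hs (lt_min_iff.1 hsr).1
          have m9 : |g x * (Φ s - Φ tp)| ≤ ε / 4 := by
            rw [abs_mul]
            nlinarith [abs_nonneg (g x), abs_nonneg (Φ s - Φ tp)]
          have q1 := hVq.2 s (by
            have m1 := abs_sub_le s tp t
            rw [abs_sub_comm tp t] at m1
            linarith [hT1 s hs, hT1 t ht])
          have q2 := hVq.2 tp (by rw [abs_sub_comm]; linarith [hT1 t ht])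
          rw [hWw s hs x hx, hWw t ht x hx] at q1
          rw [hWw tp htab x hx, hWw t ht x hx, abs_sub_comm tp t] at q2
          have m1 := abs_sub_le s tp t
          rw [abs_sub_comm tp t] at m1
          have m4 := hLl _ (lt_min_iff.1 hsr).2
          have m5 := hLl _ k2
          have m6 : |ww g Φ u s x - ww g Φ u t x| ≤ 2 * (ε / 8) := by nlinarith
          have : u s x - u tp xp = (ww g Φ u s x - ww g Φ u t x) - (ww g Φ u tp x - ww g Φ u t x)
              - g x * (Φ s - Φ tp) + (u tp x - u tp xp) := by
            simp only [ww]; ring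
          rw [this]
          refine (abs_add_le _ _).trans ?_
          have n1 := abs_sub ((ww g Φ u s x - ww g Φ u t x) - (ww g Φ u tp x - ww g Φ u t x))
            (g x * (Φ s - Φ tp))
          have n2 := abs_sub (ww g Φ u s x - ww g Φ u t x) (ww g Φ u tp x - ww g Φ u t x)
          linarith }
  refine (hAmb.cont (by linarith) (by linarith)).mono_of_mem_nhdsWithin ?_
  have : Ioo (tp - r') (tp + r') ×ˢ Ioo (xp - r') (xp + r') ∈ 𝓝 (tp, xp) :=
    prod_mem_nhds (Ioo_mem_nhds (by linarith) (by linarith)) (Ioo_mem_nhds (by linarith) (by linarith))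
  filter_upwards [self_mem_nhdsWithin, mem_nhdsWithin_of_mem_nhds this] with q hq hq2
  exact ⟨⟨max_le hq.1.1 hq2.1.1.le, le_min hq.1.2 hq2.1.2.le⟩, Ioo_subset_Icc_self hq2.2⟩

theorem trace {g g' Φ : ℝ → ℝ} {u : ℝ → ℝ → ℝ} {c h x1 x2 ε M k xs : ℝ}
    (hh : 0 < h) (hh1 : 2 * h ≤ 1) (he : 0 < ε) (hMn : 0 ≤ M)
    (co : Coef g g' (Icc x1 x2)) (hΦ : ContinuousOn Φ (Icc c (c + 2 * h)))
    (hu : ContinuousOn (fun q : ℝ × ℝ => u q.1 q.2) (Icc c (c + 2 * h) ×ˢ Icc x1 x2))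
    (hM : ∀ t ∈ Icc c (c + 2 * h), ∀ x ∈ Icc x1 x2, |u t x| ≤ M)
    (hk : ∀ t ∈ Icc c (c + 2 * h), |Φ t| ≤ k) (hke : k * (1 + M) ≤ ε) (hΦ0 : Φ c = 0)
    (loc : ∀ t ∈ Ioo c (c + 2 * h), ∀ x ∈ Ioo x1 x2, Loc g Φ u t x)
    (h1 : x1 + h * (4 * ε + 3 * (M + k)) < xs) (h2 : xs < x2 - h * (4 * ε + 3 * (M + k))) :
    ∃ xo ∈ Icc x1 x2, |xo - (xs - h * ww g Φ u (c + h) xs)| ≤ 4 * ε * h ∧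
      |u c xo - ww g Φ u (c + h) xs| ≤ 4 * ε * h := by
  have hcm : c ∈ Icc c (c + 2 * h) := ⟨le_rfl, by linarith⟩
  have hkn : 0 ≤ k := (abs_nonneg _).trans (hk c hcm)
  have hpos : 0 < h * (4 * ε + 3 * (M + k)) := by positivity
  have hxs : xs ∈ Icc x1 x2 := ⟨by linarith, by linarith⟩
  set ws := ww g Φ u (c + h) xs with hws
  have hwb : ∀ t ∈ Icc c (c + 2 * h), ∀ x ∈ Icc x1 x2, |ww g Φ u t x| ≤ M + k := by
    intro t ht x hx
    have e1 := ww_sub (u := u) (co.b0 x hx) (hk t ht)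
    have e2 := hM t ht x hx
    have := abs_sub_abs_le_abs_sub (ww g Φ u t x) (u t x)
    linarith
  have hwsb : |ws| ≤ M + k := hwb _ ⟨by linarith, by linarith⟩ _ hxs
  let ζ : ℝ → ℝ → ℝ := fun t x => x - (t - c) * ww g Φ u t x - (xs - h * ws)
  let f1 : ℝ → ℝ → ℝ := fun t x => ζ t x + 2 * ε * (2 * h - (t - c))
  let f2 : ℝ → ℝ → ℝ := fun t x => -ζ t x + 2 * ε * (2 * h - (t - c))
  let f3 : ℝ → ℝ → ℝ := fun t x => (ww g Φ u t x - ws) + 2 * ε * (2 * h - (t - c))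
  let f4 : ℝ → ℝ → ℝ := fun t x => -(ww g Φ u t x - ws) + 2 * ε * (2 * h - (t - c))
  have hwc : ContinuousOn (fun q : ℝ × ℝ => ww g Φ u q.1 q.2) (Icc c (c + 2 * h) ×ˢ Icc x1 x2) :=
    ww_cont co.cont hΦ subset_rfl hu
  have hf : ∀ t x, 0 < pp f1 t x * pp f2 t x * pp f3 t x * pp f4 t x →
      0 < f1 t x ∧ 0 < f2 t x ∧ 0 < f3 t x ∧ 0 < f4 t x := by
    intro t x hP
    have a4 := pos_of_mul_pos_right hP
      (mul_nonneg (mul_nonneg (pp_nonneg f1 t x) (pp_nonneg f2 t x)) (pp_nonneg f3 t x))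
    have b3 := pos_of_mul_pos_left hP (pp_nonneg f4 t x)
    have a3 := pos_of_mul_pos_right b3 (mul_nonneg (pp_nonneg f1 t x) (pp_nonneg f2 t x))
    have b2 := pos_of_mul_pos_left b3 (pp_nonneg f3 t x)
    have a2 := pos_of_mul_pos_right b2 (pp_nonneg f1 t x)
    have a1 := pos_of_mul_pos_left b2 (pp_nonneg f2 t x)
    exact ⟨pp_pos a1, pp_pos a2, pp_pos a3, pp_pos a4⟩
  by_contra hcon
  push Not at hcon
  have hlat : ∀ t ∈ Icc c (c + 2 * h), ∀ x ∈ Icc x1 x2, 0 < f1 t x → 0 < f2 t x → x1 < x ∧ x < x2 := by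
    intro t ht x hx a1 a2
    simp only [f1, f2, ζ] at a1 a2
    have e1 := abs_le.1 (hwb t ht x hx)
    have e2 := abs_le.1 hwsb
    have e3 : 0 ≤ t - c := by linarith [ht.1]
    have e4 : t - c ≤ 2 * h := by linarith [ht.2]
    have e5 : |(t - c) * ww g Φ u t x| ≤ 2 * h * (M + k) := by
      rw [abs_mul, abs_of_nonneg e3]
      exact mul_le_mul e4 (hwb t ht x hx) (abs_nonneg _) (by linarith)
    have e6 : |h * ws| ≤ h * (M + k) := by
      rw [abs_mul, abs_of_nonneg hh.le]
      exact mul_le_mul_of_nonneg_left hwsb hh.le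
    have e5 := abs_le.1 e5
    have e6 := abs_le.1 e6
    have e7 : 2 * ε * (2 * h - (t - c)) ≤ 4 * ε * h := by nlinarith
    constructor <;> nlinarith
  have hmp := mp2 (c := c) (d := c + 2 * h) (e := x1) (f := x2)
    (P := fun t x => pp f1 t x * pp f2 t x * pp f3 t x * pp f4 t x) ?_ ?_ ?_ ?_ ?_ ?_
    (c + h) ⟨by linarith, by linarith⟩ xs hxs
  · have q1 : f1 (c + h) xs = 2 * ε * h := by simp only [f1, ζ, ← hws]; ring
    have q2 : f2 (c + h) xs = 2 * ε * h := by simp only [f2, ζ, ← hws]; ring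
    have q3 : f3 (c + h) xs = 2 * ε * h := by simp only [f3, ← hws]; ring
    have q4 : f4 (c + h) xs = 2 * ε * h := by simp only [f4, ← hws]; ring
    have qp : 0 < 2 * ε * h := by positivity
    rw [pp_eq (by rw [q1]; exact qp), pp_eq (by rw [q2]; exact qp), pp_eq (by rw [q3]; exact qp),
      pp_eq (by rw [q4]; exact qp), q1, q2, q3, q4] at hmp
    have : 0 < 2 * ε * h * (2 * ε * h) * (2 * ε * h) * (2 * ε * h) := by positivity
    linarith
  · have hz : ContinuousOn (fun q : ℝ × ℝ => ζ q.1 q.2) (Icc c (c + 2 * h) ×ˢ Icc x1 x2) := by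
      simp only [ζ]
      exact (continuousOn_snd.sub ((continuousOn_fst.sub continuousOn_const).mul hwc)).sub
        continuousOn_const
    have hr : ContinuousOn (fun q : ℝ × ℝ => 2 * ε * (2 * h - (q.1 - c)))
      (Icc c (c + 2 * h) ×ˢ Icc x1 x2) := by fun_prop
    exact (((pp_cont (f := f1) (hz.add hr)).mul (pp_cont (f := f2) (hz.neg.add hr))).mul
      (pp_cont (f := f3) ((hwc.sub continuousOn_const).add hr))).mul
      (pp_cont (f := f4) ((hwc.sub continuousOn_const).neg.add hr))
  · intro x hx
    by_contra hP
    push Not at hP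
    obtain ⟨a1, a2, a3, a4⟩ := hf _ _ hP
    have hw0 : ww g Φ u c x = u c x := by simp [ww, hΦ0]
    simp only [f1, f2, f3, f4, ζ, hw0] at a1 a2 a3 a4
    have := hcon x hx (abs_le.2 ⟨by nlinarith, by nlinarith⟩)
    have h3 : |u c x - ws| ≤ 4 * ε * h := abs_le.2 ⟨by nlinarith, by nlinarith⟩
    linarith
  · intro x hx
    by_contra hP
    push Not at hP
    obtain ⟨a1, a2, a3, a4⟩ := hf _ _ hP
    simp only [f3, f4] at a3 a4
    nlinarith
  · intro t ht
    by_contra hP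
    push Not at hP
    obtain ⟨a1, a2, a3, a4⟩ := hf _ _ hP
    exact lt_irrefl _ (hlat t ht x1 ⟨le_rfl, by linarith⟩ a1 a2).1
  · intro t ht
    by_contra hP
    push Not at hP
    obtain ⟨a1, a2, a3, a4⟩ := hf _ _ hP
    exact lt_irrefl _ (hlat t ht x2 ⟨by linarith, le_rfl⟩ a1 a2).2
  · intro t ht x hx hP
    refine ⟨u t x, ?_⟩
    have hxI := Ioo_subset_Icc_self hx
    have htI := Ioo_subset_Icc_self ht
    obtain ⟨wt, wx, ht', hx', hw⟩ := (loc t ht x hx).w (co.hd x hxI)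
    have b1 := hM t htI x hxI
    have b2 := hk t htI
    have b3 : |u t x * g' x * Φ t| ≤ k * M := by
      rw [abs_mul, abs_mul]
      have j1 : |u t x| * |g' x| ≤ M * 1 := mul_le_mul b1 (co.b1 x hxI) (abs_nonneg _) hMn
      have j2 := mul_le_mul j1 b2 (abs_nonneg _) (by linarith)
      linarith
    have b4 : |g x * Φ t| ≤ k := by
      rw [abs_mul]
      nlinarith [co.b0 x hxI, abs_nonneg (g x), abs_nonneg (Φ t)]
    have e3 : 0 ≤ t - c := by linarith [ht.1]
    have e4 : t - c ≤ 1 := by linarith [ht.2]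
    have b5 : |(t - c) * (u t x * g' x * Φ t)| ≤ k * M := by
      rw [abs_mul, abs_of_nonneg e3]
      have := abs_nonneg (u t x * g' x * Φ t)
      nlinarith
    have b3' := abs_le.1 b3
    have b4' := abs_le.1 b4
    have b5' := abs_le.1 b5
    have hst : HasDerivAt (fun s : ℝ => s - c) 1 t := (hasDerivAt_id t).sub_const c
    have hr : HasDerivAt (fun s : ℝ => 2 * ε * (2 * h - (s - c))) (2 * ε * (-1)) t :=
      (hst.const_sub (2 * h)).const_mul (2 * ε)
    have hζt : HasDerivAt (fun s => ζ s x) (0 - (1 * ww g Φ u t x + (t - c) * wt)) t :=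
      ((hasDerivAt_const t x).sub (hst.mul ht')).sub_const _
    have hζx : HasDerivAt (fun y => ζ t y) (1 - (t - c) * wx) x :=
      ((hasDerivAt_id x).sub (hx'.const_mul (t - c))).sub_const _
    have hwe : ww g Φ u t x = u t x + g x * Φ t := rfl
    have hz : 0 - (1 * ww g Φ u t x + (t - c) * wt) + u t x * (1 - (t - c) * wx)
        = - (g x * Φ t) - (t - c) * (u t x * g' x * Φ t) := by
      rw [hwe, ← hw]; ring
    refine prod4 ?_ ?_ ?_ ?_ hP
    · refine ⟨_, _, hζt.add hr, hζx.add_const _, ?_⟩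
      linarith
    · refine ⟨_, _, hζt.neg.add hr, hζx.neg.add_const _, ?_⟩
      linarith
    · refine ⟨_, _, (ht'.sub_const ws).add hr, (hx'.sub_const ws).add_const _, ?_⟩
      linarith
    · refine ⟨_, _, (ht'.sub_const ws).neg.add hr, (hx'.sub_const ws).neg.add_const _, ?_⟩
      linarith

set_option maxHeartbeats 2000000 in
theorem char_left {g g' Φ : ℝ → ℝ} {u : ℝ → ℝ → ℝ} {y : ℝ → ℝ} {c d : ℝ} {X : Set ℝ}
    (h : PDE g g' Φ u c d X) (hy : y c ∈ X) (hΦ0 : Φ c = 0)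
    (hyd : HasDerivWithinAt y (u c (y c)) (Icc c d) c) :
    HasDerivWithinAt (fun t => ww g Φ u t (y t)) 0 (Icc c d) c := by
  have hcd := h.cd
  have hcm : c ∈ Icc c d := ⟨le_rfl, hcd.le⟩
  obtain ⟨ρ, hρ, hball⟩ := Metric.isOpen_iff.1 h.Xo _ hy
  set x0 := y c with hx0
  set u0 := u c x0 with hu0
  have hsub : Icc (x0 - ρ / 2) (x0 + ρ / 2) ⊆ X := by
    intro x hx
    refine hball ?_
    rw [Metric.mem_ball, Real.dist_eq, abs_lt]
    constructor <;> linarith [hx.1, hx.2]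
  have hcont := h.cont.mono (prod_mono subset_rfl hsub : Icc c d ×ˢ _ ⊆ _)
  obtain ⟨M, hM⟩ := (isCompact_Icc.prod isCompact_Icc).exists_bound_of_continuousOn hcont
  have hM' : ∀ t ∈ Icc c d, ∀ x ∈ Icc (x0 - ρ / 2) (x0 + ρ / 2), |u t x| ≤ M :=
    fun t ht x hx => hM (t, x) ⟨ht, hx⟩
  have hx0m : x0 ∈ Icc (x0 - ρ / 2) (x0 + ρ / 2) := ⟨by linarith, by linarith⟩
  have hM0 : 0 ≤ M := (abs_nonneg _).trans (hM' c hcm x0 hx0m)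
  have hu0M : |u0| ≤ M := hM' c hcm x0 hx0m
  obtain ⟨ux, hux, -⟩ := h.dx c hcm x0 hy
  obtain ⟨L0, hL0⟩ := hux.hasFDerivAt.isBigO_sub.bound
  obtain ⟨r, hr, hL⟩ := Metric.eventually_nhds_iff.1 hL0
  set L := |L0| with hLd
  have hL' : ∀ x, |x - x0| < r → |u c x - u0| ≤ L * |x - x0| := by
    intro x hx
    have := hL (y := x) (by rwa [Real.dist_eq])
    rw [Real.norm_eq_abs, Real.norm_eq_abs] at this
    exact this.trans (mul_le_mul_of_nonneg_right (le_abs_self _) (abs_nonneg _))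
  have hLn : 0 ≤ L := abs_nonneg _
  have hw0 : ww g Φ u c x0 = u0 := by simp [ww, hΦ0, hu0]
  rw [hasDerivWithinAt_iff_isLittleO, Asymptotics.isLittleO_iff]
  intro η hη
  set ε := η / (2 * (4 + 5 * L)) with hεd
  have hε : 0 < ε := by positivity
  have hεη : 2 * (4 + 5 * L) * ε = η := by rw [hεd]; field_simp
  set k := min 1 (ε / (1 + M)) with hk
  have hkp : 0 < k := lt_min one_pos (by positivity)
  have hk1 : k ≤ 1 := min_le_left _ _
  have hke : k * (1 + M) ≤ ε := by
    calc k * (1 + M) ≤ ε / (1 + M) * (1 + M) :=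
          mul_le_mul_of_nonneg_right (min_le_right _ _) (by linarith)
      _ = ε := by field_simp
  obtain ⟨τ, hτ, hτd, hΦτ⟩ := nice_right hcd h.hΦ hkp
  obtain hyo := (Asymptotics.isLittleO_iff.1 (hasDerivWithinAt_iff_isLittleO.1 hyd)) hε
  -- smallness conditions
  set Q := 4 * ε + 3 * (M + k) + 5 * ε + 2 * M + 2 with hQ
  have hQp : 0 < Q := by positivity
  have ev : ∀ᶠ t in 𝓝[Icc c d] c, |t - c| < min (min (τ / 2) (1 / 2)) (min (min (ρ / (8 * Q)) (r / (2 * Q))) (1 / (2 * (L + 1)))) := by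
    refine nhdsWithin_le_nhds ?_
    refine Metric.eventually_nhds_iff.2 ⟨_, ?_, fun {t} ht => by rwa [Real.dist_eq] at ht⟩
    positivity
  filter_upwards [hyo, ev, self_mem_nhdsWithin] with t h1 h2 ht
  rw [hw0]
  simp only [smul_zero, sub_zero]
  rcases ht.1.eq_or_lt with rfl | hct
  · rw [← hx0, hw0]; simp
  rw [abs_of_pos (by linarith : 0 < t - c)] at h2
  obtain ⟨s, hs⟩ : ∃ s, s = t - c := ⟨_, rfl⟩
  rw [← hs] at h2
  have hsp : 0 < s := by rw [hs]; linarith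
  have k1 := h2.trans_le ((min_le_left _ _).trans (min_le_left _ _))
  have k2 := h2.trans_le ((min_le_left _ _).trans (min_le_right _ _))
  have k3 := h2.trans_le ((min_le_right _ _).trans ((min_le_left _ _).trans (min_le_left _ _)))
  have k4 := h2.trans_le ((min_le_right _ _).trans ((min_le_left _ _).trans (min_le_right _ _)))
  have k5 := h2.trans_le ((min_le_right _ _).trans (min_le_right _ _))
  rw [lt_div_iff₀ (by positivity)] at k3 k4 k5
  have hT : Icc c (c + 2 * s) ⊆ Icc c d := Icc_subset_Icc_right (by linarith)
  have htc : c + s = t := by rw [hs]; ring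
  have hys : |y t - x0 - s * u0| ≤ ε * s := by
    rw [Real.norm_eq_abs, Real.norm_eq_abs, abs_of_pos (by linarith : 0 < t - c), smul_eq_mul,
      ← hs, ← hx0] at h1
    exact h1
  have hys' := abs_le.1 hys
  have hsu : |s * u0| ≤ s * M := by
    rw [abs_mul, abs_of_pos hsp]; exact mul_le_mul_of_nonneg_left hu0M hsp.le
  have hsu' := abs_le.1 hsu
  have hsQ : s * (4 * ε + 3 * (M + k)) + ε * s + s * M ≤ s * Q := by rw [hQ]; nlinarith
  obtain ⟨xo, hxo, ha, hb⟩ := trace (g := g) (g' := g') (Φ := Φ) (u := u) (c := c) (h := s)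
    (x1 := x0 - ρ / 2) (x2 := x0 + ρ / 2) (ε := ε) (M := M) (k := k) (xs := y t) hsp (by linarith) hε hM0
    (h.co.mono hsub) (h.hΦ.mono hT) (hcont.mono (prod_mono hT subset_rfl))
    (fun t ht x hx => hM' t (hT ht) x hx)
    (fun t ht => by
      have := hΦτ t ⟨ht.1, by linarith [ht.2]⟩
      rwa [hΦ0, sub_zero] at this) hke hΦ0
    (fun t ht x hx => h.loc ⟨ht.1, by linarith [ht.2]⟩ (hsub (Ioo_subset_Icc_self hx)))
    (by linarith) (by linarith)
  rw [htc] at ha hb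
  have hyt : y t ∈ Icc (x0 - ρ / 2) (x0 + ρ / 2) := ⟨by nlinarith, by nlinarith⟩
  set ws := ww g Φ u t (y t) with hws
  have hwsb : |ws| ≤ M + k := by
    have e0 := hΦτ t ⟨ht.1, by linarith⟩
    rw [hΦ0, sub_zero] at e0
    have e1 := ww_sub (u := u) (h.co.b0 _ (hsub hyt)) e0
    have e2 := hM' t ht _ hyt
    have := abs_sub_abs_le_abs_sub (ww g Φ u t (y t)) (u t (y t))
    linarith
  have hdist : |xo - x0| ≤ 5 * ε * s + s * |ws - u0| := by
    have e : xo - x0 = (xo - (y t - s * ws)) + (y t - x0 - s * u0) + s * (-(ws - u0)) := by ring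
    rw [e]
    refine (abs_add_three _ _ _).trans ?_
    rw [abs_mul, abs_neg, abs_of_pos hsp]
    linarith
  have hwu : |ws - u0| ≤ 2 * M + k := (abs_sub _ _).trans (by linarith)
  have hxr : |xo - x0| < r := by
    have : s * |ws - u0| ≤ s * (2 * M + k) := mul_le_mul_of_nonneg_left hwu hsp.le
    have : s * (5 * ε + (2 * M + k)) ≤ s * Q := mul_le_mul_of_nonneg_left (by rw [hQ]; linarith) hsp.le
    linarith
  have h3 := hL' xo hxr
  have h4 : |ws - u0| ≤ 4 * ε * s + L * |xo - x0| := by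
    have := abs_sub_le ws (u c xo) u0
    rw [abs_sub_comm ws (u c xo)] at this
    linarith
  have h5 : L * |xo - x0| ≤ L * (5 * ε * s + s * |ws - u0|) := mul_le_mul_of_nonneg_left hdist hLn
  have h6 : s * L * |ws - u0| ≤ 1 / 2 * |ws - u0| :=
    mul_le_mul_of_nonneg_right (by linarith) (abs_nonneg _)
  rw [Real.norm_eq_abs, Real.norm_eq_abs, abs_of_pos (by linarith : 0 < t - c), ← hs, ← hεη]
  linarith

theorem ole_num {s δ Δ k M C U U' G G' H H' F : ℝ} (hs0' : 0 < s) (hs1 : s ≤ 1) (hk0 : 0 ≤ k)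
    (hM0 : 0 ≤ M) (hC0 : 0 ≤ C) (hCs : C * s ≤ 1 / 2) (hC : 2 * k + k * (k + M) < 2 * C)
    (hδ0 : 0 < δ) (a1 : 0 < (s - C * s ^ 2) * Δ - δ) (q1 : |U| ≤ M) (q3 : |F| ≤ k)
    (q4 : |G' - G| ≤ δ) (q5 : |H' - H| ≤ δ) (q0 : |H'| ≤ 1) (hud : U' - U = Δ - F * (G' - G)) :
    (1 - 2 * C * s) * Δ + (s - C * s ^ 2) * (U' * H' * F - U * H * F) - (U' - U) < 0 := by
  have hcoef : 0 < s - C * s ^ 2 := by nlinarith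
  have hcoef' : s - C * s ^ 2 ≤ s := by nlinarith [mul_nonneg hC0 (sq_nonneg s)]
  have hΔ0 : 0 < Δ := by
    by_contra hneg
    push Not at hneg
    have : (s - C * s ^ 2) * Δ ≤ 0 := mul_nonpos_of_nonneg_of_nonpos hcoef.le hneg
    linarith
  have hδΔ : δ ≤ s * Δ := by
    have : (s - C * s ^ 2) * Δ ≤ s * Δ := mul_le_mul_of_nonneg_right hcoef' hΔ0.le
    linarith
  have q6 : |F * (G' - G)| ≤ k * δ := by
    rw [abs_mul]; exact mul_le_mul q3 q4 (abs_nonneg _) hk0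
  have q6' := abs_le.1 q6
  have q7 : |U' - U| ≤ Δ + k * δ := by
    rw [hud]; exact abs_le.2 ⟨by linarith, by linarith⟩
  have q8 : |U' * H' - U * H| ≤ Δ + k * δ + M * δ := by
    have e : U' * H' - U * H = (U' - U) * H' + U * (H' - H) := by ring
    rw [e]
    refine (abs_add_le _ _).trans ?_
    rw [abs_mul, abs_mul]
    have j1 := mul_le_mul q7 q0 (abs_nonneg _) (by positivity)
    have j2 := mul_le_mul q1 q5 (abs_nonneg _) hM0
    linarith
  have q9 : U' * H' * F - U * H * F ≤ k * (Δ + k * δ + M * δ) := by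
    have e : U' * H' * F - U * H * F = F * (U' * H' - U * H) := by ring
    rw [e]
    refine (le_abs_self _).trans ?_
    rw [abs_mul]
    exact mul_le_mul q3 q8 (abs_nonneg _) hk0
  have r1 : (s - C * s ^ 2) * (U' * H' * F - U * H * F)
      ≤ s * (k * (Δ + k * δ + M * δ)) := by
    have j1 := mul_le_mul_of_nonneg_left q9 hcoef.le
    have j2 : (s - C * s ^ 2) * (k * (Δ + k * δ + M * δ)) ≤ s * (k * (Δ + k * δ + M * δ)) :=
      mul_le_mul_of_nonneg_right hcoef' (by positivity)
    linarith
  have r2 : s * (k * ((k + M) * δ)) ≤ s * (k * ((k + M) * Δ)) := by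
    have : δ ≤ Δ := hδΔ.trans (by nlinarith)
    gcongr
  have r3 : k * δ ≤ k * (s * Δ) := mul_le_mul_of_nonneg_left hδΔ hk0
  have r4 : 0 < s * Δ * (2 * C - (2 * k + k * (k + M))) := by
    have : 0 < 2 * C - (2 * k + k * (k + M)) := by linarith
    positivity
  have r5 : -(k * δ) ≤ U' - U - Δ := by linarith
  linarith

theorem ole_fin {s Δ M C U U' ff A B E wt wx wt' wx' : ℝ} (hf : 0 < ff) (hA : 0 < A) (hB : 0 < B)
    (hE : 0 < E) (q1 : |U| ≤ M) (q2 : |U'| ≤ M)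
    (hDf : (1 - 2 * C * s) * Δ + (s - C * s ^ 2) * ((wt' + U' * wx') - (wt + U * wx)) - (U' - U) < 0)
    (zt : ((((1 - C * (2 * s)) * Δ + (s - C * s ^ 2) * (wt' - wt)) * A + ff * (-(M + 1))) * B
      + ff * A * (-(M + 1))) * E + ff * A * B * (-1) = 0)
    (zx : (((s - C * s ^ 2) * (-wx) - (-1)) * A + ff * 1) * B * E = 0)
    (zx' : (((s - C * s ^ 2) * wx' - 1) * A * B + ff * A * (-1)) * E = 0) : False := by
  have u1 := abs_le.1 q1
  have u2 := abs_le.1 q2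
  have z1 := mul_neg_of_neg_of_pos hDf (by positivity : 0 < A * B * E)
  have z2 : (-(M + 1) + U) * (ff * B * E) < 0 :=
    mul_neg_of_neg_of_pos (by linarith) (by positivity)
  have z3 : (-(M + 1) - U') * (ff * A * E) < 0 :=
    mul_neg_of_neg_of_pos (by linarith) (by positivity)
  have z4 : (-1) * (ff * A * B) < 0 :=
    mul_neg_of_neg_of_pos (by linarith) (by positivity)
  have e : ((1 - 2 * C * s) * Δ + (s - C * s ^ 2) * ((wt' + U' * wx') - (wt + U * wx)) - (U' - U)) * (A * B * E)
    + (-(M + 1) + U) * (ff * B * E) + (-(M + 1) - U') * (ff * A * E) + (-1) * (ff * A * B)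
    = (((((1 - C * (2 * s)) * Δ + (s - C * s ^ 2) * (wt' - wt)) * A + ff * (-(M + 1))) * B
      + ff * A * (-(M + 1))) * E + ff * A * B * (-1))
      + U * ((((s - C * s ^ 2) * (-wx) - (-1)) * A + ff * 1) * B * E)
      + U' * ((((s - C * s ^ 2) * wx' - 1) * A * B + ff * A * (-1)) * E) := by ring
  rw [zt, zx, zx'] at e
  linarith

set_option maxHeartbeats 1000000 in
theorem ole {g g' Φ : ℝ → ℝ} {u : ℝ → ℝ → ℝ} {c S x1 x2 M k C : ℝ}
    (hM0 : 0 ≤ M) (hk0 : 0 ≤ k) (hS1 : S ≤ 1) (hC0 : 0 ≤ C) (hCS : C * S ≤ 1 / 2)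
    (hC : 2 * k + k * (k + M) < 2 * C)
    (co : Coef g g' (Icc x1 x2)) (hΦ : ContinuousOn Φ (Icc c (c + S)))
    (hu : ContinuousOn (fun q : ℝ × ℝ => u q.1 q.2) (Icc c (c + S) ×ˢ Icc x1 x2))
    (hM : ∀ t ∈ Icc c (c + S), ∀ x ∈ Icc x1 x2, |u t x| ≤ M)
    (hk : ∀ t ∈ Icc c (c + S), |Φ t| ≤ k)
    (loc : ∀ t ∈ Ioo c (c + S), ∀ x ∈ Ioo x1 x2, Loc g Φ u t x)
    {t x x' : ℝ} (ht : c < t) (ht' : t < c + S) (hx : x1 + (M + 1) * (t - c) < x) (hxx : x ≤ x')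
    (hx' : x' < x2 - (M + 1) * (t - c)) :
    (t - c) / 2 * (ww g Φ u t x' - ww g Φ u t x) ≤ x' - x := by
  let f : ℝ → ℝ → ℝ → ℝ := fun t x x' =>
    ((t - c) - C * (t - c) ^ 2) * (ww g Φ u t x' - ww g Φ u t x) - (x' - x)
  let A : ℝ → ℝ → ℝ := fun t x => x - x1 - (M + 1) * (t - c)
  let B : ℝ → ℝ → ℝ := fun t x' => x2 - x' - (M + 1) * (t - c)
  let E : ℝ → ℝ := fun t => S - (t - c)
  let P : ℝ → ℝ → ℝ → ℝ := fun t x x' =>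
    max (f t x x') 0 * max (A t x) 0 * max (B t x') 0 * max (E t) 0
  let K : Set (ℝ × ℝ × ℝ) := (Icc c (c + S) ×ˢ Icc x1 x2 ×ˢ Icc x1 x2) ∩ {q | q.2.1 ≤ q.2.2}
  have hsp : 0 < t - c := by linarith
  have hMt : 0 ≤ (M + 1) * (t - c) := by positivity
  have hKc : IsCompact K := (isCompact_Icc.prod (isCompact_Icc.prod isCompact_Icc)).inter_right
    (isClosed_le (by fun_prop) (by fun_prop))
  have hwc : ContinuousOn (fun q : ℝ × ℝ => ww g Φ u q.1 q.2) (Icc c (c + S) ×ˢ Icc x1 x2) :=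
    ww_cont co.cont hΦ subset_rfl hu
  have hw1 : ContinuousOn (fun q : ℝ × ℝ × ℝ => ww g Φ u q.1 q.2.1) K :=
    hwc.comp (f := fun q : ℝ × ℝ × ℝ => (q.1, q.2.1)) (by fun_prop) (fun q hq => ⟨hq.1.1, hq.1.2.1⟩)
  have hw2 : ContinuousOn (fun q : ℝ × ℝ × ℝ => ww g Φ u q.1 q.2.2) K :=
    hwc.comp (f := fun q : ℝ × ℝ × ℝ => (q.1, q.2.2)) (by fun_prop) (fun q hq => ⟨hq.1.1, hq.1.2.2⟩)
  have hPc : ContinuousOn (fun q : ℝ × ℝ × ℝ => P q.1 q.2.1 q.2.2) K := by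
    have c1 : ContinuousOn (fun q : ℝ × ℝ × ℝ => f q.1 q.2.1 q.2.2) K := by
      simp only [f]
      exact ((by fun_prop : ContinuousOn (fun q : ℝ × ℝ × ℝ => (q.1 - c) - C * (q.1 - c) ^ 2) K).mul
        (hw2.sub hw1)).sub (by fun_prop)
    have c2 : ContinuousOn (fun q : ℝ × ℝ × ℝ => A q.1 q.2.1) K := by simp only [A]; fun_prop
    have c3 : ContinuousOn (fun q : ℝ × ℝ × ℝ => B q.1 q.2.2) K := by simp only [B]; fun_prop
    have c4 : ContinuousOn (fun q : ℝ × ℝ × ℝ => E q.1) K := by simp only [E]; fun_prop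
    exact (((c1.sup continuousOn_const).mul (c2.sup continuousOn_const)).mul
      (c3.sup continuousOn_const)).mul (c4.sup continuousOn_const)
  have hmem : (t, x, x') ∈ K :=
    ⟨⟨⟨ht.le, ht'.le⟩, ⟨by simp only; linarith, by simp only; linarith⟩,
      ⟨by simp only; linarith, by simp only; linarith⟩⟩, hxx⟩
  obtain ⟨⟨t0, y, y'⟩, ⟨⟨ht0, hy, hy'⟩, hyy⟩, hmax⟩ := hKc.exists_isMaxOn ⟨_, hmem⟩ hPc
  simp only [mem_ofPred_eq] at ht0 hy hy' hyy
  have hmx : ∀ s z z', s ∈ Icc c (c + S) → z ∈ Icc x1 x2 → z' ∈ Icc x1 x2 → z ≤ z' →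
      P s z z' ≤ P t0 y y' := fun s z z' h1 h2 h3 h4 => hmax (a := (s, z, z')) ⟨⟨h1, h2, h3⟩, h4⟩
  -- the conclusion
  suffices hP : P t x x' ≤ 0 by
    by_contra hcon
    push Not at hcon
    have hf : 0 < f t x x' := by
      simp only [f]
      have hD : 0 < ww g Φ u t x' - ww g Φ u t x := by
        by_contra hneg
        push Not at hneg
        nlinarith
      have : C * (t - c) ^ 2 ≤ (t - c) / 2 := by
        have : C * (t - c) ≤ 1 / 2 := by nlinarith
        nlinarith
      nlinarith
    have hA : 0 < A t x := by simp only [A]; linarith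
    have hB : 0 < B t x' := by simp only [B]; linarith
    have hE : 0 < E t := by simp only [E]; linarith
    simp only [P, max_eq_left hf.le, max_eq_left hA.le, max_eq_left hB.le, max_eq_left hE.le] at hP
    have : 0 < f t x x' * A t x * B t x' * E t := by positivity
    linarith
  by_contra hcon
  push Not at hcon
  have hpos : 0 < P t0 y y' := hcon.trans_le (hmx t x x' hmem.1.1 hmem.1.2.1 hmem.1.2.2 hxx)
  have mpos : ∀ z : ℝ, 0 < max z 0 → 0 < z := fun z hz => by
    rcases lt_max_iff.1 hz with h | h
    · exact h
    · exact absurd h (lt_irrefl _)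
  have nn : ∀ z : ℝ, 0 ≤ max z 0 := fun z => le_max_right _ _
  simp only [P] at hpos
  have a4 := mpos _ (pos_of_mul_pos_right hpos (mul_nonneg (mul_nonneg (nn _) (nn _)) (nn _)))
  have b3 := pos_of_mul_pos_left hpos (nn _)
  have a3 := mpos _ (pos_of_mul_pos_right b3 (mul_nonneg (nn _) (nn _)))
  have b2 := pos_of_mul_pos_left b3 (nn _)
  have a2 := mpos _ (pos_of_mul_pos_right b2 (nn _))
  have a1 := mpos _ (pos_of_mul_pos_left b2 (nn _))
  have i1 : c < t0 := by
    refine lt_of_le_of_ne ht0.1 fun h => ?_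
    subst h
    simp only [f] at a1
    simp at a1
    linarith
  have i2 : t0 < c + S := by simp only [E] at a4; linarith
  have hs0 : 0 < t0 - c := by linarith
  have hMs : 0 ≤ (M + 1) * (t0 - c) := by positivity
  have i3 : x1 < y := by simp only [A] at a2; linarith
  have i4 : y' < x2 := by simp only [B] at a3; linarith
  have i5 : y < y' := by
    refine lt_of_le_of_ne hyy fun h => ?_
    subst h
    simp only [f] at a1
    simp at a1
  have tI : t0 ∈ Ioo c (c + S) := ⟨i1, i2⟩
  obtain ⟨wt, wx, d1, d2, d3⟩ := (loc t0 tI y ⟨i3, i5.trans i4⟩).w (co.hd y hy)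
  obtain ⟨wt', wx', d1', d2', d3'⟩ := (loc t0 tI y' ⟨i3.trans i5, i4⟩).w (co.hd y' hy')
  have hst : HasDerivAt (fun s : ℝ => s - c) 1 t0 := (hasDerivAt_id t0).sub_const c
  have hsq : HasDerivAt (fun s : ℝ => (s - c) ^ 2) (2 * (t0 - c)) t0 := by
    simpa using hst.fun_pow 2
  have ft := ((hst.sub (hsq.const_mul C)).mul (d1'.sub d1)).sub_const (y' - y)
  have fx := ((d2.const_sub (ww g Φ u t0 y')).const_mul ((t0 - c) - C * (t0 - c) ^ 2)).sub
    ((hasDerivAt_id y).const_sub y')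
  have fx' := ((d2'.sub_const (ww g Φ u t0 y)).const_mul ((t0 - c) - C * (t0 - c) ^ 2)).sub
    ((hasDerivAt_id y').sub_const y)
  have At : HasDerivAt (fun s => A s y) (-(M + 1)) t0 := by
    simpa using (hst.const_mul (M + 1)).const_sub (y - x1)
  have Bt : HasDerivAt (fun s => B s y') (-(M + 1)) t0 := by
    simpa using (hst.const_mul (M + 1)).const_sub (x2 - y')
  have Et : HasDerivAt (fun s => E s) (-1) t0 := hst.const_sub S
  have Ax : HasDerivAt (fun z => A t0 z) 1 y := ((hasDerivAt_id y).sub_const x1).sub_const _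
  have Bx' : HasDerivAt (fun z => B t0 z) (-1) y' := ((hasDerivAt_id y').const_sub x2).sub_const _
  have mc : ∀ {F : ℝ → ℝ} {F' z : ℝ}, HasDerivAt F F' z → 0 < F z →
      HasDerivAt (fun s => max (F s) 0) F' z := by
    intro F F' z h1 h2
    refine h1.congr_of_eventuallyEq ?_
    filter_upwards [h1.continuousAt.eventually (lt_mem_nhds h2)] with s hs using max_eq_left hs.le
  have Pt := (((mc (F := fun s => f s y y') ft a1).mul (mc At a2)).mul (mc Bt a3)).mul (mc Et a4)
  have Px := (((mc (F := fun s => f t0 s y') fx a1).mul (mc Ax a2)).mul_const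
    (max (B t0 y') 0)).mul_const (max (E t0) 0)
  have Px' := (((mc (F := fun s => f t0 y s) fx' a1).mul_const (max (A t0 y) 0)).mul
    (mc Bx' a3)).mul_const (max (E t0) 0)
  have lt : IsLocalMax (fun s => P s y y') t0 := by
    filter_upwards [Icc_mem_nhds i1 i2] with s hs using hmx s y y' hs hy hy' hyy
  have lx : IsLocalMax (fun s => P t0 s y') y := by
    filter_upwards [Icc_mem_nhds i3 i5] with s hs using hmx t0 s y' ht0
      ⟨hs.1, hs.2.trans hy'.2⟩ hy' hs.2
  have lx' : IsLocalMax (fun s => P t0 y s) y' := by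
    filter_upwards [Icc_mem_nhds i5 i4] with s hs using hmx t0 y s ht0 hy
      ⟨hy.1.trans hs.1, hs.2⟩ hs.1
  have zt := lt.hasDerivAt_eq_zero Pt
  have zx := lx.hasDerivAt_eq_zero Px
  have zx' := lx'.hasDerivAt_eq_zero Px'
  simp only [Pi.sub_apply, Pi.mul_apply, max_eq_left a1.le, max_eq_left a2.le, max_eq_left a3.le, max_eq_left a4.le] at zt zx zx'
  have hδ0 : 0 < y' - y := by linarith
  have htI := Ioo_subset_Icc_self tI
  have q1 := hM t0 htI y hy
  have q2 := hM t0 htI y' hy'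
  have q3 := hk t0 htI
  have q4 := co.l0 y' hy' y hy
  have q5 := co.l1 y' hy' y hy
  rw [abs_of_pos hδ0] at q4 q5
  have hsS : t0 - c ≤ S := by linarith
  have hCs : C * (t0 - c) ≤ 1 / 2 := (mul_le_mul_of_nonneg_left hsS hC0).trans hCS
  have hud : u t0 y' - u t0 y = (ww g Φ u t0 y' - ww g Φ u t0 y) - Φ t0 * (g y' - g y) := by
    simp only [ww]; ring
  have hDf := ole_num hs0 (hsS.trans hS1) hk0 hM0 hC0 hCs hC hδ0 a1 q1 q3 q4 q5 (co.b1 y' hy') hud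
  rw [← d3, ← d3'] at hDf
  refine ole_fin a1 a2 a3 a4 q1 q2 hDf ?_ ?_ ?_
  · exact zt
  · rw [← zx]
  · rw [← zx']

theorem hdwa_neg {f : ℝ → ℝ} {a t c d : ℝ} (h : HasDerivWithinAt f a (Icc c d) (-t)) :
    HasDerivWithinAt (fun s => -f (-s)) a (Icc (-d) (-c)) t := by
  have h1 : HasDerivWithinAt (fun s : ℝ => -s) (-1) (Icc (-d) (-c)) t :=
    (hasDerivAt_neg t).hasDerivWithinAt
  have := (h.scomp t h1 (fun s hs => neg_mem_Icc' hs)).neg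
  have e : -((-1 : ℝ) • a) = a := by simp
  rw [e] at this
  exact this

theorem PDE.tr {g g' Φ : ℝ → ℝ} {u : ℝ → ℝ → ℝ} {c d : ℝ} {X : Set ℝ} (h : PDE g g' Φ u c d X) :
    PDE g g' (tP Φ) (tu u) (-d) (-c) X where
  cd := by linarith [h.cd]
  Xo := h.Xo
  co := h.co
  hΦ := by
    have := (h.hΦ.comp (f := fun s : ℝ => -s) (s := Icc (-d) (-c)) continuous_neg.continuousOn
      (fun s hs => neg_mem_Icc' hs)).neg
    exact this
  dx := by
    intro t ht x hx
    obtain ⟨ux, h1, h2⟩ := h.dx (-t) (neg_mem_Icc' ht) x hx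
    refine ⟨-ux, h1.neg, ?_⟩
    have := hdwa_neg h2
    have e : -(tu u t x) * -ux = -(u (-t) x) * ux := by simp [tu]
    rw [e]
    refine this.congr (fun s _ => ?_) ?_ <;> · simp [ww, tP, tu]; ring

theorem PDE.ole_up {g g' Φ : ℝ → ℝ} {u : ℝ → ℝ → ℝ} {c d : ℝ} {X : Set ℝ} (h : PDE g g' Φ u c d X)
    {t0 x1 x2 a b : ℝ} (ht0 : t0 ∈ Ioo c d) (hX : Icc x1 x2 ⊆ X) (ha : x1 < a) (hb : b < x2) :
    ∃ L τ : ℝ, 0 ≤ L ∧ 0 < τ ∧ ∀ t, |t - t0| < τ → ∀ x ∈ Icc a b, ∀ x' ∈ Icc a b, x ≤ x' →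
      ww g Φ u t x' - ww g Φ u t x ≤ L * (x' - x) := by
  have hcont := h.cont.mono (prod_mono subset_rfl hX : Icc c d ×ˢ _ ⊆ _)
  obtain ⟨M0, hM⟩ := (isCompact_Icc.prod isCompact_Icc).exists_bound_of_continuousOn hcont
  obtain ⟨k0, hk⟩ := isCompact_Icc.exists_bound_of_continuousOn h.hΦ
  obtain ⟨M, hMd⟩ : ∃ M, M = |M0| := ⟨_, rfl⟩
  obtain ⟨k, hkd⟩ : ∃ k, k = |k0| := ⟨_, rfl⟩
  have hM0 : 0 ≤ M := by rw [hMd]; exact abs_nonneg _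
  have hk0 : 0 ≤ k := by rw [hkd]; exact abs_nonneg _
  have hM' : ∀ t ∈ Icc c d, ∀ x ∈ Icc x1 x2, |u t x| ≤ M := fun t ht x hx => by
    rw [hMd]; exact (hM (t, x) ⟨ht, hx⟩).trans (le_abs_self _)
  have hk' : ∀ t ∈ Icc c d, |Φ t| ≤ k := fun t ht => by
    rw [hkd]; exact (hk t ht).trans (le_abs_self _)
  obtain ⟨C, hC⟩ : ∃ C, C = k + k * (k + M) + 1 := ⟨_, rfl⟩
  have hCp : 0 < C := by rw [hC]; positivity
  obtain ⟨τ, hτ0, hτ⟩ : ∃ τ, 0 < τ ∧ τ ≤ min (min (t0 - c) (d - t0)) (min (min (1 / 2) (1 / (4 * C)))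
      (min ((a - x1) / (3 * (M + 1))) ((x2 - b) / (3 * (M + 1))))) := by
    refine ⟨_, ?_, le_rfl⟩
    have e1 : 0 < t0 - c := by linarith [ht0.1]
    have e2 : 0 < d - t0 := by linarith [ht0.2]
    have e3 : 0 < a - x1 := by linarith
    have e4 : 0 < x2 - b := by linarith
    positivity
  simp only [le_min_iff] at hτ
  obtain ⟨⟨k1, k2⟩, ⟨k3, k4⟩, k5, k6⟩ := hτ
  rw [le_div_iff₀ (by positivity)] at k4 k5 k6
  have hMτ : 0 < (M + 1) * τ := by positivity
  have hT : Icc (t0 - τ) (t0 - τ + 2 * τ) ⊆ Icc c d := Icc_subset_Icc (by linarith) (by linarith)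
  refine ⟨4 / τ, τ / 2, by positivity, by positivity, fun t ht x hx x' hx' hxx => ?_⟩
  rw [abs_lt] at ht
  have hMt : (M + 1) * (t - (t0 - τ)) ≤ (M + 1) * (3 / 2 * τ) :=
    mul_le_mul_of_nonneg_left (by linarith) (by linarith)
  have := ole (g := g) (g' := g') (Φ := Φ) (u := u) (c := t0 - τ) (S := 2 * τ) (x1 := x1) (x2 := x2)
    (M := M) (k := k) (C := C) hM0 hk0 (by linarith) hCp.le (by linarith)
    (by rw [hC]; nlinarith [mul_nonneg hk0 (add_nonneg hk0 hM0)]) (h.co.mono hX) (h.hΦ.mono hT)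
    (hcont.mono (prod_mono hT subset_rfl)) (fun t ht => hM' t (hT ht)) (fun t ht => hk' t (hT ht))
    (fun t ht x hx => h.loc ⟨by linarith [ht.1], by linarith [ht.2]⟩ (hX (Ioo_subset_Icc_self hx)))
    (t := t) (x := x) (x' := x') (by linarith) (by linarith) (by linarith [hx.1]) hxx
    (by linarith [hx'.2])
  rcases le_or_gt (ww g Φ u t x' - ww g Φ u t x) 0 with hn | hp
  · exact hn.trans (mul_nonneg (by positivity) (by linarith))
  · have h2 : τ / 4 * (ww g Φ u t x' - ww g Φ u t x) ≤ x' - x :=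
      (mul_le_mul_of_nonneg_right (by linarith) hp.le).trans this
    rw [div_mul_eq_mul_div, le_div_iff₀ hτ0]
    linarith

theorem PDE.lipx {g g' Φ : ℝ → ℝ} {u : ℝ → ℝ → ℝ} {c d : ℝ} {X : Set ℝ} (h : PDE g g' Φ u c d X)
    {t0 x1 x2 a b : ℝ} (ht0 : t0 ∈ Ioo c d) (hX : Icc x1 x2 ⊆ X) (ha : x1 < a) (hb : b < x2) :
    ∃ L τ : ℝ, 0 ≤ L ∧ 0 < τ ∧ ∀ t, |t - t0| < τ → ∀ x ∈ Icc a b, ∀ x' ∈ Icc a b,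
      |ww g Φ u t x' - ww g Φ u t x| ≤ L * |x' - x| := by
  obtain ⟨L1, τ1, hL1, hτ1, H1⟩ := h.ole_up ht0 hX ha hb
  obtain ⟨L2, τ2, hL2, hτ2, H2⟩ := h.tr.ole_up (t0 := -t0) ⟨by linarith [ht0.2], by linarith [ht0.1]⟩
    hX ha hb
  have hw : ∀ t x, ww g (tP Φ) (tu u) (-t) x = - ww g Φ u t x := by
    intro t x; simp [ww, tP, tu]; ring
  have main : ∀ t, |t - t0| < min τ1 τ2 → ∀ x ∈ Icc a b, ∀ x' ∈ Icc a b, x ≤ x' →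
      |ww g Φ u t x' - ww g Φ u t x| ≤ (L1 + L2) * |x' - x| := by
    intro t ht x hx x' hx' hxx
    rw [lt_min_iff] at ht
    have e1 := H1 t ht.1 x hx x' hx' hxx
    have e2 := H2 (-t) (by rw [show -t - -t0 = -(t - t0) by ring, abs_neg]; exact ht.2) x hx x' hx' hxx
    rw [hw, hw] at e2
    have hn : 0 ≤ x' - x := by linarith
    rw [abs_of_nonneg hn, abs_le]
    have p1 := mul_nonneg hL1 hn
    have p2 := mul_nonneg hL2 hn
    constructor <;> linarith
  refine ⟨L1 + L2, min τ1 τ2, by positivity, by positivity, fun t ht x hx x' hx' => ?_⟩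
  rcases le_total x x' with hh | hh
  · exact main t ht x hx x' hx' hh
  · rw [abs_sub_comm, abs_sub_comm x']
    exact main t ht x' hx' x hx hh

theorem PDE.lipt {g g' Φ : ℝ → ℝ} {u : ℝ → ℝ → ℝ} {c d : ℝ} {X : Set ℝ} (h : PDE g g' Φ u c d X)
    {t0 x1 x2 a b p : ℝ} (ht0 : t0 ∈ Ioo c d) (hX : Icc x1 x2 ⊆ X) (ha : x1 < a) (hb : b < x2)
    (hp : HasDerivAt Φ p t0) :
    ∃ n : ℝ, ∀ᶠ t in 𝓝 t0, ∀ x ∈ Icc a b, |u t x - u t0 x| ≤ n * |t - t0| := by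
  have hcont := h.cont.mono (prod_mono subset_rfl hX : Icc c d ×ˢ _ ⊆ _)
  obtain ⟨M, hM⟩ := (isCompact_Icc.prod isCompact_Icc).exists_bound_of_continuousOn hcont
  obtain ⟨k, hk⟩ := isCompact_Icc.exists_bound_of_continuousOn h.hΦ
  obtain ⟨L, τ, hL, hτ, H⟩ := h.lipx ht0 hX (a := (x1 + a) / 2) (b := (x2 + b) / 2) (by linarith)
    (by linarith)
  obtain ⟨n1, hn1⟩ := hp.hasFDerivAt.isBigO_sub.bound
  have hk0 : 0 ≤ k := (norm_nonneg _).trans (hk t0 (Ioo_subset_Icc_self ht0))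
  have htI := Ioo_subset_Icc_self ht0
  refine ⟨|M| * (L + k) + |n1|, ?_⟩
  obtain ⟨σ, hσ, hσ1⟩ : ∃ σ > 0, ∀ t, |t - t0| < σ → t ∈ Ioo c d ∧ |t - t0| < τ := by
    refine ⟨min (min (t0 - c) (d - t0)) τ, ?_, fun t ht => ?_⟩
    · have e1 : 0 < t0 - c := by linarith [ht0.1]
      have e2 : 0 < d - t0 := by linarith [ht0.2]
      positivity
    · simp only [lt_min_iff] at ht
      have := abs_lt.1 ht.1.1
      have := abs_lt.1 ht.1.2
      exact ⟨⟨by linarith, by linarith⟩, ht.2⟩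
  filter_upwards [hn1, Metric.ball_mem_nhds t0 hσ] with t e1 e2 x hx
  have hxX : x ∈ Icc x1 x2 := ⟨by linarith [hx.1], by linarith [hx.2]⟩
  have hx2 : x ∈ Ioo ((x1 + a) / 2) ((x2 + b) / 2) := ⟨by linarith [hx.1], by linarith [hx.2]⟩
  have hux : ∀ s ∈ Metric.ball t0 σ, ∃ ux, |ux| ≤ L + k ∧
      HasDerivAt (fun r => ww g Φ u r x) (-(u s x) * ux) s := by
    intro s hs
    rw [Metric.mem_ball, Real.dist_eq] at hs
    obtain ⟨s1, s2⟩ := hσ1 s hs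
    obtain ⟨ux, j1, j2⟩ := h.loc s1 (hX hxX)
    refine ⟨ux, ?_, j2⟩
    refine j1.le_of_lip' (by positivity) ?_
    filter_upwards [Icc_mem_nhds hx2.1 hx2.2] with y hy
    have q1 := H s s2 x (Ioo_subset_Icc_self hx2) y hy
    have hyX : y ∈ Icc x1 x2 := ⟨by linarith [hy.1, hx.1, hx.2], by linarith [hy.2, hx.1, hx.2]⟩
    have q2 := h.co.l0 y (hX hyX) x (hX hxX)
    have q3 := hk s (Ioo_subset_Icc_self s1)
    have e : u s y - u s x = (ww g Φ u s y - ww g Φ u s x) - Φ s * (g y - g x) := by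
      simp only [ww]; ring
    rw [Real.norm_eq_abs, Real.norm_eq_abs, e]
    refine (abs_sub _ _).trans ?_
    rw [abs_mul]
    have := mul_le_mul q3 q2 (abs_nonneg _) hk0
    rw [Real.norm_eq_abs] at this
    linarith
  choose! ux hux1 hux2 using hux
  have hb : ∀ s ∈ Metric.ball t0 σ, ‖-(u s x) * ux s‖ ≤ |M| * (L + k) := by
    intro s hs
    have hs' := hs
    rw [Metric.mem_ball, Real.dist_eq] at hs'
    rw [norm_mul, norm_neg]
    exact mul_le_mul ((hM (s, x) ⟨Ioo_subset_Icc_self (hσ1 s hs').1, hxX⟩).trans (le_abs_self _))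
      (hux1 s hs) (norm_nonneg _) (abs_nonneg _)
  have mv := (convex_ball t0 σ).norm_image_sub_le_of_norm_hasDerivWithin_le
    (fun s hs => (hux2 s hs).hasDerivWithinAt) hb (Metric.mem_ball_self hσ) e2
  rw [Real.norm_eq_abs, Real.norm_eq_abs] at mv e1
  have e : u t x - u t0 x = (ww g Φ u t x - ww g Φ u t0 x) - g x * (Φ t - Φ t0) := by
    simp only [ww]; ring
  rw [e]
  refine (abs_sub _ _).trans ?_
  rw [abs_mul]
  have g1 := h.co.b0 x (hX hxX)
  have g2 : |g x| * |Φ t - Φ t0| ≤ 1 * (|n1| * |t - t0|) :=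
    mul_le_mul g1 (e1.trans (mul_le_mul_of_nonneg_right (le_abs_self _) (abs_nonneg _)))
      (abs_nonneg _) zero_le_one
  linarith

theorem mder {u : ℝ → ℝ → ℝ} {T : Set ℝ} {t a b p n : ℝ} (hab : a ≤ b) (ht : t ∈ T)
    (hne : (𝓝[T \ {t}] t).NeBot)
    (hc : ∀ s ∈ T, ContinuousOn (u s) (Icc a b))
    (hd : ∀ x ∈ Icc a b, ∃ ux, HasDerivAt (u t) ux x ∧
      HasDerivWithinAt (fun s => u s x) (-(u t x) * ux - Real.exp x * p) T t)
    (hl : ∀ᶠ s in 𝓝[T] t, ∀ x ∈ Icc a b, |u s x - u t x| ≤ n * |s - t|) :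
    HasDerivWithinAt (fun s => ∫ x in a..b, u s x)
      (-((u t b) ^ 2 - (u t a) ^ 2) / 2 - p * (Real.exp b - Real.exp a)) T t := by
  let F : ℝ → ℝ := fun x => -(u t x) ^ 2 / 2 - p * Real.exp x
  have hF : ∀ x ∈ Icc a b, HasDerivAt F (deriv F x) x ∧
      HasDerivWithinAt (fun s => u s x) (deriv F x) T t := by
    intro x hx
    obtain ⟨ux, h1, h2⟩ := hd x hx
    have h3 : HasDerivAt F (-(u t x) * ux - Real.exp x * p) x := by
      have := (((h1.fun_pow 2).fun_neg).div_const 2).fun_sub ((Real.hasDerivAt_exp x).const_mul p)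
      exact this.congr_deriv (by push_cast; ring)
    rw [h3.deriv]
    exact ⟨h3, h2⟩
  have hcI : ∀ s ∈ T, IntervalIntegrable (u s) MeasureTheory.volume a b := fun s hs =>
    ContinuousOn.intervalIntegrable (by rw [uIcc_of_le hab]; exact hc s hs)
  have hl' : ∀ᶠ s in 𝓝[T \ {t}] t, ∀ x ∈ Icc a b, ‖slope (fun s => u s x) t s‖ ≤ n := by
    filter_upwards [nhdsWithin_mono t sdiff_subset hl, self_mem_nhdsWithin] with s hs hs' x hx
    have hst : 0 < |s - t| := abs_pos.2 (sub_ne_zero.2 hs'.2)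
    rw [slope_def_field, norm_div, Real.norm_eq_abs, Real.norm_eq_abs, div_le_iff₀ hst]
    exact hs x hx
  have htend : ∀ x ∈ Icc a b, Tendsto (fun s => slope (fun s => u s x) t s) (𝓝[T \ {t}] t)
      (𝓝 (deriv F x)) := fun x hx => hasDerivWithinAt_iff_tendsto_slope.1 (hF x hx).2
  have hbd : ∀ x ∈ Icc a b, ‖deriv F x‖ ≤ n := by
    intro x hx
    refine le_of_tendsto (htend x hx).norm ?_
    filter_upwards [hl'] with s hs using hs x hx
  have hint : IntervalIntegrable (deriv F) MeasureTheory.volume a b := by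
    rw [intervalIntegrable_iff_integrableOn_Icc_of_le hab]
    refine MeasureTheory.Measure.integrableOn_of_bounded (M := n) (by simp)
      (measurable_deriv F).aestronglyMeasurable ?_
    exact (MeasureTheory.ae_restrict_iff' measurableSet_Icc).2 (Eventually.of_forall hbd)
  have hval : ∫ x in a..b, deriv F x
      = -((u t b) ^ 2 - (u t a) ^ 2) / 2 - p * (Real.exp b - Real.exp a) := by
    rw [intervalIntegral.integral_eq_sub_of_hasDerivAt (f := F)
      (fun x hx => (hF x (by rwa [uIcc_of_le hab] at hx)).1) hint]
    simp only [F]; ring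
  rw [hasDerivWithinAt_iff_tendsto_slope, ← hval]
  have key := intervalIntegral.tendsto_integral_filter_of_dominated_convergence
    (μ := MeasureTheory.volume) (a := a) (b := b) (l := 𝓝[T \ {t}] t)
    (F := fun s x => slope (fun s => u s x) t s) (f := deriv F) (fun _ => n) ?_ ?_ ?_ ?_
  · refine key.congr' ?_
    filter_upwards [self_mem_nhdsWithin] with s hs
    rw [slope_def_field, ← intervalIntegral.integral_sub (hcI s hs.1) (hcI t ht),
      ← intervalIntegral.integral_div]
    refine intervalIntegral.integral_congr fun x _ => ?_
    simp only [slope_def_field]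
  · filter_upwards [self_mem_nhdsWithin] with s hs
    have : IntervalIntegrable (fun x => (u s x - u t x) / (s - t)) MeasureTheory.volume a b :=
      ((hcI s hs.1).sub (hcI t ht)).div_const _
    have h2 := (intervalIntegrable_iff.1 this).aestronglyMeasurable
    refine h2.congr (Eventually.of_forall fun x => ?_)
    simp only [slope_def_field]
  · filter_upwards [hl'] with s hs
    refine Eventually.of_forall fun x hx => hs x ?_
    rw [uIoc_of_le hab] at hx
    exact Ioc_subset_Icc_self hx
  · exact intervalIntegrable_const
  · refine Eventually.of_forall fun x hx => htend x ?_
    rw [uIoc_of_le hab] at hx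
    exact Ioc_subset_Icc_self hx

structure Sys (φ : ℝ → ℝ) (u : ℝ → ℝ → ℝ) (c d : ℝ) : Prop where
  cd : c < d
  dx : ∀ t ∈ Icc c d, ∀ x < 0, ∃ ux, HasDerivAt (u t) ux x ∧
    HasDerivWithinAt (fun s => u s x) (-(u t x) * ux - Real.exp x * φ t) (Icc c d) t

def Good (φ : ℝ → ℝ) (c d t0 : ℝ) : Prop :=
  ∃ τ > 0, ∃ Φ : ℝ → ℝ, ∀ t ∈ Icc c d, |t - t0| < τ → HasDerivWithinAt Φ (φ t) (Icc c d) t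

theorem coef_exp : Coef Real.exp Real.exp (Iio 0) := by
  have hl : ∀ x ∈ Iio (0 : ℝ), ∀ y ∈ Iio (0 : ℝ), |Real.exp x - Real.exp y| ≤ |x - y| := by
    intro x hx y hy
    have := (convex_Iio (0 : ℝ)).norm_image_sub_le_of_norm_hasDerivWithin_le (f := Real.exp) (C := 1)
      (fun z _ => (Real.hasDerivAt_exp z).hasDerivWithinAt)
      (fun z hz => by
        rw [Real.norm_eq_abs, abs_of_pos (Real.exp_pos z)]
        exact Real.exp_le_one_iff.2 (le_of_lt hz)) hy hx
    simpa using this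
  have hb : ∀ x ∈ Iio (0 : ℝ), |Real.exp x| ≤ 1 := fun x hx => by
    rw [abs_of_pos (Real.exp_pos x)]
    exact Real.exp_le_one_iff.2 (le_of_lt hx)
  exact ⟨fun x _ => Real.hasDerivAt_exp x, hb, hb, hl, hl⟩

theorem Sys.pde {φ Φ : ℝ → ℝ} {u : ℝ → ℝ → ℝ} {c d c' d' : ℝ} (h : Sys φ u c d) (hc : c ≤ c')
    (hd : d' ≤ d) (hcd : c' < d') (hΦ : ∀ t ∈ Icc c' d', HasDerivWithinAt Φ (φ t) (Icc c d) t) :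
    PDE Real.exp Real.exp Φ u c' d' (Iio 0) where
  cd := hcd
  Xo := isOpen_Iio
  co := coef_exp
  hΦ := fun t ht => (hΦ t ht).continuousWithinAt.mono (Icc_subset_Icc hc hd)
  dx := by
    intro t ht x hx
    obtain ⟨ux, h1, h2⟩ := h.dx t (Icc_subset_Icc hc hd ht) x hx
    refine ⟨ux, h1, ?_⟩
    have := (h2.fun_add ((hΦ t ht).const_mul (Real.exp x))).mono (Icc_subset_Icc hc hd)
    exact this.congr_deriv (by ring)

theorem Sys.lip_good {φ : ℝ → ℝ} {u : ℝ → ℝ → ℝ} {c d t a b : ℝ} (h : Sys φ u c d)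
    (ht : t ∈ Ioo c d) (hG : Good φ c d t) (hb : b < 0) :
    ∃ n : ℝ, ∀ᶠ s in 𝓝 t, ∀ x ∈ Icc a b, |u s x - u t x| ≤ n * |s - t| := by
  obtain ⟨τ, hτ, Φ, hΦ⟩ := hG
  have hp : PDE Real.exp Real.exp Φ u (max c (t - τ / 2)) (min d (t + τ / 2)) (Iio 0) := by
    refine h.pde (le_max_left _ _) (min_le_left _ _) ?_ ?_
    · rw [max_lt_iff, lt_min_iff, lt_min_iff]
      exact ⟨⟨h.cd, by linarith [ht.1]⟩, by linarith [ht.2], by linarith⟩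
    · intro s hs
      have h1 := le_max_left c (t - τ / 2)
      have h2 := le_max_right c (t - τ / 2)
      have h3 := min_le_left d (t + τ / 2)
      have h4 := min_le_right d (t + τ / 2)
      exact hΦ s ⟨h1.trans hs.1, hs.2.trans h3⟩ (abs_lt.2 ⟨by linarith [hs.1], by linarith [hs.2]⟩)
  refine hp.lipt (t0 := t) (x1 := a - 1) (x2 := b / 2) (p := φ t) ?_ ?_ (by linarith) (by linarith) ?_
  · refine ⟨max_lt ht.1 (by linarith), lt_min ht.2 (by linarith)⟩
  · intro x hx
    have := hx.2
    simp only [mem_Iio]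
    linarith
  · exact (hΦ t (Ioo_subset_Icc_self ht) (by simpa using hτ)).hasDerivAt (Icc_mem_nhds ht.1 ht.2)

theorem ne_bot_Icc {c d t : ℝ} (hcd : c < d) (ht : t ∈ Icc c d) : (𝓝[Icc c d \ {t}] t).NeBot := by
  have := (uniqueDiffOn_Icc hcd t ht).accPt
  rw [accPt_principal_iff_nhdsWithin] at this
  exact this

theorem Sys.contt {φ : ℝ → ℝ} {u : ℝ → ℝ → ℝ} {c d x : ℝ} (h : Sys φ u c d) (hx : x < 0) :
    ContinuousOn (fun s => u s x) (Icc c d) := by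
  intro t ht
  obtain ⟨ux, h1, h2⟩ := h.dx t ht x hx
  exact h2.continuousWithinAt

theorem Sys.contx {φ : ℝ → ℝ} {u : ℝ → ℝ → ℝ} {c d t : ℝ} (h : Sys φ u c d) (ht : t ∈ Icc c d) :
    ContinuousOn (u t) (Iio 0) := by
  intro x hx
  obtain ⟨ux, h1, h2⟩ := h.dx t ht x hx
  exact h1.continuousAt.continuousWithinAt

theorem good_open (φ : ℝ → ℝ) (c d : ℝ) : IsOpen {t | Good φ c d t} := by
  rw [Metric.isOpen_iff]
  rintro t0 ⟨τ, hτ, Φ, hΦ⟩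
  refine ⟨τ / 2, by positivity, fun t ht => ⟨τ / 2, by positivity, Φ, fun s hs hst => hΦ s hs ?_⟩⟩
  rw [Metric.mem_ball, Real.dist_eq] at ht
  have := abs_sub_le s t t0
  linarith

/-- if the integral has the right derivative near a point, that point is good -/
theorem Sys.mgood {φ : ℝ → ℝ} {u : ℝ → ℝ → ℝ} {c d t0 r a b : ℝ} (h : Sys φ u c d) (hab : a < b)
    (hb : b < 0) (hr : 0 < r)
    (hm : ∀ t ∈ Icc c d, |t - t0| < r → HasDerivWithinAt (fun s => ∫ x in a..b, u s x)
      (-((u t b) ^ 2 - (u t a) ^ 2) / 2 - φ t * (Real.exp b - Real.exp a)) (Icc c d) t) :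
    Good φ c d t0 := by
  let q : ℝ → ℝ := fun s => ((u (cl c d s) b) ^ 2 - (u (cl c d s) a) ^ 2) / 2
  have hcu : ∀ x < 0, Continuous fun s => u (cl c d s) x := fun x hx =>
    continuousOn_univ.1 ((h.contt hx).comp (cl_cont c d).continuousOn
      (fun s _ => cl_mem h.cd.le s))
  have hq : Continuous q := by
    have h1 := hcu b hb
    have h2 := hcu a (by linarith)
    exact ((h1.pow 2).sub (h2.pow 2)).div_const 2
  have hE : Real.exp b - Real.exp a ≠ 0 := (sub_pos.2 (Real.exp_lt_exp.2 hab)).ne'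
  refine ⟨r, hr, fun t => -((∫ x in a..b, u t x) + ∫ s in c..t, q s) / (Real.exp b - Real.exp a), ?_⟩
  intro t ht htr
  have h1 := hm t ht htr
  have h2 : HasDerivAt (fun t => ∫ s in c..t, q s) (q t) t :=
    intervalIntegral.integral_hasDerivAt_right (hq.intervalIntegrable _ _)
      hq.stronglyMeasurable.stronglyMeasurableAtFilter hq.continuousAt
  have h3 := ((h1.fun_add h2.hasDerivWithinAt).fun_neg).div_const (Real.exp b - Real.exp a)
  refine h3.congr_deriv ?_
  simp only [q, cl_eq ht]
  field_simp
  ring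

theorem end_cases {c d t0 r : ℝ} (hcd : c < d) (ht0 : t0 ∈ Icc c d) (hr : 0 < r) :
    ∃ r' > 0, r' ≤ r ∧ ∀ t ∈ Icc c d, |t - t0| < r' → t = t0 ∨ t ∈ Ioo c d := by
  rcases ht0.1.eq_or_lt with h1 | h1
  · refine ⟨min r (d - c), lt_min hr (by linarith), min_le_left _ _, fun t ht htr => ?_⟩
    have := abs_lt.1 (htr.trans_le (min_le_right _ _))
    rcases ht.1.eq_or_lt with h2 | h2
    · left; rw [← h1, h2]
    · right; exact ⟨h2, by linarith⟩
  rcases ht0.2.eq_or_lt with h2 | h2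
  · refine ⟨min r (d - c), lt_min hr (by linarith), min_le_left _ _, fun t ht htr => ?_⟩
    have := abs_lt.1 (htr.trans_le (min_le_right _ _))
    rcases ht.2.eq_or_lt with h3 | h3
    · left; rw [h2, h3]
    · right; exact ⟨by linarith, h3⟩
  · refine ⟨min r (min (t0 - c) (d - t0)), lt_min hr (lt_min (by linarith) (by linarith)),
      min_le_left _ _, fun t ht htr => ?_⟩
    have e1 := abs_lt.1 (htr.trans_le ((min_le_right _ _).trans (min_le_left _ _)))
    have e2 := abs_lt.1 (htr.trans_le ((min_le_right _ _).trans (min_le_right _ _)))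
    right; exact ⟨by linarith, by linarith⟩

theorem Sys.good {φ : ℝ → ℝ} {u : ℝ → ℝ → ℝ} {c d : ℝ} (h : Sys φ u c d) :
    ∀ t ∈ Icc c d, Good φ c d t := by
  by_contra hcon
  push Not at hcon
  obtain ⟨tb, htb, hbad⟩ := hcon
  have hcd := h.cd
  have h21 : (-2 : ℝ) ≤ -1 := by norm_num
  let S : Set ℝ := Icc c d ∩ {t | Good φ c d t}ᶜ
  have hSc : IsCompact S := isCompact_Icc.inter_right (good_open φ c d).isClosed_compl
  let U : ℝ → ℝ → ℝ := fun s x => u (cl c d s) (cl (-2) (-1) x)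
  have hcl : ∀ x, cl (-2) (-1) x < 0 := fun x => by
    have := (cl_mem h21 x).2; linarith
  have hU1 : ∀ t, Continuous (U t) := fun t =>
    continuousOn_univ.1 ((h.contx (cl_mem hcd.le t)).comp (cl_cont _ _).continuousOn
      (fun x _ => hcl x))
  have hU2 : ∀ x, Continuous fun t => U t x := fun x =>
    continuousOn_univ.1 ((h.contt (hcl x)).comp (cl_cont c d).continuousOn
      (fun s _ => cl_mem hcd.le s))
  obtain ⟨L, δ, V, hL, hδ, hVo, ⟨⟨t0, x0⟩, hpV, hpK⟩, hV⟩ := baire_lip hU1 hU2 hU1 hU2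
    (K := S ×ˢ Icc (-2) (-1)) (hSc.prod isCompact_Icc) ⟨(tb, -1), ⟨htb, hbad⟩, h21, le_rfl⟩
    (by
      rintro ⟨t, x⟩ ⟨ht, hx⟩
      simp only at ht hx ⊢
      have hx0 : x < 0 := by linarith [hx.2]
      obtain ⟨ux, h1, -⟩ := h.dx t ht.1 x hx0
      have := cl_lipat h21 hx (h1.hasDerivWithinAt (s := Icc (-2) (-1)))
      simpa only [U, cl_eq ht.1] using this)
    (by
      rintro ⟨t, x⟩ ⟨ht, hx⟩
      simp only at ht hx ⊢
      have hx0 : x < 0 := by linarith [hx.2]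
      obtain ⟨ux, -, h2⟩ := h.dx t ht.1 x hx0
      have := cl_lipat hcd.le ht.1 h2
      simpa only [U, cl_eq hx] using this)
  obtain ⟨hS0, hx0⟩ := hpK
  simp only at hS0 hx0
  obtain ⟨r, hr, hball⟩ := Metric.isOpen_iff.1 hVo _ hpV
  obtain ⟨r', hr', hrr, hend⟩ := end_cases hcd hS0.1 hr
  obtain ⟨a, ha⟩ : ∃ a, a = max (-2) (x0 - r / 2) := ⟨_, rfl⟩
  obtain ⟨b, hb⟩ : ∃ b, b = min (-1) (x0 + r / 2) := ⟨_, rfl⟩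
  have a1 : -2 ≤ a := ha ▸ le_max_left _ _
  have a2 : x0 - r / 2 ≤ a := ha ▸ le_max_right _ _
  have b1 : b ≤ -1 := hb ▸ min_le_left _ _
  have b2 : b ≤ x0 + r / 2 := hb ▸ min_le_right _ _
  have hab : a < b := by
    rw [ha, hb, max_lt_iff, lt_min_iff, lt_min_iff]
    exact ⟨⟨by norm_num, by linarith [hx0.1]⟩, by linarith [hx0.2], by linarith⟩
  refine hS0.2 (h.mgood (a := a) (b := b) hab (by linarith) hr' ?_)
  intro t ht htr
  have hlip : ∃ n, ∀ᶠ s in 𝓝[Icc c d] t, ∀ x ∈ Icc a b, |u s x - u t x| ≤ n * |s - t| := by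
    by_cases hg : Good φ c d t
    · rcases hend t ht htr with rfl | hI
      · exact absurd hg hS0.2
      · obtain ⟨n, hn⟩ := h.lip_good (a := a) (b := b) hI hg (by linarith)
        exact ⟨n, nhdsWithin_le_nhds hn⟩
    · refine ⟨L, ?_⟩
      filter_upwards [self_mem_nhdsWithin, nhdsWithin_le_nhds (Metric.ball_mem_nhds t hδ)] with s hs hsd
        x hx
      rw [Metric.mem_ball, Real.dist_eq] at hsd
      have hxI : x ∈ Icc (-2 : ℝ) (-1) := ⟨a1.trans hx.1, hx.2.trans b1⟩
      have hmem : (t, x) ∈ V := by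
        refine hball ?_
        rw [Metric.mem_ball, Prod.dist_eq, max_lt_iff, Real.dist_eq, Real.dist_eq]
        exact ⟨htr.trans_le hrr, abs_lt.2 ⟨by linarith [hx.1], by linarith [hx.2]⟩⟩
      have := (hV (t, x) ⟨hmem, ⟨ht, hg⟩, hxI⟩).2 s hsd
      simpa only [U, cl_eq ht, cl_eq hs, cl_eq hxI] using this
  obtain ⟨n, hn⟩ := hlip
  refine mder hab.le ht (ne_bot_Icc hcd ht) ?_ ?_ hn
  · intro s hs
    exact (h.contx hs).mono fun x hx => by simp only [mem_Iio]; linarith [hx.2]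
  · intro x hx
    exact h.dx t ht x (by linarith [hx.2])

theorem Sys.char_l {φ : ℝ → ℝ} {u : ℝ → ℝ → ℝ} {y : ℝ → ℝ} {c d : ℝ} (h : Sys φ u c d)
    (hy : y c < 0) (hyd : HasDerivWithinAt y (u c (y c)) (Icc c d) c) :
    HasDerivWithinAt (fun t => u t (y t)) (-(Real.exp (y c)) * φ c) (Icc c d) c := by
  have hcd := h.cd
  obtain ⟨τ, hτ, Φ, hΦ⟩ := h.good c ⟨le_rfl, hcd.le⟩
  obtain ⟨d', hd'⟩ : ∃ d', d' = min d (c + τ / 2) := ⟨_, rfl⟩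
  have h1 : d' ≤ d := by rw [hd']; exact min_le_left _ _
  have h2 : d' ≤ c + τ / 2 := by rw [hd']; exact min_le_right _ _
  have h3 : c < d' := by rw [hd']; exact lt_min hcd (by linarith)
  have hΨ : ∀ t ∈ Icc c d', HasDerivWithinAt (fun s => Φ s - Φ c) (φ t) (Icc c d) t := by
    intro t ht
    refine (hΦ t ⟨ht.1, ht.2.trans h1⟩ ?_).sub_const _
    rw [abs_of_nonneg (by linarith [ht.1])]
    linarith [ht.2]
  have hp := h.pde le_rfl h1 h3 hΨ
  have hyd' := hyd.mono (Icc_subset_Icc_right h1)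
  have k1 := char_left hp hy (by simp) hyd'
  have k2 := (hΨ c ⟨le_rfl, h3.le⟩).mono (Icc_subset_Icc_right h1)
  have k3 := k1.fun_sub (hyd'.exp.fun_mul k2)
  have k4 : HasDerivWithinAt (fun t => u t (y t)) (-(Real.exp (y c)) * φ c) (Icc c d') c := by
    refine (k3.congr_deriv (by simp)).congr (fun s _ => ?_) ?_ <;> simp [ww]
  refine k4.mono_of_mem_nhdsWithin ?_
  have : Iio d' ∈ 𝓝[Icc c d] c := mem_nhdsWithin_of_mem_nhds (Iio_mem_nhds h3)
  filter_upwards [this, self_mem_nhdsWithin] with s hs hs'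
  exact ⟨hs'.1, le_of_lt hs⟩

theorem Sys.tr {φ : ℝ → ℝ} {u : ℝ → ℝ → ℝ} {c d : ℝ} (h : Sys φ u c d) :
    Sys (fun t => φ (-t)) (tu u) (-d) (-c) where
  cd := by linarith [h.cd]
  dx := by
    intro t ht x hx
    obtain ⟨ux, h1, h2⟩ := h.dx (-t) (neg_mem_Icc' ht) x hx
    refine ⟨-ux, h1.neg, ?_⟩
    exact (hdwa_neg h2).congr_deriv (by simp [tu])

theorem Sys.char_r {φ : ℝ → ℝ} {u : ℝ → ℝ → ℝ} {y : ℝ → ℝ} {c d : ℝ} (h : Sys φ u c d)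
    (hy : y d < 0) (hyd : HasDerivWithinAt y (u d (y d)) (Icc c d) d) :
    HasDerivWithinAt (fun t => u t (y t)) (-(Real.exp (y d)) * φ d) (Icc c d) d := by
  have hyd' : HasDerivWithinAt (fun t => y (-t)) (-u d (y d)) (Icc (-d) (-c)) (-d) := by
    have := (hdwa_neg (t := -d) (f := y) (c := c) (d := d) (by simpa using hyd)).fun_neg
    simpa using this
  have k := h.tr.char_l (y := fun t => y (-t)) (by simpa using hy) (by simpa [tu] using hyd')
  have k2 := hdwa_neg (t := d) (f := fun t => tu u t (y (-t))) (c := -d) (d := -c) k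
  simpa [tu] using k2

theorem const_of_dz {I : Set ℝ} (hI : I.OrdConnected) {f : ℝ → ℝ}
    (h : ∀ t ∈ I, HasDerivWithinAt f 0 I t) : ∀ s ∈ I, ∀ t ∈ I, f t = f s := by
  intro s hs t ht
  have := Convex.norm_image_sub_le_of_norm_hasDerivWithin_le (C := 0) h (fun _ _ => by simp)
    hI.convex hs ht
  simpa [sub_eq_zero] using this

theorem main_sys (I : Set ℝ) (hIc : I.OrdConnected)
    (φ : ℝ → ℝ) (X Xt Xz : ℝ → ℝ → ℝ)
    (hXt : ∀ t ∈ I, ∀ z ∈ Set.Ioo (0 : ℝ) 1,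
      HasDerivWithinAt (fun s => X s z) (Xt t z) I t)
    (hXz : ∀ t ∈ I, ∀ z ∈ Set.Ioo (0 : ℝ) 1,
      HasDerivWithinAt (fun w => X t w) (Xz t z) (Set.Ioo 0 1) z)
    (hPDE : ∀ t ∈ I, ∀ z ∈ Set.Ioo (0 : ℝ) 1,
      Xt t z = z * Xz t z * (X t z - 1) + z * φ t) {c d : ℝ} (hc : c ∈ I) (hd : d ∈ I)
    (hcd : c < d) : Sys φ (fun t x => 1 - X t (Real.exp x)) c d where
  cd := hcd
  dx := by
    intro t ht x hx
    have hsub : Icc c d ⊆ I := hIc.out hc hd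
    have hz : Real.exp x ∈ Ioo (0 : ℝ) 1 := ⟨Real.exp_pos x, by simpa using hx⟩
    refine ⟨-(Xz t (Real.exp x) * Real.exp x), ?_, ?_⟩
    · have h1 := (hXz t (hsub ht) _ hz).hasDerivAt (Ioo_mem_nhds hz.1 hz.2)
      exact (h1.comp x (Real.hasDerivAt_exp x)).const_sub 1
    · have h2 := ((hXt t (hsub ht) _ hz).mono hsub).const_sub 1
      refine h2.congr_deriv ?_
      rw [hPDE t (hsub ht) _ hz]; ring

theorem main_char (I : Set ℝ) (hIc : I.OrdConnected)
    (φ : ℝ → ℝ) (X Xt Xz : ℝ → ℝ → ℝ)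
    (hXt : ∀ t ∈ I, ∀ z ∈ Set.Ioo (0 : ℝ) 1,
      HasDerivWithinAt (fun s => X s z) (Xt t z) I t)
    (hXz : ∀ t ∈ I, ∀ z ∈ Set.Ioo (0 : ℝ) 1,
      HasDerivWithinAt (fun w => X t w) (Xz t z) (Set.Ioo 0 1) z)
    (hPDE : ∀ t ∈ I, ∀ z ∈ Set.Ioo (0 : ℝ) 1,
      Xt t z = z * Xz t z * (X t z - 1) + z * φ t)
    (ψ : ℝ → ℝ) (hψr : ∀ t ∈ I, ψ t ∈ Set.Ioo (0 : ℝ) 1)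
    (hψd : ∀ t ∈ I, HasDerivWithinAt ψ (ψ t * (1 - X t (ψ t))) I t) :
    ∀ t ∈ I, HasDerivWithinAt (fun s => X s (ψ s)) (ψ t * φ t) I t := by
  intro t ht
  have hp := (hψr t ht).1
  have hneg : Real.log (ψ t) < 0 := Real.log_neg hp (hψr t ht).2
  have hy : HasDerivWithinAt (fun s => Real.log (ψ s)) (1 - X t (Real.exp (Real.log (ψ t)))) I t := by
    refine ((hψd t ht).log hp.ne').congr_deriv ?_
    rw [Real.exp_log hp]; field_simp
  have fin : ∀ J ⊆ I, HasDerivWithinAt (fun s => 1 - X s (Real.exp (Real.log (ψ s))))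
      (-(Real.exp (Real.log (ψ t))) * φ t) J t → HasDerivWithinAt (fun s => X s (ψ s)) (ψ t * φ t) J t := by
    intro J hJ h
    have h2 := h.const_sub 1
    rw [Real.exp_log hp] at h2
    refine (h2.congr_deriv (by ring)).congr (fun s hs => ?_) ?_
    · simp [Real.exp_log (hψr s (hJ hs)).1]
    · simp [Real.exp_log hp]
  have hR : HasDerivWithinAt (fun s => X s (ψ s)) (ψ t * φ t) (I ∩ Ici t) t := by
    by_cases hex : ∃ d ∈ I, t < d
    · obtain ⟨d, hd, htd⟩ := hex
      have hsub : Icc t d ⊆ I := hIc.out ht hd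
      have hS := main_sys I hIc φ X Xt Xz hXt hXz hPDE ht hd htd
      refine (fin _ hsub (hS.char_l (y := fun s => Real.log (ψ s)) hneg
        (hy.mono hsub))).mono_of_mem_nhdsWithin ?_
      filter_upwards [mem_nhdsWithin_of_mem_nhds (Iio_mem_nhds htd), self_mem_nhdsWithin] with s hs hs'
      exact ⟨hs'.2, le_of_lt hs⟩
    · push Not at hex
      refine HasDerivWithinAt.mono (t := {t}) ?_ ?_
      · exact (HasFDerivWithinAt.of_subsingleton subsingleton_singleton)
      exact fun s hs => le_antisymm (hex s hs.1) hs.2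
  have hL : HasDerivWithinAt (fun s => X s (ψ s)) (ψ t * φ t) (I ∩ Iic t) t := by
    by_cases hex : ∃ d ∈ I, d < t
    · obtain ⟨d, hd, htd⟩ := hex
      have hsub : Icc d t ⊆ I := hIc.out hd ht
      have hS := main_sys I hIc φ X Xt Xz hXt hXz hPDE hd ht htd
      refine (fin _ hsub (hS.char_r (y := fun s => Real.log (ψ s)) hneg
        (hy.mono hsub))).mono_of_mem_nhdsWithin ?_
      filter_upwards [mem_nhdsWithin_of_mem_nhds (Ioi_mem_nhds htd), self_mem_nhdsWithin] with s hs hs'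
      exact ⟨le_of_lt hs, hs'.2⟩
    · push Not at hex
      refine HasDerivWithinAt.mono (t := {t}) ?_ ?_
      · exact (HasFDerivWithinAt.of_subsingleton subsingleton_singleton)
      exact fun s hs => le_antisymm hs.2 (hex s hs.1)
  refine (hL.union hR).mono fun s hs => ?_
  rcases le_total s t with h | h
  · exact Or.inl ⟨hs, h⟩
  · exact Or.inr ⟨hs, h⟩

end Helpers

theorem stmt13 (I : Set ℝ) (hI : I ⊆ Set.Ici 0) (hIc : I.OrdConnected)
    (φ : ℝ → ℝ) (X Xt Xz : ℝ → ℝ → ℝ)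
    (hXt : ∀ t ∈ I, ∀ z ∈ Set.Ioo (0 : ℝ) 1,
      HasDerivWithinAt (fun s => X s z) (Xt t z) I t)
    (hXz : ∀ t ∈ I, ∀ z ∈ Set.Ioo (0 : ℝ) 1,
      HasDerivWithinAt (fun w => X t w) (Xz t z) (Set.Ioo 0 1) z)
    (hPDE : ∀ t ∈ I, ∀ z ∈ Set.Ioo (0 : ℝ) 1,
      Xt t z = z * Xz t z * (X t z - 1) + z * φ t)
    (ψ : ℝ → ℝ) (hψr : ∀ t ∈ I, ψ t ∈ Set.Ioo (0 : ℝ) 1)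
    (hψd : ∀ t ∈ I, HasDerivWithinAt ψ (ψ t * (1 - X t (ψ t))) I t) :
    (∀ t ∈ I, HasDerivWithinAt (fun s => X s (ψ s)) (ψ t * φ t) I t) ∧
    ((∀ t ∈ I, φ t = 0) →
      ∀ t₀ ∈ I, ∀ t ∈ I,
        X t (ψ t) = X t₀ (ψ t₀) ∧
        ψ t = ψ t₀ * Real.exp ((t - t₀) * (1 - X t₀ (ψ t₀)))) := by
  have hmain := main_char I hIc φ X Xt Xz hXt hXz hPDE ψ hψr hψd
  refine ⟨hmain, fun h0 t₀ ht₀ t ht => ?_⟩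
  have hk : ∀ s ∈ I, X s (ψ s) = X t₀ (ψ t₀) :=
    const_of_dz hIc (fun s hs => (hmain s hs).congr_deriv (by rw [h0 s hs, mul_zero])) t₀ ht₀
  refine ⟨hk t ht, ?_⟩
  have hz : ∀ s ∈ I, HasDerivWithinAt
      (fun s => ψ s * Real.exp (-((s - t₀) * (1 - X t₀ (ψ t₀))))) 0 I s := by
    intro s hs
    have h1 : HasDerivWithinAt (fun s : ℝ => -((s - t₀) * (1 - X t₀ (ψ t₀))))
        (-(1 * (1 - X t₀ (ψ t₀)))) I s :=
      (((hasDerivWithinAt_id s I).sub_const t₀).mul_const _).fun_neg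
    refine ((hψd s hs).fun_mul h1.exp).congr_deriv ?_
    rw [hk s hs]; ring
  have h2 := const_of_dz hIc hz t₀ ht₀ t ht
  simp only [sub_self, zero_mul, neg_zero, Real.exp_zero, mul_one] at h2
  generalize X t₀ (ψ t₀) = k at h2 ⊢
  rw [← h2, mul_assoc, ← Real.exp_add, neg_add_cancel, Real.exp_zero, mul_one]
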